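/- Let d > 1 and let α be a faithful, strongly irreducible ℤ^d-action by automorphisms of 𝕋^n. Let μ be an α-invariant and α-ergodic Borel probability measure on 𝕋^n such that: (i) for some 𝐧 ∈ ℤ^d the entropy h_μ(α_𝐧) is positive, and (ii) the ℤ^d-action α on (𝕋^n, μ) is weakly mixing (i.e. the diagonal ℤ^d-action on the product system (𝕋^n × 𝕋^n, μ × μ) is ergodic; in particular μ is ergodic for the single transformation α_𝐧 for every nonzero 𝐧 ∈ ℤ^d). Then μ is Lebesgue measure on 𝕋^n. -/

import Mathlib

open MeasureTheory ENNReal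

section Entropy

variable {α : Type*} [MeasurableSpace α]

/-- `P : Fin m → Set α` is a finite measurable partition of `α` modulo `μ`-null sets. -/
def IsFinMeasPartition (μ : Measure α) {m : ℕ} (P : Fin m → Set α) : Prop :=
  (∀ i, MeasurableSet (P i)) ∧ Pairwise (Function.onFun Disjoint P) ∧ μ (⋃ i, P i)ᶜ = 0

/-- Shannon entropy (information) of a finite family of sets with respect to `μ`. -/
noncomputable def finPartitionEntropy (μ : Measure α) {ι : Type*} [Fintype ι]
    (P : ι → Set α) : ℝ≥0∞ :=
  ENNReal.ofReal (∑ i, Real.negMulLog ((μ (P i)).toReal))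

/-- The common refinement `P ∨ T⁻¹ P ∨ ⋯ ∨ T^{-(n-1)} P`, indexed by `Fin n → Fin m`. -/
def refinedPartition (T : α → α) {m : ℕ} (P : Fin m → Set α) (n : ℕ) :
    (Fin n → Fin m) → Set α :=
  fun f => ⋂ i : Fin n, T^[(i : ℕ)] ⁻¹' P (f i)

/-- The measure-theoretic (Kolmogorov–Sinai) entropy `h_μ(T)` of a transformation `T`
preserving `μ`, defined as the supremum over all finite measurable partitions `P` of
`inf_n H_μ(P ∨ T⁻¹P ∨ ⋯ ∨ T^{-n}P)/(n+1)` (by subadditivity this infimum equals the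
usual limit). -/
noncomputable def ksEntropy (T : α → α) (μ : Measure α) : ℝ≥0∞ :=
  ⨆ (m : ℕ) (P : Fin m → Set α) (_ : IsFinMeasPartition μ P),
    ⨅ n : ℕ, finPartitionEntropy μ (refinedPartition T P (n + 1)) / (n + 1 : ℝ≥0∞)

end Entropy

open MeasureTheory

/-- The endomorphism of the torus `𝕋^n = (ℝ/ℤ)^n` induced by an integer matrix `A`. -/
noncomputable def toralMap {N : ℕ} (A : Matrix (Fin N) (Fin N) ℤ)
    (x : Fin N → UnitAddCircle) : Fin N → UnitAddCircle :=
  fun i => ∑ j, A i j • x j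

/-- A `ℤ^d`-action `α` by toral automorphisms is irreducible when restricted to a
subgroup `Λ ≤ ℤ^d` if every closed `Λ`-invariant proper subgroup of the torus is
finite. -/
def IsIrreducibleOn {d N : ℕ} (α : (Fin d → ℤ) → Matrix (Fin N) (Fin N) ℤ)
    (Λ : AddSubgroup (Fin d → ℤ)) : Prop :=
  ∀ S : AddSubgroup (Fin N → UnitAddCircle), IsClosed (S : Set (Fin N → UnitAddCircle)) →
    (∀ v ∈ Λ, ∀ x ∈ S, toralMap (α v) x ∈ S) → S ≠ ⊤ →
    (S : Set (Fin N → UnitAddCircle)).Finite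

/-!
Over `ℂ` the commuting integer matrices have a common eigenbasis of linear forms, whose Lyapunov
exponents are vectors `χ_j` in `ℝ^d`. Consider boxes prescribing the sizes
`X * exp (-s_j * ‖χ_j‖)` of these forms. Positive entropy makes the average of `-log μ (x + box)`
grow linearly in `s`. Shrinking the box one coarse Lyapunov class at a time, some class carries a
definite share of this growth, so that for a set of centres of measure bounded below the smaller
box carries only a small fraction of the mass of the larger one: most pairs of nearby points are
displaced along that class.

Since `d > 1`, many elements of `ℤ^d` move in the direction of the class and bring such
displacements to a macroscopic scale while the other coordinates stay small. Strong irreducibility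
puts the frequencies of any nontrivial character in general position along them, so that averaging
over finitely many of these elements makes the character small on most pairs. Expanding the second
moment, the images of the local pieces of `μ` nearly equidistribute on average. This gives
`c * ∫ f dLeb ≤ ∫ f dμ` for continuous `f ≥ 0`, with `c > 0` fixed, hence Lebesgue measure is
absolutely continuous with respect to `μ`, and ergodicity makes them equal.
-/

namespace KatokSpatzier

section Torus

open Matrix

variable {ι : Type*}

/-- The covering homomorphism from Euclidean space to the torus. -/
def torusProj : (ι → ℝ) →+ UnitAddTorus ι :=
  (QuotientAddGroup.mk' (AddSubgroup.zmultiples (1 : ℝ))).compLeft ι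

lemma torusProj_apply (w : ι → ℝ) (i : ι) : torusProj w i = (w i : UnitAddCircle) := rfl

lemma continuous_torusProj : Continuous (torusProj (ι := ι)) :=
  continuous_pi fun i ↦ (AddCircle.continuous_mk' 1).comp (continuous_apply i)

variable [Fintype ι]

/-- Entrywise cast of an integer matrix, as a ring homomorphism. -/
abbrev castMatrix (R : Type*) [Ring R] [DecidableEq ι] : Matrix ι ι ℤ →+* Matrix ι ι R :=
  (Int.castRingHom R).mapMatrix

/-- The character of the torus with frequency `ξ`, written additively. -/
def torusChar (ξ : ι → ℤ) : UnitAddTorus ι →+ UnitAddCircle :=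
  ∑ j, ξ j • Pi.evalAddMonoidHom (fun _ ↦ UnitAddCircle) j

/-- The linear form on Euclidean space lifting the character `torusChar ξ`. -/
noncomputable def phase (ξ : ι → ℤ) : (ι → ℝ) →ₗ[ℝ] ℝ :=
  Fintype.linearCombination ℝ fun i ↦ (ξ i : ℝ)

lemma torusChar_apply (ξ : ι → ℤ) (x : UnitAddTorus ι) : torusChar ξ x = ∑ j, ξ j • x j := by
  simp [torusChar]

lemma phase_apply (ξ : ι → ℤ) (w : ι → ℝ) : phase ξ w = ∑ i, w i * ξ i := rfl

lemma continuous_torusChar (ξ : ι → ℤ) : Continuous (torusChar ξ) := by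
  simp only [funext (torusChar_apply ξ)]
  fun_prop

lemma torusChar_torusProj (ξ : ι → ℤ) (w : ι → ℝ) :
    torusChar ξ (torusProj w) = (phase ξ w : UnitAddCircle) := by
  rw [torusChar_apply, phase_apply, ← QuotientAddGroup.mk'_apply, map_sum]
  refine Finset.sum_congr rfl fun i _ ↦ ?_
  rw [mul_comm, ← zsmul_eq_mul, map_zsmul]
  rfl

lemma phase_ne_zero {ξ : ι → ℤ} (hξ : ξ ≠ 0) : phase ξ ≠ 0 := by
  classical
  obtain ⟨i, hi⟩ := Function.ne_iff.mp hξ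
  intro h
  have hsingle : phase ξ (Pi.single i 1) = ξ i := by simp [phase_apply, Pi.single_apply]
  exact hi (by simpa [h, eq_comm] using hsingle)

lemma torusChar_surjective {ξ : ι → ℤ} (hξ : ξ ≠ 0) : Function.Surjective (torusChar ξ) := by
  intro y
  obtain ⟨t, rfl⟩ := QuotientAddGroup.mk_surjective y
  obtain ⟨w, rfl⟩ := LinearMap.surjective (phase_ne_zero hξ) t
  exact ⟨torusProj w, torusChar_torusProj ξ w⟩

variable {N : ℕ} (A B : Matrix (Fin N) (Fin N) ℤ)

lemma toralMap_apply (x : UnitAddTorus (Fin N)) (i : Fin N) :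
    toralMap A x i = torusChar (A i) x := by
  rw [torusChar_apply, toralMap]

lemma continuous_toralMap : Continuous (toralMap A) :=
  continuous_pi fun i ↦ by simpa only [toralMap_apply] using continuous_torusChar (A i)

lemma toralMap_sub (x y : UnitAddTorus (Fin N)) :
    toralMap A (x - y) = toralMap A x - toralMap A y := by
  ext i
  simp only [toralMap_apply, map_sub, Pi.sub_apply]

lemma torusChar_toralMap (ξ : Fin N → ℤ) (x : UnitAddTorus (Fin N)) :
    torusChar ξ (toralMap A x) = torusChar (ξ ᵥ* A) x := by
  simp only [torusChar_apply, toralMap, vecMul, dotProduct, Finset.smul_sum, Finset.sum_smul,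
    mul_smul]
  exact Finset.sum_comm

lemma toralMap_mul (x : UnitAddTorus (Fin N)) :
    toralMap (A * B) x = toralMap A (toralMap B x) := by
  ext i
  rw [toralMap_apply, toralMap_apply, torusChar_toralMap, mul_apply_eq_vecMul]

lemma toralMap_one (x : UnitAddTorus (Fin N)) : toralMap 1 x = x := by
  ext i
  simp [toralMap, one_apply]

lemma phase_mulVec (ξ : Fin N → ℤ) (w : Fin N → ℝ) :
    phase ξ (castMatrix ℝ A *ᵥ w) = phase (ξ ᵥ* A) w := by
  simp only [phase_apply, mulVec, vecMul, dotProduct, RingHom.mapMatrix_apply, map_apply,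
    Finset.sum_mul, Finset.mul_sum, Int.cast_sum, Int.cast_mul, Int.coe_castRingHom]
  rw [Finset.sum_comm]
  exact Finset.sum_congr rfl fun i _ ↦ Finset.sum_congr rfl fun j _ ↦ by ring

lemma toralMap_torusProj (w : Fin N → ℝ) :
    toralMap A (torusProj w) = torusProj (castMatrix ℝ A *ᵥ w) := by
  ext i
  rw [toralMap_apply, torusChar_torusProj, torusProj_apply, phase_apply, mulVec, dotProduct]
  simp [mul_comm]

end Torus

section Irreducible

open Matrix Module

instance : Infinite UnitAddCircle :=
  have := Set.Ico.infinite (zero_lt_one' ℝ)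
  .of_injective (fun t : Set.Ico (0 : ℝ) 1 ↦ (t : UnitAddCircle)) fun s t h ↦
    Subtype.ext <| (AddCircle.coe_eq_coe_iff_of_mem_Ico (p := 1) (a := 0)
      (by simp) (by simp)).1 h

variable {d N : ℕ} {α : AddChar (Fin d → ℤ) (Matrix (Fin N) (Fin N) ℤ)}
  {Λ : AddSubgroup (Fin d → ℤ)}

lemma infinite_of_line_mem {S : AddSubgroup (UnitAddTorus (Fin N))} {w : Fin N → ℝ} (hw : w ≠ 0)
    (h : ∀ t : ℝ, torusProj (t • w) ∈ S) : (S : Set (UnitAddTorus (Fin N))).Infinite := by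
  obtain ⟨i, hi⟩ := Function.ne_iff.mp hw
  refine Set.Infinite.of_image (fun x ↦ x i) ?_
  convert Set.infinite_univ (α := UnitAddCircle)
  refine Set.eq_univ_of_forall fun y ↦ ?_
  obtain ⟨r, rfl⟩ := QuotientAddGroup.mk_surjective y
  refine ⟨_, h (r / w i), ?_⟩
  simp only [torusProj_apply, Pi.smul_apply, smul_eq_mul, div_mul_cancel₀ _ hi]

/-- The common kernel of the characters in the `Λ`-orbit of `torusChar ξ`. -/
def orbitKer (α : AddChar (Fin d → ℤ) (Matrix (Fin N) (Fin N) ℤ))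
    (Λ : AddSubgroup (Fin d → ℤ)) (ξ : Fin N → ℤ) : AddSubgroup (UnitAddTorus (Fin N)) :=
  ⨅ v ∈ Λ, (torusChar (ξ ᵥ* α v)).ker

lemma mem_orbitKer {ξ : Fin N → ℤ} {x : UnitAddTorus (Fin N)} :
    x ∈ orbitKer α Λ ξ ↔ ∀ v ∈ Λ, torusChar (ξ ᵥ* α v) x = 0 := by
  simp [orbitKer, AddSubgroup.mem_iInf]

lemma isClosed_orbitKer (ξ : Fin N → ℤ) :
    IsClosed (orbitKer α Λ ξ : Set (UnitAddTorus (Fin N))) := by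
  simp only [orbitKer, AddSubgroup.coe_iInf]
  exact isClosed_biInter fun v _ ↦ isClosed_singleton.preimage (continuous_torusChar _)

lemma toralMap_mem_orbitKer {ξ : Fin N → ℤ} {v : Fin d → ℤ} (hv : v ∈ Λ)
    {x : UnitAddTorus (Fin N)} (hx : x ∈ orbitKer α Λ ξ) :
    toralMap (α v) x ∈ orbitKer α Λ ξ := by
  refine mem_orbitKer.2 fun u hu ↦ ?_
  rw [torusChar_toralMap, vecMul_vecMul, ← AddChar.map_add_eq_mul]
  exact mem_orbitKer.1 hx _ (Λ.add_mem hu hv)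

lemma orbitKer_ne_top {ξ : Fin N → ℤ} (hξ : ξ ≠ 0) : orbitKer α Λ ξ ≠ ⊤ := by
  intro htop
  obtain ⟨y, hy⟩ := exists_ne (0 : UnitAddCircle)
  obtain ⟨x, rfl⟩ := torusChar_surjective hξ y
  have hx := mem_orbitKer.1 (htop ▸ AddSubgroup.mem_top x : x ∈ orbitKer α Λ ξ) 0 Λ.zero_mem
  rw [AddChar.map_zero_eq_one, vecMul_one] at hx
  exact hy hx

lemma eq_zero_of_forall_phase_orbit_eq_zero (hΛ : IsIrreducibleOn α Λ) {ξ : Fin N → ℤ}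
    (hξ : ξ ≠ 0) {w : Fin N → ℝ} (h : ∀ v ∈ Λ, phase (ξ ᵥ* α v) w = 0) : w = 0 := by
  by_contra hw
  refine infinite_of_line_mem hw (fun t ↦ mem_orbitKer.2 fun v hv ↦ ?_)
    (hΛ _ (isClosed_orbitKer ξ) (fun v hv x hx ↦ toralMap_mem_orbitKer hv hx)
      (orbitKer_ne_top hξ))
  rw [torusChar_torusProj, map_smul, h v hv, smul_zero, AddCircle.coe_zero]

lemma exists_intCast_eq_mul (ξ : Fin N → ℚ) :
    ∃ k : ℤ, k ≠ 0 ∧ ∃ ζ : Fin N → ℤ, ∀ i, (ζ i : ℚ) = k * ξ i := by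
  obtain ⟨⟨k, hk⟩, h⟩ := IsLocalization.exist_integer_multiples_of_finite (nonZeroDivisors ℤ) ξ
  choose ζ hζ using h
  exact ⟨k, nonZeroDivisors.ne_zero hk, ζ, fun i ↦ by simpa using hζ i⟩

lemma span_orbit_eq_top (hΛ : IsIrreducibleOn α Λ) {ξ : Fin N → ℚ} (hξ : ξ ≠ 0) :
    Submodule.span ℚ (Set.range fun v : Λ ↦ ξ ᵥ* castMatrix ℚ (α v)) = ⊤ := by
  by_contra hne
  obtain ⟨f, hf0, hf⟩ := Submodule.exists_le_ker_of_lt_top _ (lt_top_iff_ne_top.2 hne)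
  obtain ⟨k, hk, ζ, hζ⟩ := exists_intCast_eq_mul ξ
  have hζ0 : ζ ≠ 0 := by
    rintro rfl
    exact hξ (funext fun i ↦ by simpa [hk] using hζ i)
  set w : Fin N → ℝ := fun i ↦ (f (Pi.single i 1) : ℚ)
  have hphase (v : Fin d → ℤ) : phase (ζ ᵥ* α v) w = k * f (ξ ᵥ* castMatrix ℚ (α v)) := by
    have hcast (j) : ((ζ ᵥ* α v) j : ℚ) = k * (ξ ᵥ* castMatrix ℚ (α v)) j := by
      simp only [vecMul, dotProduct, Finset.mul_sum, Int.cast_sum, Int.cast_mul, hζ, mul_assoc]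
      rfl
    rw [phase_apply, LinearMap.pi_apply_eq_sum_univ f]
    simp only [← Rat.cast_intCast (α := ℝ) ((_ ᵥ* _) _), hcast, w, smul_eq_mul]
    push_cast
    rw [Finset.mul_sum]
    refine Finset.sum_congr rfl fun i _ ↦ ?_
    rw [show (fun j ↦ if i = j then (1 : ℚ) else 0) = Pi.single i 1 by
      ext j; simp [Pi.single_apply, eq_comm]]
    ring
  have hw : w = 0 := eq_zero_of_forall_phase_orbit_eq_zero hΛ hζ0 fun v hv ↦ by
    have : f (ξ ᵥ* castMatrix ℚ (α v)) = 0 := hf (Submodule.subset_span ⟨⟨v, hv⟩, rfl⟩)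
    rw [hphase, this, Rat.cast_zero, mul_zero]
  refine hf0 ((Pi.basisFun ℚ (Fin N)).ext fun i ↦ ?_)
  simpa [w] using congrFun hw i

end Irreducible

section Centralizer

open Matrix Module

variable {d N : ℕ} {α : AddChar (Fin d → ℤ) (Matrix (Fin N) (Fin N) ℤ)}

/-- The rational matrices commuting with the action; for an irreducible action this is a domain,
so that the non-zero ones act injectively on rational covectors. -/
def commutant (α : AddChar (Fin d → ℤ) (Matrix (Fin N) (Fin N) ℤ)) :
    Subalgebra ℚ (Matrix (Fin N) (Fin N) ℚ) :=
  Subalgebra.centralizer ℚ (Set.range fun v ↦ castMatrix ℚ (α v))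

lemma castMatrix_mem_commutant (v : Fin d → ℤ) : castMatrix ℚ (α v) ∈ commutant α := by
  rintro _ ⟨w, rfl⟩
  simp only [← map_mul, ← AddChar.map_add_eq_mul, add_comm]

lemma vecMul_castMatrix_vecMul {a : Matrix (Fin N) (Fin N) ℚ} (ha : a ∈ commutant α)
    (ξ : Fin N → ℚ) (v : Fin d → ℤ) :
    ξ ᵥ* a ᵥ* castMatrix ℚ (α v) = ξ ᵥ* castMatrix ℚ (α v) ᵥ* a := by
  rw [vecMul_vecMul, vecMul_vecMul, ha _ ⟨v, rfl⟩]

lemma eq_zero_of_vecMul_eq_zero (hα : IsIrreducibleOn α ⊤) {a : Matrix (Fin N) (Fin N) ℚ}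
    (ha : a ∈ commutant α) {ξ : Fin N → ℚ} (hξ : ξ ≠ 0) (h : ξ ᵥ* a = 0) : a = 0 := by
  have hker : ∀ ζ, ζ ᵥ* a = 0 := fun ζ ↦ by
    have hspan : (⊤ : Submodule ℚ (Fin N → ℚ)) ≤ LinearMap.ker a.vecMulLinear := by
      rw [← span_orbit_eq_top hα hξ, Submodule.span_le]
      rintro _ ⟨v, rfl⟩
      rw [SetLike.mem_coe, LinearMap.mem_ker, vecMulLinear_apply, ← vecMul_castMatrix_vecMul ha, h,
        zero_vecMul]
    exact hspan trivial
  ext i j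
  simpa using congrFun (hker (Pi.single i 1)) j

lemma eq_zero_of_det_eq_zero (hα : IsIrreducibleOn α ⊤) {a : Matrix (Fin N) (Fin N) ℚ}
    (ha : a ∈ commutant α) (h : a.det = 0) : a = 0 :=
  have ⟨_, hξ, hξa⟩ := exists_vecMul_eq_zero_iff.2 h
  eq_zero_of_vecMul_eq_zero hα ha hξ hξa

lemma isDomain_commutant [NeZero N] (hα : IsIrreducibleOn α ⊤) : IsDomain (commutant α) :=
  have : NoZeroDivisors (commutant α) := ⟨fun {a b} hab ↦ by
    have hdet : (a : Matrix (Fin N) (Fin N) ℚ).det * (b : Matrix (Fin N) (Fin N) ℚ).det = 0 := by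
      rw [← det_mul, ← Subalgebra.coe_mul, hab, ZeroMemClass.coe_zero, det_zero]
    exact (mul_eq_zero.1 hdet).imp
      (fun h ↦ Subtype.ext <| eq_zero_of_det_eq_zero hα a.2 h)
      (fun h ↦ Subtype.ext <| eq_zero_of_det_eq_zero hα b.2 h)⟩
  NoZeroDivisors.to_isDomain _

lemma irreducible_minpoly_castMatrix [NeZero N] (hα : IsIrreducibleOn α ⊤) (v : Fin d → ℤ) :
    Irreducible (minpoly ℚ (castMatrix ℚ (α v))) := by
  have := isDomain_commutant hα
  let a : commutant α := ⟨castMatrix ℚ (α v), castMatrix_mem_commutant v⟩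
  have ha : castMatrix ℚ (α v) = (commutant α).val a := rfl
  rw [ha, minpoly.algHom_eq _ Subtype.val_injective]
  exact minpoly.irreducible (Algebra.IsIntegral.isIntegral a)

lemma isSemisimple_castMatrix [NeZero N] (hα : IsIrreducibleOn α ⊤) (v : Fin d → ℤ) :
    Module.End.IsSemisimple (toLin' (castMatrix ℂ (α v))) := by
  set p := minpoly ℚ (castMatrix ℚ (α v)) with hp
  have hsq : Squarefree (p.map (algebraMap ℚ ℂ)) :=
    (irreducible_minpoly_castMatrix hα v).separable.map.squarefree
  refine Module.End.isSemisimple_of_squarefree_aeval_eq_zero hsq ?_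
  have hcast : castMatrix ℂ (α v) = (Algebra.ofId ℚ ℂ).mapMatrix (castMatrix ℚ (α v)) := by
    ext; simp
  have haeval : Polynomial.aeval (castMatrix ℂ (α v)) (p.map (algebraMap ℚ ℂ)) = 0 := by
    rw [Polynomial.aeval_map_algebraMap, hcast, Polynomial.aeval_algHom_apply, hp, minpoly.aeval,
      map_zero]
  change Polynomial.aeval (toLinAlgEquiv' (castMatrix ℂ (α v))) _ = 0
  rw [Polynomial.aeval_algHom_apply, haeval, map_zero]

end Centralizer

section

open Matrix Module

section JointEigenbasis

variable {ι K E V : Type*} [Field K] [AddCommGroup E] [Module K E]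

lemma exists_joint_eigenbasis [IsAlgClosed K] [FiniteDimensional K E] {f : V → End K E}
    (hcomm : ∀ v w, Commute (f v) (f w)) (hss : ∀ v, (f v).IsSemisimple) :
    ∃ (b : Basis (Fin (finrank K E)) K E) (χ : Fin (finrank K E) → V → K),
      ∀ i v, f v (b i) = χ i v • b i := by
  have htop :=
    End.iSup_iInf_maxGenEigenspace_eq_top_of_iSup_maxGenEigenspace_eq_top_of_commute
      f (fun v w _ ↦ hcomm v w) fun v ↦ End.iSup_maxGenEigenspace_eq_top _
  simp only [fun v μ ↦ (hss v).isFinitelySemisimple.maxGenEigenspace_eq_eigenspace μ] at htop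
  have hspan : ⊤ ≤ Submodule.span K {x | ∃ χ : V → K, ∀ v, f v x = χ v • x} := by
    rw [← htop]
    refine iSup_le fun χ x hx ↦ Submodule.subset_span ⟨χ, fun v ↦ ?_⟩
    exact End.mem_eigenspace_iff.1 ((Submodule.mem_iInf _).1 hx v)
  let b := Basis.ofSpan hspan
  have := FiniteDimensional.fintypeBasisIndex b
  choose χ hχ using fun i ↦ Basis.ofSpan_subset hspan ⟨i, rfl⟩
  let e := Fintype.equivFinOfCardEq (finrank_eq_card_basis b).symm
  exact ⟨b.reindex e, fun i ↦ χ (e.symm i), fun i v ↦ by rw [b.reindex_apply]; exact hχ _ v⟩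

lemma coord_apply_of_eigenbasis {b : Basis ι K E} {f : End K E} {χ : ι → K}
    (h : ∀ i, f (b i) = χ i • b i) (j : ι) (x : E) : b.coord j (f x) = χ j * b.coord j x := by
  refine LinearMap.congr_fun (f := b.coord j ∘ₗ f) (g := χ j • b.coord j) (b.ext fun i ↦ ?_) x
  rcases eq_or_ne i j with rfl | hij
  · simp [h]
  · simp [h, Finsupp.single_eq_of_ne' hij]

end JointEigenbasis

/-- A separating family of simultaneous complex eigenforms of an action by integer matrices,
with faithful weights. -/
structure Eigenforms {V : Type*} [AddCommGroup V] {N : ℕ}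
    (α : AddChar V (Matrix (Fin N) (Fin N) ℤ)) where
  weight : Fin N → AddChar V ℂ
  form : Fin N → (Fin N → ℝ) →ₗ[ℝ] ℂ
  form_mulVec : ∀ j v w, form j (castMatrix ℝ (α v) *ᵥ w) = weight j v * form j w
  eq_zero_of_form_eq_zero : ∀ w, (∀ j, form j w = 0) → w = 0
  eq_zero_of_weight_eq_one : ∀ j v, weight j v = 1 → v = 0

section Eigenforms

variable {d N : ℕ} {α : AddChar (Fin d → ℤ) (Matrix (Fin N) (Fin N) ℤ)}

lemma det_castMatrix_ne_zero (hα : IsIrreducibleOn α ⊤) (hfaithful : ∀ v ≠ 0, α v ≠ 1)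
    {v : Fin d → ℤ} (hv : v ≠ 0) : (castMatrix ℂ (α v - 1)).det ≠ 0 := by
  rw [← RingHom.map_det, Int.coe_castRingHom, Int.cast_ne_zero]
  intro hdet
  refine hfaithful v hv ?_
  have hmem : castMatrix ℚ (α v - 1) ∈ commutant α := by
    rw [map_sub, map_one]
    exact sub_mem (castMatrix_mem_commutant v) (one_mem _)
  have hzero := eq_zero_of_det_eq_zero hα hmem (by rw [← RingHom.map_det, hdet, map_zero])
  have hinj : Function.Injective (castMatrix ℚ (ι := Fin N)) :=
    Matrix.map_injective Int.cast_injective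
  exact sub_eq_zero.1 (hinj (hzero.trans (map_zero _).symm))

theorem exists_eigenforms [NeZero N] (hα : IsIrreducibleOn α ⊤)
    (hfaithful : ∀ v ≠ 0, α v ≠ 1) : Nonempty (Eigenforms α) := by
  let f (v : Fin d → ℤ) : End ℂ (Fin N → ℂ) := toLin' (castMatrix ℂ (α v))
  have hf_add (v w) : f (v + w) = f v * f w := by
    simp only [f, AddChar.map_add_eq_mul, map_mul, toLin'_mul, End.mul_eq_comp]
  have hcomm (v w) : Commute (f v) (f w) := by
    rw [Commute, SemiconjBy, ← hf_add, ← hf_add, add_comm]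
  have hN : finrank ℂ (Fin N → ℂ) = N := finrank_fin_fun ℂ
  obtain ⟨b, χ, hχ⟩ := hN ▸ exists_joint_eigenbasis hcomm (isSemisimple_castMatrix hα)
  have hcoord (v j x) : b.coord j (f v x) = χ j v * b.coord j x :=
    coord_apply_of_eigenbasis (fun i ↦ hχ i v) j x
  let emb : (Fin N → ℝ) →ₗ[ℝ] (Fin N → ℂ) := Complex.ofRealCLM.toLinearMap.compLeft (Fin N)
  exact ⟨{
    weight j := {
      toFun := χ j
      map_zero_eq_one' := by simpa [f] using (hcoord 0 j (b j)).symm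
      map_add_eq_mul' v w := by
        have h := hcoord (v + w) j (b j)
        rw [hf_add, End.mul_apply, hcoord, hcoord] at h
        simpa using h.symm }
    form j := (b.coord j).restrictScalars ℝ ∘ₗ emb
    form_mulVec j v w := by
      have hemb : emb (castMatrix ℝ (α v) *ᵥ w) = f v (emb w) := by
        ext i
        simp [emb, f, mulVec, dotProduct]
      simp only [LinearMap.comp_apply, LinearMap.restrictScalars_apply, hemb, hcoord]
      rfl
    eq_zero_of_form_eq_zero w h := by
      have hw : emb w = 0 := b.ext_elem fun j ↦ by simpa using h j
      ext i
      simpa [emb] using congrFun hw i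
    eq_zero_of_weight_eq_one j v hv := by
      by_contra hne
      refine det_castMatrix_ne_zero hα hfaithful hne
        (exists_mulVec_eq_zero_iff.1 ⟨b j, b.ne_zero j, ?_⟩)
      have hfix : f v (b j) = b j := by rw [hχ, show χ j v = 1 from hv, one_smul]
      rw [map_sub, map_one, sub_mulVec, one_mulVec, ← toLin'_apply, sub_eq_zero]
      exact hfix }⟩

end Eigenforms

end

section

open Matrix Module

section CayleyHamilton

variable {n K V : Type*} [Fintype n] [DecidableEq n] [Field K] {W : Submodule K (n → K)}
  {x : n → K}

lemma vecMul_pow_mem (M : Matrix n n K) (h : ∀ k < Fintype.card n, x ᵥ* M ^ k ∈ W) (k : ℕ) :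
    x ᵥ* M ^ k ∈ W := by
  rw [pow_eq_aeval_mod_charpoly, Polynomial.aeval_eq_sum_range, vecMul_sum]
  refine sum_mem fun i _ ↦ ?_
  rw [vecMul_smul]
  by_cases hi : i < Fintype.card n
  · exact W.smul_mem _ (h i hi)
  · have hdeg : (Polynomial.X ^ k %ₘ M.charpoly).degree < i :=
      (Polynomial.degree_modByMonic_lt _ M.charpoly_monic).trans_le <| by
        rw [charpoly_degree_eq_dim]
        exact_mod_cast not_lt.1 hi
    rw [Polynomial.coeff_eq_zero_of_degree_lt hdeg, zero_smul]
    exact W.zero_mem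

variable [AddCommGroup V] (β : AddChar V (Matrix n n K))

lemma vecMul_add_nsmul_mem {b u : V}
    (h : ∀ k < Fintype.card n, x ᵥ* β (b + k • u) ∈ W) (k : ℕ) : x ᵥ* β (b + k • u) ∈ W := by
  simp only [AddChar.map_add_eq_mul, AddChar.map_nsmul_eq_pow, ← vecMul_vecMul] at h ⊢
  exact vecMul_pow_mem _ h k

lemma vecMul_add_zsmul_mem {b u : V}
    (h : ∀ k < Fintype.card n, x ᵥ* β (b + k • u) ∈ W) (z : ℤ) : x ᵥ* β (b + z • u) ∈ W := by
  have hpos := vecMul_add_nsmul_mem β h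
  have hneg (k : ℕ) := vecMul_add_nsmul_mem β (b := b + Fintype.card n • u) (u := -u)
    (fun k hk ↦ by
      convert hpos (Fintype.card n - k) using 3
      rw [sub_nsmul _ hk.le, smul_neg]
      abel) (Fintype.card n + k)
  obtain ⟨k, rfl | rfl⟩ := z.eq_nat_or_neg
  · simpa using hpos k
  · convert hneg k using 3
    rw [neg_smul, natCast_zsmul, add_nsmul, smul_neg, smul_neg]
    abel

lemma vecMul_mem_of_box {ι : Type*} [Finite ι] (β : AddChar (ι → ℤ) (Matrix n n K))
    (h : ∀ s : ι → ℕ, (∀ i, s i < Fintype.card n) → x ᵥ* β (fun i ↦ s i) ∈ W) (v : ι → ℤ) :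
    x ᵥ* β v ∈ W := by
  classical
  have := Fintype.ofFinite ι
  suffices ∀ D : Finset ι, ∀ v : ι → ℤ, (∀ i ∉ D, ∃ k : ℕ, k < Fintype.card n ∧ v i = k) →
      x ᵥ* β v ∈ W from this .univ v (by simp)
  intro D
  induction D using Finset.induction_on with
  | empty =>
    intro v hv
    choose s hs hvs using fun i ↦ hv i (Finset.notMem_empty i)
    exact funext hvs ▸ h s hs
  | insert i D _ ih =>
    intro v hv
    have hupdate (z : ℤ) : Function.update v i z = Function.update v i 0 + z • Pi.single i 1 := by
      ext j
      rcases eq_or_ne j i with rfl | hj <;> simp [*]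
    rw [← Function.update_eq_self i v, hupdate]
    refine vecMul_add_zsmul_mem β (fun k hk ↦ ?_) (v i)
    rw [← natCast_zsmul, ← hupdate]
    refine ih _ fun j hj ↦ ?_
    rcases eq_or_ne j i with rfl | hji
    · exact ⟨k, hk, by simp⟩
    · simpa [hji] using hv j (by simp [hji, hj])

end CayleyHamilton

section GeneralPosition

variable {d N : ℕ} {α : AddChar (Fin d → ℤ) (Matrix (Fin N) (Fin N) ℤ)}

/-- Every finite-index subgroup of the acting group acts irreducibly. -/
def IsStronglyIrreducible (α : (Fin d → ℤ) → Matrix (Fin N) (Fin N) ℤ) : Prop :=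
  ∀ Λ : AddSubgroup (Fin d → ℤ), Λ.FiniteIndex → IsIrreducibleOn α Λ

lemma IsStronglyIrreducible.isIrreducibleOn_top (hα : IsStronglyIrreducible α) :
    IsIrreducibleOn α ⊤ :=
  hα ⊤ inferInstance

/-- By Gallai's theorem one of finitely many subspaces covering an orbit contains its values on a
homothetic copy of a large box, hence by Cayley–Hamilton its values on a coset of a subgroup of
finite index. -/
lemma exists_forall_vecMul_notMem (hα : IsStronglyIrreducible α) {ξ : Fin N → ℚ} (hξ : ξ ≠ 0)
    {κ : Type*} [Finite κ] {W : κ → Submodule ℚ (Fin N → ℚ)} (hW : ∀ k, W k ≠ ⊤) :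
    ∃ v, ∀ k, ξ ᵥ* castMatrix ℚ (α v) ∉ W k := by
  by_contra! hcover
  choose C hC using hcover
  let β := (castMatrix ℚ (ι := Fin N)).toMonoidHom.compAddChar α
  let box : Finset (Fin d → ℤ) :=
    Fintype.piFinset fun _ ↦ (Finset.range N).image fun k : ℕ ↦ (k : ℤ)
  obtain ⟨a, ha, b, c, hbox⟩ := Combinatorics.exists_mono_homothetic_copy box C
  let η := ξ ᵥ* β b
  have hη : η ≠ 0 := fun h ↦ hξ <| by
    have hunit : β b * β (-b) = 1 := by
      rw [← AddChar.map_add_eq_mul, add_neg_cancel, AddChar.map_zero_eq_one]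
    rw [← vecMul_one ξ, ← hunit, ← vecMul_vecMul, show ξ ᵥ* β b = 0 from h, zero_vecMul]
  have hcoset (v : Fin d → ℤ) : η ᵥ* β (a • v) ∈ W c := by
    refine vecMul_mem_of_box (β.compAddMonoidHom (nsmulAddMonoidHom a)) (fun s hs ↦ ?_) v
    have hs' : (fun i ↦ (s i : ℤ)) ∈ box := by simpa [box] using hs
    rw [AddChar.compAddMonoidHom_apply, nsmulAddMonoidHom_apply, vecMul_vecMul,
      ← AddChar.map_add_eq_mul, add_comm, ← hbox _ hs']
    exact hC _
  have hfin : (nsmulAddMonoidHom a : (Fin d → ℤ) →+ _).range.FiniteIndex :=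
    AddSubgroup.finiteIndex_range_nsmulAddMonoidHom_of_fg _ ha.ne'
  refine hW c (top_le_iff.1 ?_)
  rw [← span_orbit_eq_top (hα _ hfin) hη, Submodule.span_le]
  rintro _ ⟨⟨_, v, rfl⟩, rfl⟩
  exact hcoset v

lemma exists_seq_linearIndepOn_vecMul (hα : IsStronglyIrreducible α) {ξ : Fin N → ℚ}
    (hξ : ξ ≠ 0) : ∃ m : ℕ → Fin d → ℤ, ∀ t : Finset ℕ, t.card ≤ N →
      LinearIndepOn ℚ (fun b ↦ ξ ᵥ* castMatrix ℚ (α (m b))) (t : Set ℕ) := by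
  classical
  obtain ⟨m, hm⟩ := Set.seq_of_forall_finite_exists (γ := Fin d → ℤ)
    (P := fun v S ↦ ∀ s : Finset (Fin d → ℤ), ↑s ⊆ S → s.card < N → ξ ᵥ* castMatrix ℚ (α v) ∉
      Submodule.span ℚ (s.image fun w ↦ ξ ᵥ* castMatrix ℚ (α w) : Finset (Fin N → ℚ)))
    fun S hS ↦ by
      lift S to Finset (Fin d → ℤ) using hS
      obtain ⟨v, hv⟩ := exists_forall_vecMul_notMem hα hξ
        (κ := {s // s ∈ S.powerset.filter fun s ↦ s.card < N})
        (W := fun s ↦ Submodule.span ℚ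
          (s.1.image fun w ↦ ξ ᵥ* castMatrix ℚ (α w) : Finset (Fin N → ℚ)))
        fun s htop ↦ by
          have hrank := finrank_span_finset_le_card (R := ℚ)
            (s.1.image fun w ↦ ξ ᵥ* castMatrix ℚ (α w))
          rw [Set.finrank, htop, finrank_top, finrank_fin_fun] at hrank
          exact (hrank.trans Finset.card_image_le).not_gt (Finset.mem_filter.1 s.2).2
      exact ⟨v, fun s hs hcard ↦ hv ⟨s, by simpa [hcard] using hs⟩⟩
  refine ⟨m, fun t ↦ ?_⟩
  induction t using Finset.induction_on_max with
  | empty => simp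
  | insert b t hlt ih =>
    intro hcard
    rw [Finset.card_insert_of_notMem fun hb ↦ (hlt b hb).false] at hcard
    rw [Finset.coe_insert]
    refine (ih (by omega)).insert ?_
    have := hm b (t.image m) (by
      rw [Finset.coe_image]
      exact Set.image_mono fun k hk ↦ hlt k hk) (Finset.card_image_le.trans_lt hcard)
    rwa [Finset.image_image, Finset.coe_image] at this

lemma linearIndepOn_vecMul_iff (hα : IsIrreducibleOn α ⊤) {κ : Type*} {s : Set κ}
    {A : κ → Matrix (Fin N) (Fin N) ℚ} (hA : ∀ k, A k ∈ commutant α) {ξ : Fin N → ℚ}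
    (hξ : ξ ≠ 0) : LinearIndepOn ℚ (fun k ↦ ξ ᵥ* A k) s ↔ LinearIndepOn ℚ A s := by
  refine LinearMap.linearIndepOn_iff_of_injOn (vecMulBilin ℚ ℚ ξ) fun a ha b hb hab ↦ ?_
  have hle : Submodule.span ℚ (A '' s) ≤ Subalgebra.toSubmodule (commutant α) := by
    rw [Submodule.span_le]
    rintro _ ⟨k, -, rfl⟩
    exact hA k
  refine sub_eq_zero.1 (eq_zero_of_vecMul_eq_zero hα (sub_mem (hle ha) (hle hb)) hξ ?_)
  rw [vecMul_sub, sub_eq_zero]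
  exact hab

end GeneralPosition

end

section

open Matrix Module Filter Topology

lemma exists_norm_le_of_separating {ι E F : Type*} [Finite ι] [NormedAddCommGroup E]
    [NormedSpace ℝ E] [FiniteDimensional ℝ E] [NormedAddCommGroup F] [NormedSpace ℝ F]
    (f : ι → E →ₗ[ℝ] F) (hf : ∀ u, (∀ i, f i u = 0) → u = 0) :
    ∃ C > 0, ∀ u t, 0 ≤ t → (∀ i, ‖f i u‖ ≤ t) → ‖u‖ ≤ C * t := by
  have := Fintype.ofFinite ι
  obtain ⟨C, hC, hanti⟩ := (LinearMap.pi f).exists_antilipschitzWith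
    (LinearMap.ker_eq_bot'.2 fun u hu ↦ hf u fun i ↦ congrFun hu i)
  refine ⟨C, hC, fun u t ht hu ↦ ?_⟩
  calc ‖u‖ ≤ C * ‖LinearMap.pi f u‖ := by simpa using hanti.le_mul_dist u 0
    _ ≤ C * t := by gcongr; exact (pi_norm_le_iff_of_nonneg ht).2 hu

section GeneralPosition

variable {d N : ℕ} {α : AddChar (Fin d → ℤ) (Matrix (Fin N) (Fin N) ℤ)}

lemma eq_zero_of_phase_eq_zero_of_span_eq_top {κ : Type*} {ζ : κ → Fin N → ℤ}
    (hζ : Submodule.span ℚ (Set.range fun k i ↦ (ζ k i : ℚ)) = ⊤) {u : Fin N → ℝ}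
    (hu : ∀ k, phase (ζ k) u = 0) : u = 0 := by
  have hker : ∀ q, Fintype.linearCombination ℚ u q = 0 := fun q ↦ by
    have hle : Submodule.span ℚ (Set.range fun k i ↦ (ζ k i : ℚ)) ≤
        LinearMap.ker (Fintype.linearCombination ℚ u) := by
      rw [Submodule.span_le]
      rintro _ ⟨k, rfl⟩
      rw [SetLike.mem_coe, LinearMap.mem_ker, ← hu k, phase_apply, Fintype.linearCombination_apply]
      exact Finset.sum_congr rfl fun i _ ↦ by rw [Rat.smul_def, Rat.cast_intCast, mul_comm]
    exact hle (hζ ▸ Submodule.mem_top)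
  ext i
  simpa using hker (Pi.single i 1)

lemma exists_seq_linearIndepOn_vecMul_intCast [NeZero N] (hα : IsStronglyIrreducible α) :
    ∃ m : ℕ → Fin d → ℤ, ∀ ξ : Fin N → ℤ, ξ ≠ 0 → ∀ t : Finset ℕ, t.card ≤ N →
      LinearIndepOn ℚ (fun b i ↦ ((ξ ᵥ* α (m b)) i : ℚ)) (t : Set ℕ) := by
  obtain ⟨m, hm⟩ := exists_seq_linearIndepOn_vecMul hα (ξ := Pi.single 0 1) (by simp)
  refine ⟨m, fun ξ hξ t ht ↦ ?_⟩
  have hmem (b : ℕ) : castMatrix ℚ (α (m b)) ∈ commutant α := castMatrix_mem_commutant _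
  have hξ' : (fun i ↦ (ξ i : ℚ)) ≠ 0 := fun h ↦ hξ <| funext fun i ↦ by simpa using congrFun h i
  have hindep := (linearIndepOn_vecMul_iff hα.isIrreducibleOn_top hmem hξ').2
    ((linearIndepOn_vecMul_iff hα.isIrreducibleOn_top hmem (by simp)).1 (hm t ht))
  convert hindep using 3 with b
  exact RingHom.map_vecMul (Int.castRingHom ℚ) _ _ _

theorem exists_seq_card_phase_lt [NeZero N] (hα : IsStronglyIrreducible α) :
    ∃ m : ℕ → Fin d → ℤ, ∀ ξ : Fin N → ℤ, ξ ≠ 0 → ∀ B : ℕ, ∃ κ > 0, ∀ u : Fin N → ℝ,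
      ((Finset.range B).filter fun b ↦ |phase (ξ ᵥ* α (m b)) u| < κ * ‖u‖).card < N := by
  obtain ⟨m, hm⟩ := exists_seq_linearIndepOn_vecMul_intCast hα
  refine ⟨m, fun ξ hξ B ↦ ?_⟩
  have hsep : ∀ t ∈ (Finset.range B).powersetCard N, ∀ᶠ κ in 𝓝[>] (0 : ℝ), ∀ u : Fin N → ℝ,
      ∃ b ∈ t, κ * ‖u‖ ≤ |phase (ξ ᵥ* α (m b)) u| := by
    intro t ht
    obtain ⟨-, hcard⟩ := Finset.mem_powersetCard.1 ht
    have hspan := (hm ξ hξ t hcard.le).linearIndependent.span_eq_top_of_card_eq_finrank'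
      (by simp [hcard])
    obtain ⟨C, hC, hnorm⟩ := exists_norm_le_of_separating (fun b : t ↦ phase (ξ ᵥ* α (m b)))
      fun u hu ↦ eq_zero_of_phase_eq_zero_of_span_eq_top hspan hu
    filter_upwards [Ioo_mem_nhdsGT (inv_pos.2 hC)] with κ ⟨hκ, hκC⟩ u
    by_contra! hlt
    obtain ⟨b, hb⟩ : t.Nonempty := Finset.card_pos.1 (hcard ▸ NeZero.pos N)
    have hu : 0 < ‖u‖ := pos_of_mul_pos_right ((abs_nonneg _).trans_lt (hlt b hb)) hκ.le
    have := hnorm u (κ * ‖u‖) (by positivity) fun b ↦ (hlt b b.2).le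
    rw [← mul_assoc] at this
    exact this.not_gt (mul_lt_of_lt_one_left hu ((lt_inv_mul_iff₀ hC).1 (by simpa using hκC)))
  obtain ⟨κ, hκ, hκ0⟩ := (((eventually_all_finset _).2 hsep).and self_mem_nhdsWithin).exists
  refine ⟨κ, hκ0, fun u ↦ ?_⟩
  by_contra! hcard
  obtain ⟨t, ht, htcard⟩ := Finset.exists_subset_card_eq hcard
  obtain ⟨b, hb, hle⟩ := hκ t (Finset.mem_powersetCard.2
    ⟨ht.trans (Finset.filter_subset _ _), htcard⟩) u
  exact hle.not_gt (Finset.mem_filter.1 (ht hb)).2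

end GeneralPosition

end

section

open Filter Topology

lemma exists_pos_forall_le {ι : Type*} [Finite ι] {f : ι → ℝ} (hf : ∀ i, 0 < f i) :
    ∃ a > 0, ∀ i, a ≤ f i := by
  have hev : ∀ᶠ a in 𝓝[>] (0 : ℝ), ∀ i, a ≤ f i :=
    eventually_all.2 fun i ↦ mem_of_superset (Ioc_mem_nhdsGT (hf i)) fun _ ↦ And.right
  obtain ⟨a, ha, ha0⟩ := (hev.and self_mem_nhdsWithin).exists
  exact ⟨a, ha0, ha⟩

lemma exists_pos_forall_ge {ι : Type*} [Finite ι] (f : ι → ℝ) : ∃ a > 0, ∀ i, f i ≤ a :=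
  ((eventually_gt_atTop 0).and (eventually_all.2 fun i ↦ eventually_ge_atTop (f i))).exists

section SpanClosure

open Module Submodule

variable {E : Type*} [NormedAddCommGroup E] [NormedSpace ℝ E] [FiniteDimensional ℝ E]

lemma exists_norm_sub_le_of_mem_span (G : AddSubgroup E) {ε : ℝ} (hε : 0 ≤ ε) {z : E}
    (hz : z ∈ span ℝ ((G : Set E) ∩ Metric.ball 0 ε)) :
    ∃ g ∈ G, ‖g - z‖ ≤ finrank ℝ E * ε := by
  obtain ⟨T, hT, hspan, hindep⟩ := exists_linearIndependent ℝ ((G : Set E) ∩ Metric.ball 0 ε)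
  obtain ⟨T, rfl⟩ := hindep.setFinite.exists_finset_coe
  have hcard : T.card ≤ finrank ℝ E := by simpa using hindep.fintype_card_le_finrank
  obtain ⟨c, -, rfl⟩ := mem_span_finset.1 (hspan ▸ hz)
  refine ⟨∑ x ∈ T, ⌊c x⌋ • x, G.sum_mem fun x hx ↦ G.zsmul_mem (hT hx).1 _, ?_⟩
  have hround : ∀ x ∈ T, ‖⌊c x⌋ • x - c x • x‖ ≤ ε := fun x hx ↦ by
    rw [← Int.cast_smul_eq_zsmul ℝ, ← sub_smul, norm_smul, norm_sub_rev, Int.self_sub_floor,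
      Real.norm_of_nonneg (Int.fract_nonneg _)]
    exact (mul_le_of_le_one_left (norm_nonneg x) (Int.fract_lt_one _).le).trans
      (mem_ball_zero_iff.1 (hT hx).2).le
  rw [← Finset.sum_sub_distrib]
  refine (norm_sum_le_of_le T hround).trans ?_
  rw [Finset.sum_const, nsmul_eq_mul]
  gcongr

/-- Arbitrarily short vectors of `G` span the same subspace once they are short enough, and rounding
coefficients in a basis of short vectors costs little. -/
theorem exists_span_inter_ball_subset_closure (G : AddSubgroup E) :
    ∃ ε > 0, (span ℝ ((G : Set E) ∩ Metric.ball 0 ε) : Set E) ⊆ closure G := by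
  let W (ε : ℝ) : Submodule ℝ E := span ℝ ((G : Set E) ∩ Metric.ball 0 ε)
  have hW : Monotone W := fun ε ε' h ↦
    span_mono (Set.inter_subset_inter_right _ (Metric.ball_subset_ball h))
  obtain ⟨_, ⟨ε₀, hε₀, rfl⟩, hmin⟩ := IsArtinian.set_has_minimal (W '' Set.Ioi 0)
    (Set.nonempty_Ioi.image W)
  have hle : ∀ ε > 0, W ε₀ ≤ W ε := fun ε hε ↦ by
    have hmin' := hmin (W (min ε₀ ε)) ⟨_, lt_min hε₀ hε, rfl⟩
    rw [← eq_of_le_of_not_lt (hW (min_le_left _ _)) hmin']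
    exact hW (min_le_right _ _)
  refine ⟨ε₀, hε₀, fun z hz ↦ Metric.mem_closure_iff.2 fun δ hδ ↦ ?_⟩
  obtain ⟨g, hg, hgz⟩ := exists_norm_sub_le_of_mem_span G (by positivity)
    (hle (δ / (finrank ℝ E + 1)) (by positivity) hz)
  refine ⟨g, hg, ?_⟩
  rw [dist_comm, dist_eq_norm]
  refine hgz.trans_lt ?_
  rw [mul_div_assoc', div_lt_iff₀ (by positivity)]
  linarith

end SpanClosure

section Characters

variable {V ι : Type*} [AddCommGroup V] (σ : ι → AddChar V ℂ)

/-- The group of simultaneous logarithms of the values of a family of characters. -/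
def jointLogs : AddSubgroup (ι → ℂ) where
  carrier := {z | ∃ v, ∀ j, Complex.exp (z j) = σ j v}
  zero_mem' := ⟨0, fun j ↦ by simp⟩
  add_mem' := by
    rintro y z ⟨v, hv⟩ ⟨w, hw⟩
    exact ⟨v + w, fun j ↦ by rw [Pi.add_apply, Complex.exp_add, hv, hw, AddChar.map_add_eq_mul]⟩
  neg_mem' := by
    rintro z ⟨v, hv⟩
    exact ⟨-v, fun j ↦ by rw [Pi.neg_apply, Complex.exp_neg, hv, AddChar.map_neg_eq_inv]⟩

variable {σ}

lemma exists_mem_jointLogs_ne_zero [Fintype ι]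
    (hσ : ∀ ε > 0, ∃ v, ∀ j, ‖σ j v - 1‖ < ε ∧ σ j v ≠ 1)
    {ε : ℝ} (hε : 0 < ε) : ∃ z ∈ (jointLogs σ : Set (ι → ℂ)) ∩ Metric.ball 0 ε, ∀ j, z j ≠ 0 := by
  have hlog : ContinuousAt Complex.log 1 := continuousAt_clog (by simp)
  obtain ⟨δ, hδ, hlogδ⟩ := Metric.continuousAt_iff.1 hlog ε hε
  obtain ⟨v, hv⟩ := hσ δ hδ
  have hne (j : ι) : σ j v ≠ 0 := fun h ↦ by
    simpa [h] using AddChar.map_add_eq_mul (σ j) v (-v)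
  refine ⟨fun j ↦ Complex.log (σ j v), ⟨⟨v, fun j ↦ Complex.exp_log (hne j)⟩, ?_⟩,
    fun j (h : Complex.log (σ j v) = 0) ↦ ?_⟩
  · rw [mem_ball_zero_iff, pi_norm_lt_iff hε]
    intro j
    simpa using hlogδ (by simpa [dist_eq_norm] using (hv j).1)
  · exact (hv j).2 (by rw [← Complex.exp_log (hne j), h, Complex.exp_zero])

lemma half_norm_le_norm_exp_sub_one {z : ℂ} (hz : ‖z‖ ≤ 1 / 2) :
    ‖z‖ / 2 ≤ ‖Complex.exp z - 1‖ := by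
  have hquad := Complex.norm_exp_sub_one_sub_id_le (x := z) (by linarith)
  have htri := norm_sub_norm_le z (z - (Complex.exp z - 1))
  rw [sub_sub_self, norm_sub_rev] at htri
  nlinarith [norm_nonneg z]

/-- If some joint logarithm `z` has no zero coordinate, then all small real multiples `t • z` are
approximated by joint logarithms, and their coordinates decay at the same rate. -/
theorem exists_norm_sub_one_comparable [Finite ι]
    (hσ : ∀ ε > 0, ∃ v, ∀ j, ‖σ j v - 1‖ < ε ∧ σ j v ≠ 1) :
    ∃ ρ > 0, ∀ δ > 0, ∃ v, ∃ τ > 0, τ < δ ∧ ∀ j, ρ * τ ≤ ‖σ j v - 1‖ ∧ ‖σ j v - 1‖ ≤ τ := by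
  have := Fintype.ofFinite ι
  obtain ⟨ε, hε, hclosure⟩ := exists_span_inter_ball_subset_closure (jointLogs σ)
  obtain ⟨z, hz, hz0⟩ := exists_mem_jointLogs_ne_zero hσ hε
  obtain ⟨a, ha, haz⟩ := exists_pos_forall_le fun j ↦ norm_pos_iff.2 (hz0 j)
  set b := ‖z‖ + a
  have hb : 0 < b := by positivity
  refine ⟨a / (8 * b), by positivity, fun δ hδ ↦ ?_⟩
  obtain ⟨t, ht, htδ⟩ := exists_between (show 0 < min δ 1 / (2 * b) by positivity)
  rw [lt_div_iff₀ (by positivity)] at htδ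
  obtain ⟨ζ, ⟨v, hv⟩, hζ⟩ := Metric.mem_closure_iff.1
    (hclosure (Submodule.smul_mem _ t (Submodule.subset_span hz))) (t * a / 2) (by positivity)
  refine ⟨v, t * (2 * b), by positivity, htδ.trans_le (min_le_left _ _), fun j ↦ ?_⟩
  have hclose : ‖t • z j - ζ j‖ ≤ t * a / 2 := by
    rw [dist_eq_norm] at hζ
    exact (norm_le_pi_norm (t • z - ζ) j).trans hζ.le
  have hnorm : ‖t • z j‖ = t * ‖z j‖ := by rw [norm_smul, Real.norm_of_nonneg ht.le]
  have hlower : t * a / 2 ≤ ‖ζ j‖ := by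
    have := norm_sub_norm_le (t • z j) (t • z j - ζ j)
    rw [sub_sub_self] at this
    linarith [mul_le_mul_of_nonneg_left (haz j) ht.le]
  have hupper : ‖ζ j‖ ≤ t * b := by
    have := norm_sub_norm_le (ζ j) (t • z j)
    rw [norm_sub_rev (ζ j)] at this
    linarith [show t * b = t * ‖z‖ + t * a from mul_add _ _ _,
      mul_le_mul_of_nonneg_left (norm_le_pi_norm z j) ht.le, mul_pos ht ha]
  have hsmall : ‖ζ j‖ ≤ 1 / 2 := by linarith [min_le_right δ 1]
  rw [← hv j]
  constructor
  · have : a / (8 * b) * (t * (2 * b)) = t * a / 4 := by field_simp; norm_num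
    linarith [half_norm_le_norm_exp_sub_one hsmall]
  · linarith [Complex.norm_exp_sub_one_le (x := ζ j) (by linarith)]

end Characters

end

section

open Filter Topology Module Matrix

section Lyapunov

variable {d : ℕ}

/-- The inclusion of the acting group `ℤ^d` into Euclidean space. -/
noncomputable def latticeVec : (Fin d → ℤ) →+ EuclideanSpace ℝ (Fin d) :=
  (WithLp.linearEquiv 2 ℝ (Fin d → ℝ)).symm.toAddMonoidHom.comp
    ((Int.castAddHom ℝ).compLeft (Fin d))

/-- The vector representing the Lyapunov exponent `v ↦ log ‖σ v‖` of a character of `ℤ^d` through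
the Euclidean inner product. -/
noncomputable def lyapunovVec (σ : AddChar (Fin d → ℤ) ℂ) : EuclideanSpace ℝ (Fin d) :=
  WithLp.toLp 2 fun i ↦ Real.log ‖σ (Pi.single i 1)‖

lemma latticeVec_apply (v : Fin d → ℤ) (i : Fin d) : latticeVec v i = v i := rfl

lemma norm_eq_exp_inner_lyapunovVec (σ : AddChar (Fin d → ℤ) ℂ) (v : Fin d → ℤ) :
    ‖σ v‖ = Real.exp (inner ℝ (lyapunovVec σ) (latticeVec v)) := by
  have hne (w : Fin d → ℤ) : ‖σ w‖ ≠ 0 := fun h ↦ by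
    simpa [norm_eq_zero.1 h] using AddChar.map_add_eq_mul σ w (-w)
  let logNorm : (Fin d → ℤ) →+ ℝ :=
    { toFun := fun w ↦ Real.log ‖σ w‖
      map_zero' := by simp
      map_add' := fun w w' ↦ by
        rw [AddChar.map_add_eq_mul, norm_mul, Real.log_mul (hne w) (hne w')] }
  have hext : logNorm = (innerₗ _ (lyapunovVec σ)).toAddMonoidHom.comp latticeVec := by
    ext i
    simp [logNorm, lyapunovVec, PiLp.inner_apply, latticeVec_apply, Pi.single_apply]
  rw [← Real.exp_log ((norm_nonneg _).lt_of_ne' (hne v))]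
  exact congrArg Real.exp (DFunLike.congr_fun hext v)

lemma exists_norm_latticeVec_sub_le (x : EuclideanSpace ℝ (Fin d)) :
    ∃ v, ‖latticeVec v - x‖ ≤ √d := by
  refine ⟨fun i ↦ ⌊x i⌋, ?_⟩
  rw [EuclideanSpace.norm_eq]
  have hterm (i : Fin d) : ‖(latticeVec (fun i ↦ ⌊x i⌋) - x) i‖ ^ 2 ≤ 1 := by
    rw [PiLp.sub_apply, latticeVec_apply, norm_sub_rev, Int.self_sub_floor,
      Real.norm_of_nonneg (Int.fract_nonneg _)]
    exact pow_le_one₀ (Int.fract_nonneg _) (Int.fract_lt_one _).le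
  refine Real.sqrt_le_sqrt ?_
  simpa using Finset.sum_le_sum fun i (_ : i ∈ Finset.univ) ↦ hterm i

lemma exists_injective_abs_inner_latticeVec_le (hd : 1 < d) (x : EuclideanSpace ℝ (Fin d)) :
    ∃ m : ℕ → Fin d → ℤ, Function.Injective m ∧
      ∀ k, |inner ℝ x (latticeVec (m k))| ≤ ‖x‖ * √d := by
  obtain ⟨y, hy, hy0⟩ : ∃ y ∈ (ℝ ∙ x)ᗮ, y ≠ 0 := by
    refine Submodule.exists_mem_ne_zero_of_ne_bot fun hbot ↦ ?_
    have hrank := (ℝ ∙ x).finrank_add_finrank_orthogonal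
    rw [hbot, finrank_bot, finrank_euclideanSpace_fin] at hrank
    have hline : finrank ℝ (ℝ ∙ x) ≤ 1 := by simpa using finrank_span_le_card (R := ℝ) {x}
    omega
  rw [Submodule.mem_orthogonal_singleton_iff_inner_right] at hy
  obtain ⟨c, hc⟩ := exists_gt (2 * √d / ‖y‖)
  rw [div_lt_iff₀ (norm_pos_iff.2 hy0)] at hc
  choose m hm using fun k : ℕ ↦ exists_norm_latticeVec_sub_le ((k * c : ℝ) • y)
  refine ⟨m, fun k l hkl ↦ ?_, fun k ↦ ?_⟩
  · have hclose : |(k : ℝ) - l| * (c * ‖y‖) < 1 * (c * ‖y‖) := by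
      have hc0 : 0 ≤ c := by
        by_contra! h
        nlinarith [Real.sqrt_nonneg d, norm_nonneg y]
      calc |(k : ℝ) - l| * (c * ‖y‖) = ‖(k * c : ℝ) • y - (l * c : ℝ) • y‖ := by
            rw [← sub_smul, ← sub_mul, norm_smul, norm_mul, Real.norm_of_nonneg hc0,
              Real.norm_eq_abs, mul_assoc]
        _ ≤ ‖(k * c : ℝ) • y - latticeVec (m k)‖ + ‖latticeVec (m k) - (l * c : ℝ) • y‖ :=
            norm_sub_le_norm_sub_add_norm_sub ..
        _ ≤ √d + √d := by
            gcongr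
            · exact norm_sub_rev (latticeVec (m k)) _ ▸ hm k
            · exact hkl ▸ hm l
        _ < 1 * (c * ‖y‖) := by linarith
    have hlt := lt_of_mul_lt_mul_right hclose (by linarith [Real.sqrt_nonneg d])
    have : |(k : ℤ) - l| < 1 := by exact_mod_cast hlt
    exact_mod_cast sub_eq_zero.1 (Int.abs_lt_one_iff.1 this)
  · have horth : inner ℝ x (latticeVec (m k)) = inner ℝ x (latticeVec (m k) - (k * c : ℝ) • y) := by
      rw [inner_sub_right, inner_smul_right, hy, mul_zero, sub_zero]
    rw [horth]
    exact (abs_real_inner_le_norm _ _).trans (by gcongr; exact hm k)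

/-- The lattice points close to the hyperplane orthogonal to `x` have bounded images under all the
characters; two of them with almost the same image are subtracted. -/
lemma exists_norm_sub_one_lt {ι : Type*} [Finite ι] (hd : 1 < d)
    {σ : ι → AddChar (Fin d → ℤ) ℂ} (hinj : ∀ j v, σ j v = 1 → v = 0)
    {x : EuclideanSpace ℝ (Fin d)} (hx : ∀ j, lyapunovVec (σ j) ∈ ℝ ∙ x) {ε : ℝ} (hε : 0 < ε) :
    ∃ v, ∀ j, ‖σ j v - 1‖ < ε ∧ σ j v ≠ 1 := by
  have := Fintype.ofFinite ι
  obtain ⟨m, hm, hmx⟩ := exists_injective_abs_inner_latticeVec_le hd x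
  choose c hc using fun j ↦ Submodule.mem_span_singleton.1 (hx j)
  obtain ⟨C, -, hC⟩ := exists_pos_forall_ge fun j ↦ |c j| * (‖x‖ * √d)
  have hinner (j : ι) (k : ℕ) : |inner ℝ (lyapunovVec (σ j)) (latticeVec (m k))| ≤ C := by
    rw [← hc, real_inner_smul_left, abs_mul]
    exact (mul_le_mul_of_nonneg_left (hmx k) (abs_nonneg _)).trans (hC j)
  have hbdd (k : ℕ) : (fun j ↦ σ j (m k)) ∈ Metric.closedBall (0 : ι → ℂ) (Real.exp C) := by
    rw [mem_closedBall_zero_iff, pi_norm_le_iff_of_nonneg (Real.exp_pos C).le]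
    intro j
    rw [norm_eq_exp_inner_lyapunovVec]
    exact Real.exp_le_exp.2 (le_of_abs_le (hinner j k))
  obtain ⟨_, -, φ, hφ, hlim⟩ := tendsto_subseq_of_bounded Metric.isBounded_closedBall hbdd
  obtain ⟨k, hk⟩ := Metric.cauchySeq_iff.1 hlim.cauchySeq (ε * Real.exp (-C)) (by positivity)
  have hdist := hk k le_rfl (k + 1) k.le_succ
  refine ⟨m (φ k) - m (φ (k + 1)), fun j ↦ ⟨?_, fun h ↦ ?_⟩⟩
  · have hdist_j : ‖σ j (m (φ k)) - σ j (m (φ (k + 1)))‖ < ε * Real.exp (-C) := by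
      rw [← dist_eq_norm]
      exact (dist_le_pi_dist _ _ j).trans_lt hdist
    have hfactor : σ j (m (φ k)) - σ j (m (φ (k + 1))) =
        (σ j (m (φ k) - m (φ (k + 1))) - 1) * σ j (m (φ (k + 1))) := by
      rw [sub_one_mul, ← AddChar.map_add_eq_mul, sub_add_cancel]
    rw [hfactor, norm_mul, norm_eq_exp_inner_lyapunovVec _ (m (φ (k + 1)))] at hdist_j
    refine lt_of_mul_lt_mul_right (lt_of_le_of_lt ?_ hdist_j) (Real.exp_pos (-C)).le
    gcongr
    exact neg_le_of_abs_le (hinner j _)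
  · exact (hφ k.lt_succ_self).ne (hm (sub_eq_zero.1 (hinj j _ h)))

end Lyapunov

namespace Eigenforms

variable {d N : ℕ} {α : AddChar (Fin d → ℤ) (Matrix (Fin N) (Fin N) ℤ)} (E : Eigenforms α)

/-- The Lyapunov exponent of the `j`-th eigenform, as a vector. -/
noncomputable def lyapunov (j : Fin N) : EuclideanSpace ℝ (Fin d) := lyapunovVec (E.weight j)

open Classical in
/-- The coarse Lyapunov class of `r`: the indices whose Lyapunov exponent is a positive multiple of
that of `r`. It is empty if the exponent of `r` vanishes. -/
noncomputable def coarseClass (r : Fin N) : Finset (Fin N) :=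
  Finset.univ.filter fun j ↦
    E.lyapunov j ≠ 0 ∧ E.lyapunov r ≠ 0 ∧ SameRay ℝ (E.lyapunov j) (E.lyapunov r)

variable {E}

lemma mem_coarseClass {r j : Fin N} : j ∈ E.coarseClass r ↔
    E.lyapunov j ≠ 0 ∧ E.lyapunov r ≠ 0 ∧ SameRay ℝ (E.lyapunov j) (E.lyapunov r) := by
  simp [coarseClass]

lemma self_mem_coarseClass {r : Fin N} (hr : E.lyapunov r ≠ 0) : r ∈ E.coarseClass r :=
  mem_coarseClass.2 ⟨hr, hr, SameRay.refl _⟩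

lemma inner_lyapunov_of_mem_coarseClass {r j : Fin N} (hj : j ∈ E.coarseClass r) :
    inner ℝ (E.lyapunov j) (E.lyapunov r) = ‖E.lyapunov j‖ * ‖E.lyapunov r‖ :=
  inner_eq_norm_mul_iff_real.2 (sameRay_iff_norm_smul_eq.1 (mem_coarseClass.1 hj).2.2).symm

lemma inner_lyapunov_lt_of_notMem_coarseClass {r j : Fin N} (hr : E.lyapunov r ≠ 0)
    (hj0 : E.lyapunov j ≠ 0) (hj : j ∉ E.coarseClass r) :
    inner ℝ (E.lyapunov j) (E.lyapunov r) < ‖E.lyapunov j‖ * ‖E.lyapunov r‖ :=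
  inner_lt_norm_mul_iff_real.2 fun h ↦
    hj (mem_coarseClass.2 ⟨hj0, hr, sameRay_iff_norm_smul_eq.2 h.symm⟩)

lemma norm_form_mulVec (j : Fin N) (v : Fin d → ℤ) (w : Fin N → ℝ) :
    ‖E.form j (castMatrix ℝ (α v) *ᵥ w)‖ =
      Real.exp (inner ℝ (E.lyapunov j) (latticeVec v)) * ‖E.form j w‖ := by
  rw [E.form_mulVec, norm_mul, norm_eq_exp_inner_lyapunovVec, lyapunov]

variable (E)

lemma exists_norm_weight_sub_one_comparable (hd : 1 < d) (r : Fin N) :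
    ∃ ρ > 0, ∀ δ > 0, ∃ v, ∃ τ > 0, τ < δ ∧ ∀ j ∈ E.coarseClass r,
      ρ * τ ≤ ‖E.weight j v - 1‖ ∧ ‖E.weight j v - 1‖ ≤ τ := by
  have hline (j : E.coarseClass r) : lyapunovVec (E.weight j) ∈ ℝ ∙ E.lyapunov r := by
    obtain ⟨-, hr, hray⟩ := mem_coarseClass.1 j.2
    obtain ⟨c, -, hc⟩ := hray.exists_nonneg_right hr
    exact Submodule.mem_span_singleton.2 ⟨c, hc.symm⟩
  simpa using exists_norm_sub_one_comparable (σ := fun j : E.coarseClass r ↦ E.weight j) fun ε hε ↦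
    exists_norm_sub_one_lt (σ := fun j : E.coarseClass r ↦ E.weight j) hd
      (fun j v ↦ E.eq_zero_of_weight_eq_one j v) hline hε

end Eigenforms

lemma exists_norm_linearMap_le {ι F : Type*} {E : Type*} [Finite ι] [NormedAddCommGroup E]
    [NormedSpace ℝ E] [FiniteDimensional ℝ E] [NormedAddCommGroup F] [NormedSpace ℝ F]
    (f : ι → E →ₗ[ℝ] F) : ∃ C > 0, ∀ i u, ‖f i u‖ ≤ C * ‖u‖ := by
  obtain ⟨C, hC, hle⟩ := exists_pos_forall_ge fun i ↦ ‖LinearMap.toContinuousLinearMap (f i)‖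
  exact ⟨C, hC, fun i ↦ (LinearMap.toContinuousLinearMap (f i)).le_of_opNorm_le (hle i)⟩

end

section

open Matrix
open scoped FourierTransform

section ExponentialSums

lemma norm_fourierChar_sub_le (s t : ℝ) : ‖(𝐞 s : ℂ) - 𝐞 t‖ ≤ 2 * Real.pi * |s - t| := by
  have hfactor : (𝐞 s : ℂ) - 𝐞 t = 𝐞 t * (𝐞 (s - t) - 1) := by
    rw [mul_sub, ← Circle.coe_mul, ← AddChar.map_add_eq_mul, add_sub_cancel, mul_one]
  rw [hfactor, norm_mul, Circle.norm_coe, one_mul, Real.fourierChar_apply, mul_comm _ Complex.I]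
  refine Real.norm_exp_I_mul_ofReal_sub_one_le.trans_eq ?_
  rw [Real.norm_eq_abs, abs_mul, abs_of_pos Real.two_pi_pos]

lemma four_mul_abs_le_norm_fourierChar_sub_one {t : ℝ} (ht : |t| ≤ 1 / 2) :
    4 * |t| ≤ ‖(𝐞 t : ℂ) - 1‖ := by
  have hhalf : 2 * Real.pi * t / 2 = Real.pi * t := by ring
  have hchord : ‖(𝐞 t : ℂ) - 1‖ = 2 * |Real.sin (Real.pi * t)| := by
    rw [Real.fourierChar_apply, mul_comm _ Complex.I, Complex.norm_exp_I_mul_ofReal_sub_one,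
      hhalf, norm_mul, Real.norm_eq_abs, Real.norm_eq_abs, abs_two]
  have hjordan := Real.mul_le_sin (x := Real.pi * |t|) (by positivity)
    (by nlinarith [Real.pi_pos])
  have habs : |Real.sin (Real.pi * t)| = |Real.sin (Real.pi * |t|)| := by
    rcases abs_choice t with h | h <;> simp [h]
  rw [← mul_assoc, div_mul_cancel₀ _ Real.pi_ne_zero] at hjordan
  linarith [le_abs_self (Real.sin (Real.pi * |t|))]

lemma norm_sum_fourierChar_mul_le {β : ℝ} (hβ0 : β ≠ 0) (hβ : |β| ≤ 1 / 2) (J : ℕ) :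
    ‖∑ k ∈ Finset.range J, (𝐞 (k * β) : ℂ)‖ ≤ 1 / (2 * |β|) := by
  have hpos : 0 < |β| := abs_pos.2 hβ0
  have hlow := four_mul_abs_le_norm_fourierChar_sub_one hβ
  have hne : (𝐞 β : ℂ) ≠ 1 := fun h ↦ by
    rw [h, sub_self, norm_zero] at hlow
    linarith
  have hnum : ‖(𝐞 β : ℂ) ^ J - 1‖ ≤ 2 := by
    refine (norm_sub_le _ _).trans ?_
    rw [norm_pow, Circle.norm_coe]
    norm_num
  simp only [← nsmul_eq_mul, AddChar.map_nsmul_eq_pow, Circle.coe_pow]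
  rw [geom_sum_eq hne, norm_div, div_le_div_iff₀ (by linarith) (by positivity)]
  nlinarith

lemma norm_sum_fourierChar_le_of_near_progression {c β δ : ℝ} (hβ0 : β ≠ 0) (hβ : |β| ≤ 1 / 2)
    {φ : ℕ → ℝ} {J : ℕ} (hφ : ∀ k < J, |φ k - (c + k * β)| ≤ δ) :
    ‖∑ k ∈ Finset.range J, (𝐞 (φ k) : ℂ)‖ ≤ 1 / (2 * |β|) + J * (2 * Real.pi * δ) := by
  have hsplit : ∑ k ∈ Finset.range J, (𝐞 (φ k) : ℂ) =
      𝐞 c * ∑ k ∈ Finset.range J, (𝐞 (k * β) : ℂ) +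
        ∑ k ∈ Finset.range J, ((𝐞 (φ k) : ℂ) - 𝐞 (c + k * β)) := by
    rw [Finset.mul_sum, ← Finset.sum_add_distrib]
    refine Finset.sum_congr rfl fun k _ ↦ ?_
    rw [AddChar.map_add_eq_mul, Circle.coe_mul, add_sub_cancel]
  have herror : ‖∑ k ∈ Finset.range J, ((𝐞 (φ k) : ℂ) - 𝐞 (c + k * β))‖ ≤
      J * (2 * Real.pi * δ) := by
    refine (norm_sum_le_of_le _ fun k hk ↦ (norm_fourierChar_sub_le _ _).trans
      (mul_le_mul_of_nonneg_left (hφ k (Finset.mem_range.1 hk)) Real.two_pi_pos.le)).trans_eq ?_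
    simp
  rw [hsplit]
  refine (norm_add_le _ _).trans (add_le_add ?_ herror)
  rw [norm_mul, Circle.norm_coe, one_mul]
  exact norm_sum_fourierChar_mul_le hβ0 hβ J

lemma norm_pow_sub_one_sub_mul_le {A : Type*} [NormedCommRing A] {z : A} {τ : ℝ}
    (hz : ‖z - 1‖ ≤ τ) {k : ℕ} (hk : k * τ ≤ 1) :
    ‖z ^ k - 1 - k * (z - 1)‖ ≤ (k * τ) ^ 2 := by
  have hτ : 0 ≤ τ := (norm_nonneg _).trans hz
  have hfirst (k : ℕ) : ‖z ^ k - 1‖ ≤ (1 + τ) ^ k - 1 := by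
    induction k with
    | zero => simp
    | succ k ih =>
      have hstep : z ^ (k + 1) - 1 = (z ^ k - 1) + (z ^ k - 1) * (z - 1) + (z - 1) := by ring
      calc ‖z ^ (k + 1) - 1‖ ≤ ‖z ^ k - 1‖ + ‖z ^ k - 1‖ * ‖z - 1‖ + ‖z - 1‖ := by
            rw [hstep]
            exact norm_add₃_le.trans (by gcongr; exact norm_mul_le _ _)
        _ ≤ ((1 + τ) ^ k - 1) + ((1 + τ) ^ k - 1) * τ + τ := by
            gcongr
            exact (norm_nonneg _).trans ih
        _ = (1 + τ) ^ (k + 1) - 1 := by ring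
  have hsecond (k : ℕ) : ‖z ^ k - 1 - k * (z - 1)‖ ≤ (1 + τ) ^ k - 1 - k * τ := by
    induction k with
    | zero => simp
    | succ k ih =>
      have hstep : z ^ (k + 1) - 1 - (k + 1 : ℕ) * (z - 1) =
          (z ^ k - 1 - k * (z - 1)) + (z ^ k - 1) * (z - 1) := by push_cast; ring
      calc ‖z ^ (k + 1) - 1 - (k + 1 : ℕ) * (z - 1)‖
          ≤ ‖z ^ k - 1 - k * (z - 1)‖ + ‖z ^ k - 1‖ * ‖z - 1‖ := by
            rw [hstep]
            exact (norm_add_le _ _).trans (by gcongr; exact norm_mul_le _ _)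
        _ ≤ ((1 + τ) ^ k - 1 - k * τ) + ((1 + τ) ^ k - 1) * τ := by
            gcongr
            exacts [(norm_nonneg _).trans (hfirst k), hfirst k]
        _ = (1 + τ) ^ (k + 1) - 1 - (k + 1 : ℕ) * τ := by push_cast; ring
  have hexp : (1 + τ) ^ k ≤ Real.exp (k * τ) := by
    rw [Real.exp_nat_mul]
    exact pow_le_pow_left₀ (by linarith) (by linarith [Real.add_one_le_exp τ]) _
  have htaylor := Real.abs_exp_sub_one_sub_id_le (x := k * τ)
    (by rwa [abs_of_nonneg (by positivity)])
  linarith [hsecond k, le_of_abs_le htaylor]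

lemma norm_sum_le_of_card_filter_le {ι E : Type*} [SeminormedAddCommGroup E] {s : Finset ι}
    {f : ι → E} {p : ι → Prop} [DecidablePred p] {J δ a : ℝ} (hJ : 0 ≤ J) (hδ : 0 ≤ δ)
    (hcard : (s.filter p).card ≤ a) (hle : ∀ i ∈ s, ‖f i‖ ≤ J)
    (hgood : ∀ i ∈ s, ¬ p i → ‖f i‖ ≤ δ) : ‖∑ i ∈ s, f i‖ ≤ a * J + s.card * δ := by
  have hsum_bad : ‖∑ i ∈ s.filter p, f i‖ ≤ (s.filter p).card * J := by
    simpa using norm_sum_le_of_le _ fun i hi ↦ hle i (Finset.mem_filter.1 hi).1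
  have hsum_good : ‖∑ i ∈ s with ¬ p i, f i‖ ≤ (s.filter fun i ↦ ¬ p i).card * δ := by
    simpa using norm_sum_le_of_le _ fun i hi ↦
      hgood i (Finset.mem_filter.1 hi).1 (Finset.mem_filter.1 hi).2
  rw [← Finset.sum_filter_add_sum_filter_not s p]
  refine (norm_add_le _ _).trans (add_le_add (hsum_bad.trans ?_) (hsum_good.trans ?_))
  · gcongr
  · gcongr
    exact Finset.filter_subset _ _

end ExponentialSums

namespace Eigenforms

variable {d N : ℕ} {α : AddChar (Fin d → ℤ) (Matrix (Fin N) (Fin N) ℤ)} (E : Eigenforms α)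

lemma form_nsmul_mulVec (j : Fin N) (t : Fin d → ℤ) (k : ℕ) (v : Fin N → ℝ) :
    E.form j (castMatrix ℝ (α (k • t)) *ᵥ v) = E.weight j t ^ k * E.form j v := by
  rw [E.form_mulVec, AddChar.map_nsmul_eq_pow]

/-- Along a coarse Lyapunov class on which `t` acts almost trivially, the orbit of `v` under the
multiples of `t` is almost an arithmetic progression. -/
lemma exists_orbit_near_progression (r : Fin N) :
    ∃ C > 0, ∀ (t : Fin d → ℤ) (J : ℕ) {τ s X : ℝ}, 0 < τ → 0 < s → s ≤ 1 → J * τ ≤ s → 0 < X →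
      (∀ j ∈ E.coarseClass r, ‖E.weight j t - 1‖ ≤ τ) → ∃ η > 0, ∀ v,
        (∀ j ∈ E.coarseClass r, ‖E.form j v‖ ≤ X) → (∀ j ∉ E.coarseClass r, ‖E.form j v‖ ≤ η) →
        ‖castMatrix ℝ (α t) *ᵥ v - v‖ ≤ C * (τ * X) ∧
        ∀ k < J, ‖castMatrix ℝ (α (k • t)) *ᵥ v - (v + (k : ℝ) • (castMatrix ℝ (α t) *ᵥ v - v))‖ ≤
          C * (s ^ 2 * X) := by
  obtain ⟨C, hC, hnorm⟩ := exists_norm_le_of_separating E.form E.eq_zero_of_form_eq_zero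
  refine ⟨C, hC, fun t J τ s X hτ hs hs1 hJ hX hclass ↦ ?_⟩
  obtain ⟨Q, hQ, hQle⟩ : ∃ Q > 0, ∀ q : Fin N × Fin J,
      ‖E.weight q.1 t ^ (q.2 : ℕ) - 1 - (q.2 : ℕ) * (E.weight q.1 t - 1)‖ ≤ Q :=
    exists_pos_forall_ge _
  obtain ⟨R, hR, hRle⟩ := exists_pos_forall_ge fun j ↦ ‖E.weight j t - 1‖
  refine ⟨min (s ^ 2 * X / Q) (τ * X / R), by positivity, fun v hvX hvη ↦ ?_⟩
  have hdisp (j : Fin N) : E.form j (castMatrix ℝ (α t) *ᵥ v - v) =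
      (E.weight j t - 1) * E.form j v := by
    rw [map_sub, E.form_mulVec, sub_one_mul]
  refine ⟨hnorm _ _ (by positivity) fun j ↦ ?_, fun k hk ↦ hnorm _ _ (by positivity) fun j ↦ ?_⟩
  · rw [hdisp, norm_mul]
    by_cases hj : j ∈ E.coarseClass r
    · exact mul_le_mul (hclass j hj) (hvX j hj) (norm_nonneg _) hτ.le
    · exact (mul_le_mul (hRle j) ((hvη j hj).trans (min_le_right _ _)) (norm_nonneg _)
        hR.le).trans_eq (mul_div_cancel₀ _ hR.ne')
  · have herror : E.form j (castMatrix ℝ (α (k • t)) *ᵥ v -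
        (v + (k : ℝ) • (castMatrix ℝ (α t) *ᵥ v - v))) =
        (E.weight j t ^ k - 1 - k * (E.weight j t - 1)) * E.form j v := by
      rw [map_sub, map_add, (E.form j).map_smul, hdisp, E.form_nsmul_mulVec, Complex.real_smul]
      push_cast
      ring
    rw [herror, norm_mul]
    by_cases hj : j ∈ E.coarseClass r
    · have hkτ : k * τ ≤ s := le_trans (by gcongr) hJ
      refine mul_le_mul ?_ (hvX j hj) (norm_nonneg _) (by positivity)
      exact (norm_pow_sub_one_sub_mul_le (hclass j hj) (hkτ.trans hs1)).trans (by gcongr)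
    · exact (mul_le_mul (hQle (j, ⟨k, hk⟩)) ((hvη j hj).trans (min_le_left _ _)) (norm_nonneg _)
        hQ.le).trans_eq (mul_div_cancel₀ _ hQ.ne')

end Eigenforms

end

section

open Matrix
open scoped FourierTransform

lemma exists_pos_nat_mul_mem_Icc {τ s : ℝ} (hτ : 0 < τ) (hs : 2 * τ ≤ s) :
    ∃ J : ℕ, 0 < J ∧ J * τ ∈ Set.Icc (s / 2) s := by
  have hle := Nat.floor_le (div_nonneg (by linarith : 0 ≤ s) hτ.le)
  have hlt := Nat.lt_floor_add_one (s / τ)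
  rw [le_div_iff₀ hτ] at hle
  rw [div_lt_iff₀ hτ] at hlt
  refine ⟨⌊s / τ⌋₊, Nat.floor_pos.2 ?_, by linarith, hle⟩
  rw [le_div_iff₀ hτ]
  linarith

lemma exists_cube_eq_of_cube_le {X Y₀ : ℝ} (hY₀ : 0 ≤ Y₀) (hX : Y₀ ^ 3 ≤ X) :
    ∃ Y, Y₀ ≤ Y ∧ X = Y ^ 3 := by
  have hX0 : 0 ≤ X := le_trans (by positivity) hX
  have hcube : (X ^ (3⁻¹ : ℝ)) ^ 3 = X := by
    simpa using Real.rpow_inv_natCast_pow hX0 (n := 3) (by norm_num)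
  exact ⟨X ^ (3⁻¹ : ℝ), le_of_pow_le_pow_left₀ three_ne_zero (by positivity) (hcube.symm ▸ hX),
    hcube.symm⟩

namespace Eigenforms

variable {d N : ℕ} {α : AddChar (Fin d → ℤ) (Matrix (Fin N) (Fin N) ℤ)} (E : Eigenforms α)

/-- At scale `X = Y³` the progression moves by about `X * s = Y` in total, whereas it deviates from
linearity by at most about `X * s² = 1 / Y`, where `s = 1 / Y²`. -/
lemma exists_slow_progression (hd : 1 < d) (r : Fin N) (l : ℝ) {P : ℝ} (hP : 0 < P) :
    ∃ c > 0, ∃ C > 0, ∀ Y ≥ 1, ∃ (t : Fin d → ℤ) (J : ℕ), 0 < J ∧ ∃ η > 0, ∀ v,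
      (∀ j ∈ E.coarseClass r, ‖E.form j v‖ ≤ Y ^ 3) →
      (∃ j ∈ E.coarseClass r, Y ^ 3 * Real.exp (-l) ≤ ‖E.form j v‖) →
      (∀ j ∉ E.coarseClass r, ‖E.form j v‖ ≤ η) →
      P * ‖castMatrix ℝ (α t) *ᵥ v - v‖ ≤ 1 / 2 ∧
      c * Y ≤ J * ‖castMatrix ℝ (α t) *ᵥ v - v‖ ∧
      ∀ k < J, ‖castMatrix ℝ (α (k • t)) *ᵥ v - (v + (k : ℝ) • (castMatrix ℝ (α t) *ᵥ v - v))‖ ≤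
        C / Y := by
  obtain ⟨C, hC, hprog⟩ := E.exists_orbit_near_progression r
  obtain ⟨D, hD, hform⟩ := exists_norm_linearMap_le E.form
  obtain ⟨ρ, hρ, hstep⟩ := E.exists_norm_weight_sub_one_comparable hd r
  refine ⟨ρ * Real.exp (-l) / (2 * D), by positivity, C, hC, fun Y hY ↦ ?_⟩
  have hY0 : 0 < Y := by linarith
  obtain ⟨t, τ, hτ, hτlt, hweight⟩ :=
    hstep (min (1 / Y ^ 2 / 2) (1 / (2 * (P * (C * Y ^ 3))))) (by positivity)
  obtain ⟨hτs, hτX⟩ := lt_min_iff.1 hτlt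
  rw [lt_div_iff₀ (by positivity)] at hτX
  obtain ⟨J, hJ0, hJlow, hJup⟩ := exists_pos_nat_mul_mem_Icc hτ (by linarith : 2 * τ ≤ 1 / Y ^ 2)
  obtain ⟨η, hη, hv⟩ := hprog t J hτ (by positivity)
    (div_le_one_of_le₀ (one_le_pow₀ hY) (by positivity)) hJup (pow_pos hY0 3)
    fun j hj ↦ (hweight j hj).2
  refine ⟨t, J, hJ0, η, hη, fun v hvX ⟨j, hj, hvj⟩ hvη ↦ ?_⟩
  obtain ⟨hdisp, herror⟩ := hv v hvX hvη
  have hdisp_low : ρ * τ * (Y ^ 3 * Real.exp (-l)) ≤ D * ‖castMatrix ℝ (α t) *ᵥ v - v‖ := by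
    refine le_trans ?_ (hform j _)
    rw [map_sub, E.form_mulVec, ← sub_one_mul, norm_mul]
    exact mul_le_mul (hweight j hj).1 hvj (by positivity) (norm_nonneg _)
  refine ⟨?_, ?_, fun k hk ↦ (herror k hk).trans_eq (by field_simp)⟩
  · linarith [mul_le_mul_of_nonneg_left hdisp hP.le]
  · calc ρ * Real.exp (-l) / (2 * D) * Y
        = 1 / Y ^ 2 / 2 * (ρ * (Y ^ 3 * Real.exp (-l))) / D := by field_simp
      _ ≤ J * τ * (ρ * (Y ^ 3 * Real.exp (-l))) / D := by gcongr
      _ = J * (ρ * τ * (Y ^ 3 * Real.exp (-l))) / D := by ring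
      _ ≤ J * (D * ‖castMatrix ℝ (α t) *ᵥ v - v‖) / D := by gcongr
      _ = _ := by field_simp

lemma exists_sum_fourierChar_orbit_le (hd : 1 < d) (r : Fin N) (l : ℝ) {P κ δ : ℝ} (hP : 0 < P)
    (hκ : 0 < κ) (hδ : 0 < δ) :
    ∃ X₀ > 0, ∀ X ≥ X₀, ∃ (t : Fin d → ℤ) (J : ℕ), 0 < J ∧ ∃ η > 0, ∀ v,
      (∀ j ∈ E.coarseClass r, ‖E.form j v‖ ≤ X) →
      (∃ j ∈ E.coarseClass r, X * Real.exp (-l) ≤ ‖E.form j v‖) →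
      (∀ j ∉ E.coarseClass r, ‖E.form j v‖ ≤ η) →
      ∀ f : (Fin N → ℝ) →ₗ[ℝ] ℝ, (∀ w, |f w| ≤ P * ‖w‖) →
        κ * ‖castMatrix ℝ (α t) *ᵥ v - v‖ ≤ |f (castMatrix ℝ (α t) *ᵥ v - v)| →
        ‖∑ k ∈ Finset.range J, (𝐞 (f (castMatrix ℝ (α (k • t)) *ᵥ v)) : ℂ)‖ ≤ J * δ := by
  obtain ⟨c, hc, C, hC, hprog⟩ := E.exists_slow_progression hd r l hP
  set a := 1 / (2 * κ * c) + 2 * Real.pi * (P * C) with ha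
  refine ⟨max 1 (a / δ) ^ 3, by positivity, fun X hX ↦ ?_⟩
  obtain ⟨Y, hY, rfl⟩ := exists_cube_eq_of_cube_le (by positivity) hX
  have hY1 : 1 ≤ Y := (le_max_left _ _).trans hY
  have haY : a / Y ≤ δ := by
    rw [div_le_iff₀ (by linarith), ← div_le_iff₀' hδ]
    exact (le_max_right _ _).trans hY
  obtain ⟨t, J, hJ, η, hη, hv⟩ := hprog Y hY1
  refine ⟨t, J, hJ, η, hη, fun v hvX hvl hvη f hfP hfκ ↦ ?_⟩
  obtain ⟨hdisp, hdisp_low, herror⟩ := hv v hvX hvl hvη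
  set u := castMatrix ℝ (α t) *ᵥ v - v
  have hβlow : κ * (c * Y) ≤ J * |f u| := by
    calc κ * (c * Y) ≤ κ * (J * ‖u‖) := by gcongr
      _ = J * (κ * ‖u‖) := by ring
      _ ≤ J * |f u| := by gcongr
  have hβ0 : 0 < |f u| := pos_of_mul_pos_right (lt_of_lt_of_le (by positivity) hβlow) J.cast_nonneg
  have hβinv : 1 / (2 * |f u|) ≤ J / (2 * κ * c) / Y := by
    rw [div_div, div_le_div_iff₀ (by positivity) (by positivity)]
    linarith
  have hsum := norm_sum_fourierChar_le_of_near_progression (abs_pos.1 hβ0) ((hfP u).trans hdisp)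
    (c := f v) (J := J) (φ := fun k ↦ f (castMatrix ℝ (α (k • t)) *ᵥ v)) (δ := P * (C / Y))
    fun k hk ↦ by
      rw [← smul_eq_mul, ← map_smul, ← map_add, ← map_sub]
      exact (hfP _).trans (by gcongr; exact herror k hk)
  calc _ ≤ 1 / (2 * |f u|) + J * (2 * Real.pi * (P * (C / Y))) := hsum
    _ ≤ J / (2 * κ * c) / Y + J * (2 * Real.pi * (P * (C / Y))) := by
        gcongr
    _ = J * (a / Y) := by rw [ha]; field_simp
    _ ≤ J * δ := by gcongr

theorem exists_average_fourierChar_le [NeZero N] (hα : IsStronglyIrreducible α) (hd : 1 < d)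
    (r : Fin N) (l : ℝ) {ε : ℝ} (hε : 0 < ε) {Ξ : Finset (Fin N → ℤ)} (hΞ : ∀ ξ ∈ Ξ, ξ ≠ 0) :
    ∃ X₀ > 0, ∀ X ≥ X₀, ∃ (ι : Type) (_ : Fintype ι) (_ : Nonempty ι) (K : ι → Fin d → ℤ),
      ∃ η > 0, ∀ v, (∀ j ∈ E.coarseClass r, ‖E.form j v‖ ≤ X) →
        (∃ j ∈ E.coarseClass r, X * Real.exp (-l) ≤ ‖E.form j v‖) →
        (∀ j ∉ E.coarseClass r, ‖E.form j v‖ ≤ η) →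
        ∀ ξ ∈ Ξ, ‖∑ i, (𝐞 (phase ξ (castMatrix ℝ (α (K i)) *ᵥ v)) : ℂ)‖ ≤
          Fintype.card ι * ε := by
  obtain ⟨B, hB⟩ := exists_nat_gt (N / (ε / 2))
  have hB0 : (0 : ℝ) < B := lt_of_le_of_lt (by positivity) hB
  have : NeZero B := ⟨by exact_mod_cast hB0.ne'⟩
  rw [div_lt_iff₀ (by positivity)] at hB
  obtain ⟨m, hm⟩ := exists_seq_card_phase_lt hα
  choose κ' hκ' hcard using fun ξ : Ξ ↦ hm ξ (hΞ ξ ξ.2) B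
  obtain ⟨κ, hκ, hκle⟩ := exists_pos_forall_le hκ'
  obtain ⟨P, hP, hPle⟩ :=
    exists_norm_linearMap_le fun q : Ξ × Fin B ↦ phase (q.1.1 ᵥ* α (m q.2))
  obtain ⟨X₀, hX₀, hsum⟩ := E.exists_sum_fourierChar_orbit_le hd r l hP hκ (half_pos hε)
  refine ⟨X₀, hX₀, fun X hX ↦ ?_⟩
  obtain ⟨t, J, hJ, η, hη, hv⟩ := hsum X hX
  have : NeZero J := ⟨hJ.ne'⟩
  refine ⟨Fin B × Fin J, inferInstance, inferInstance, fun q ↦ m q.1 + (q.2 : ℕ) • t, η, hη,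
    fun v hvX hvl hvη ξ hξ ↦ ?_⟩
  have hphase (b k : ℕ) : phase ξ (castMatrix ℝ (α (m b + k • t)) *ᵥ v) =
      phase (ξ ᵥ* α (m b)) (castMatrix ℝ (α (k • t)) *ᵥ v) := by
    rw [AddChar.map_add_eq_mul, map_mul, ← mulVec_mulVec, phase_mulVec]
  have hsplit : ∑ q : Fin B × Fin J,
        (𝐞 (phase ξ (castMatrix ℝ (α (m q.1 + (q.2 : ℕ) • t)) *ᵥ v)) : ℂ) =
      ∑ b ∈ Finset.range B, ∑ k ∈ Finset.range J,
        (𝐞 (phase (ξ ᵥ* α (m b)) (castMatrix ℝ (α (k • t)) *ᵥ v)) : ℂ) := by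
    simp only [hphase, Fintype.sum_prod_type, Finset.sum_range]
  set u := castMatrix ℝ (α t) *ᵥ v - v
  have hbad : (((Finset.range B).filter fun b ↦
      |phase (ξ ᵥ* α (m b)) u| < κ' ⟨ξ, hξ⟩ * ‖u‖).card : ℝ) ≤ N := by
    exact_mod_cast (hcard ⟨ξ, hξ⟩ u).le
  rw [hsplit]
  refine (norm_sum_le_of_card_filter_le J.cast_nonneg (by positivity : 0 ≤ J * (ε / 2)) hbad
    (fun b _ ↦ ?_) fun b hb hgood ↦ ?_).trans ?_
  · exact (norm_sum_le_of_le _ fun k _ ↦ (Circle.norm_coe _).le).trans_eq (by simp)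
  · refine hv v hvX hvl hvη _ (hPle (⟨ξ, hξ⟩, ⟨b, Finset.mem_range.1 hb⟩)) ?_
    exact le_trans (by gcongr; exact hκle _) (not_lt.1 hgood)
  · rw [Fintype.card_prod, Fintype.card_fin, Fintype.card_fin, Finset.card_range, Nat.cast_mul]
    nlinarith [mul_le_mul_of_nonneg_right hB.le (Nat.cast_nonneg (α := ℝ) J)]

end Eigenforms

end

section LocalMass

open Set
open scoped Pointwise

variable {G : Type*} [AddCommGroup G] [MeasurableSpace G]

/-- The mass of the translate `x + B`. -/
noncomputable def translateMass (μ : Measure G) (B : Set G) (x : G) : ℝ≥0∞ := μ {y | y - x ∈ B}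

/-- The logarithm of the mass of the translate `x + B`. It takes the junk value `0` where that mass
vanishes, so it is only meaningful for sets satisfying `HasMassBoundedBelow`. -/
noncomputable def logMass (μ : Measure G) (B : Set G) (x : G) : ℝ :=
  Real.log (translateMass μ B x).toReal

/-- The translates of `B` centred at almost every point have mass bounded away from zero. -/
structure HasMassBoundedBelow (μ : Measure G) (B : Set G) : Prop where
  measurableSet : MeasurableSet B
  exists_pos_ae_le : ∃ ε > 0, ∀ᵐ x ∂μ, ε ≤ (translateMass μ B x).toReal

/-- `B` is covered by `n` translates of a set whose differences lie in `B'`. -/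
def CoveredByTranslates (B B' : Set G) (n : ℕ) : Prop :=
  ∃ F : Finset G, F.card ≤ n ∧ ∃ S, B ⊆ (F : Set G) + S ∧ S - S ⊆ B'

variable {μ : Measure G} {B B' : Set G} {n : ℕ}

omit [MeasurableSpace G] in
lemma preimage_const_sub_sub_subset {S : Set G} (hS : S - S ⊆ B) (a : G) :
    (a - ·) ⁻¹' S - (a - ·) ⁻¹' S ⊆ B := by
  rintro _ ⟨x, hx, y, hy, rfl⟩
  simpa using hS (sub_mem_sub hy hx)

lemma translateMass_le_one [IsProbabilityMeasure μ] (B : Set G) (x : G) :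
    translateMass μ B x ≤ 1 :=
  prob_le_one

lemma translateMass_ne_top [IsFiniteMeasure μ] (B : Set G) (x : G) : translateMass μ B x ≠ ∞ :=
  measure_ne_top _ _

lemma logMass_nonpos [IsProbabilityMeasure μ] (B : Set G) (x : G) : logMass μ B x ≤ 0 :=
  Real.log_nonpos toReal_nonneg (toReal_mono one_ne_top (translateMass_le_one B x))

lemma HasMassBoundedBelow.ae_pos (h : HasMassBoundedBelow μ B) :
    ∀ᵐ x ∂μ, 0 < (translateMass μ B x).toReal := by
  obtain ⟨ε, hε, hle⟩ := h.exists_pos_ae_le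
  exact hle.mono fun x ↦ hε.trans_le

lemma measure_le_translateMass {S : Set G} (hS : S - S ⊆ B) {x : G} (hx : x ∈ S) :
    μ S ≤ translateMass μ B x :=
  measure_mono fun _ hy ↦ hS (sub_mem_sub hy hx)

lemma lintegral_inv_translateMass_le_one {S : Set G} (hS : S - S ⊆ B) :
    ∫⁻ x in S, (translateMass μ B x)⁻¹ ∂μ ≤ 1 :=
  calc ∫⁻ x in S, (translateMass μ B x)⁻¹ ∂μ ≤ ∫⁻ _ in S, (μ S)⁻¹ ∂μ :=
        setLIntegral_mono measurable_const fun x hx ↦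
          ENNReal.inv_le_inv.mpr (measure_le_translateMass hS hx)
    _ = (μ S)⁻¹ * μ S := by simp
    _ ≤ 1 := by
      rw [mul_comm]
      exact ENNReal.mul_inv_le_one _

lemma CoveredByTranslates.hasMassBoundedBelow [IsFiniteMeasure μ]
    (h : CoveredByTranslates univ B n) (hB : MeasurableSet B) : HasMassBoundedBelow μ B := by
  obtain ⟨F, -, S, hBF, hSB⟩ := h
  let T (c : G) : Set G := (· - c) ⁻¹' S
  obtain ⟨ε, hε, hle⟩ := exists_pos_forall_le
    (f := fun c : {c : F // μ (T c) ≠ 0} ↦ μ.real (T c)) fun c ↦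
      ENNReal.toReal_pos c.2 (measure_ne_top _ _)
  refine ⟨hB, ε, hε, ?_⟩
  have hnull : ∀ᵐ x ∂μ, ∀ c : F, μ (T c) = 0 → x ∉ T c := by
    rw [ae_all_iff]
    intro c
    rw [Filter.eventually_imp_distrib_left]
    exact measure_eq_zero_iff_ae_notMem.mp
  filter_upwards [hnull] with x hx
  obtain ⟨c, hc, s, hs, rfl⟩ := hBF (mem_univ x)
  have hmem : c + s ∈ T c := by simpa [T] using hs
  refine (hle ⟨⟨c, hc⟩, fun h0 ↦ hx ⟨c, hc⟩ h0 hmem⟩).trans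
    (ENNReal.toReal_mono (measure_ne_top _ _) (measure_le_translateMass ?_ hmem))
  rintro _ ⟨u, hu, v, hv, rfl⟩
  simpa using hSB (sub_mem_sub hu hv)

lemma HasMassBoundedBelow.ae_ofReal_exp_logMass_sub [IsFiniteMeasure μ]
    (hB : HasMassBoundedBelow μ B) (hB' : HasMassBoundedBelow μ B') :
    ∀ᵐ x ∂μ, ENNReal.ofReal (Real.exp (logMass μ B x - logMass μ B' x)) =
      translateMass μ B x * (translateMass μ B' x)⁻¹ := by
  filter_upwards [hB.ae_pos, hB'.ae_pos] with x hx hx'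
  rw [logMass, logMass, Real.exp_sub, Real.exp_log hx, Real.exp_log hx',
    ENNReal.ofReal_div_of_pos hx', ENNReal.ofReal_toReal (translateMass_ne_top _ _),
    ENNReal.ofReal_toReal (translateMass_ne_top _ _), div_eq_mul_inv]

/-- The set of centres around which passing from `B` to `B'` shrinks the local mass by a factor of
at least `exp s`. -/
def massDropSet (μ : Measure G) (B B' : Set G) (s : ℝ) : Set G :=
  {x | translateMass μ B' x ≤ ENNReal.ofReal (Real.exp (-s)) * translateMass μ B x}

lemma logMass_sub_le_of_notMem_massDropSet [IsFiniteMeasure μ] {x : G} {s : ℝ}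
    (hx : 0 < (translateMass μ B x).toReal) (hs : x ∉ massDropSet μ B B' s) :
    logMass μ B x - logMass μ B' x ≤ s := by
  have hlt := (ENNReal.toReal_lt_toReal (mul_ne_top ofReal_ne_top (translateMass_ne_top B x))
    (translateMass_ne_top B' x)).mpr (not_le.mp hs)
  rw [toReal_mul, toReal_ofReal (Real.exp_pos _).le] at hlt
  have hlog := Real.log_le_log (by positivity) hlt.le
  rw [Real.log_mul (Real.exp_pos _).ne' hx.ne', Real.log_exp] at hlog
  rw [logMass, logMass]
  linarith

variable [MeasurableSub₂ G]

lemma measurableSet_sub_mem (hB : MeasurableSet B) : MeasurableSet {q : G × G | q.2 - q.1 ∈ B} :=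
  measurable_snd.sub measurable_fst hB

lemma measurable_translateMass [SFinite μ] (hB : MeasurableSet B) :
    Measurable (translateMass μ B) :=
  measurable_measure_prodMk_left (measurableSet_sub_mem hB)

lemma measurable_logMass [SFinite μ] (hB : MeasurableSet B) : Measurable (logMass μ B) :=
  Real.measurable_log.comp (measurable_translateMass hB).ennreal_toReal

lemma HasMassBoundedBelow.integrable_logMass [IsProbabilityMeasure μ]
    (h : HasMassBoundedBelow μ B) : Integrable (logMass μ B) μ := by
  obtain ⟨ε, hε, hle⟩ := h.exists_pos_ae_le
  refine .of_bound (measurable_logMass h.measurableSet).aestronglyMeasurable (-Real.log ε) ?_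
  filter_upwards [hle] with x hx
  rw [Real.norm_eq_abs, abs_of_nonpos (logMass_nonpos B x)]
  exact neg_le_neg (Real.log_le_log hε hx)

lemma lintegral_translateMass_mul {ν : Measure G} [SFinite μ] [SFinite ν] (hB : MeasurableSet B)
    {f : G → ℝ≥0∞} (hf : Measurable f) :
    ∫⁻ x, translateMass ν B x * f x ∂μ = ∫⁻ y, ∫⁻ x in (y - ·) ⁻¹' B, f x ∂μ ∂ν := by
  have hmeas : Measurable ({q : G × G | q.2 - q.1 ∈ B}.indicator fun q ↦ f q.1) :=
    (hf.comp measurable_fst).indicator (measurableSet_sub_mem hB)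
  calc _ = ∫⁻ x, ∫⁻ y, {q : G × G | q.2 - q.1 ∈ B}.indicator (fun q ↦ f q.1) (x, y) ∂ν ∂μ := by
        refine lintegral_congr fun x ↦ ?_
        rw [mul_comm, translateMass]
        exact (lintegral_indicator_const (measurable_id.sub_const x hB) (f x)).symm
    _ = ∫⁻ y, ∫⁻ x, {q : G × G | q.2 - q.1 ∈ B}.indicator (fun q ↦ f q.1) (x, y) ∂μ ∂ν :=
        lintegral_lintegral_swap hmeas.aemeasurable
    _ = _ := lintegral_congr fun y ↦ lintegral_indicator (measurable_id.const_sub y hB) f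

lemma CoveredByTranslates.lintegral_mul_inv_le [IsFiniteMeasure μ]
    (h : CoveredByTranslates B B' n) (hB : MeasurableSet B) (hB' : MeasurableSet B') :
    ∫⁻ x, translateMass μ B x * (translateMass μ B' x)⁻¹ ∂μ ≤ n * μ univ := by
  obtain ⟨F, hF, S, hBF, hSB⟩ := h
  have hcover (y : G) : (y - ·) ⁻¹' B ⊆ ⋃ c : F, (y - c - ·) ⁻¹' S := by
    intro x hx
    obtain ⟨c, hc, s, hs, hcs : c + s = y - x⟩ := hBF hx
    refine mem_iUnion.mpr ⟨⟨c, hc⟩, ?_⟩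
    rw [mem_preimage, sub_right_comm, ← hcs]
    simpa using hs
  have hfiber (y : G) : ∫⁻ x in (y - ·) ⁻¹' B, (translateMass μ B' x)⁻¹ ∂μ ≤ n :=
    calc _ ≤ ∫⁻ x in ⋃ c : F, (y - c - ·) ⁻¹' S, (translateMass μ B' x)⁻¹ ∂μ :=
          lintegral_mono_set (hcover y)
      _ ≤ ∑' c : F, ∫⁻ x in (y - c - ·) ⁻¹' S, (translateMass μ B' x)⁻¹ ∂μ :=
          lintegral_iUnion_le _ _
      _ ≤ ∑' _ : F, 1 := ENNReal.tsum_le_tsum fun c ↦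
          lintegral_inv_translateMass_le_one (preimage_const_sub_sub_subset hSB _)
      _ ≤ n := by simpa using hF
  calc _ = ∫⁻ y, ∫⁻ x in (y - ·) ⁻¹' B, (translateMass μ B' x)⁻¹ ∂μ ∂μ :=
        lintegral_translateMass_mul hB (measurable_translateMass hB').inv
    _ ≤ ∫⁻ _, n ∂μ := lintegral_mono hfiber
    _ = n * μ univ := lintegral_const _

lemma CoveredByTranslates.integral_exp_logMass_sub_le [IsProbabilityMeasure μ]
    (h : CoveredByTranslates B B' n) (hB : HasMassBoundedBelow μ B)
    (hB' : HasMassBoundedBelow μ B') :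
    Integrable (fun x ↦ Real.exp (logMass μ B x - logMass μ B' x)) μ ∧
      ∫ x, Real.exp (logMass μ B x - logMass μ B' x) ∂μ ≤ n := by
  have hmeas : Measurable fun x ↦ Real.exp (logMass μ B x - logMass μ B' x) :=
    Real.measurable_exp.comp ((measurable_logMass hB.measurableSet).sub
      (measurable_logMass hB'.measurableSet))
  have hnonneg : 0 ≤ᵐ[μ] fun x ↦ Real.exp (logMass μ B x - logMass μ B' x) :=
    .of_forall fun x ↦ (Real.exp_pos _).le
  have hle : ∫⁻ x, ENNReal.ofReal (Real.exp (logMass μ B x - logMass μ B' x)) ∂μ ≤ n := by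
    rw [lintegral_congr_ae (hB.ae_ofReal_exp_logMass_sub hB')]
    simpa using h.lintegral_mul_inv_le (μ := μ) hB.measurableSet hB'.measurableSet
  refine ⟨⟨hmeas.aestronglyMeasurable, ?_⟩, ?_⟩
  · rw [hasFiniteIntegral_iff_ofReal hnonneg]
    exact hle.trans_lt (natCast_lt_top n)
  · rw [integral_eq_lintegral_of_nonneg_ae hnonneg hmeas.aestronglyMeasurable]
    exact ENNReal.toReal_le_of_le_ofReal n.cast_nonneg (by simpa using hle)

lemma measurableSet_massDropSet [SFinite μ] (hB : MeasurableSet B) (hB' : MeasurableSet B')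
    (s : ℝ) : MeasurableSet (massDropSet μ B B' s) :=
  measurableSet_le (measurable_translateMass hB')
    ((measurable_translateMass hB).const_mul _)

/-- The logarithmic mass ratio `t` is bounded by `g / 2` off the drop set, and everywhere by
`D + exp (t - D)`, whose last term has integral at most `1`. -/
lemma le_measureReal_massDropSet [IsProbabilityMeasure μ] (hB : HasMassBoundedBelow μ B)
    (hB' : HasMassBoundedBelow μ B') (h : CoveredByTranslates B B' n) {D g : ℝ} (hg0 : 0 ≤ g)
    (hn : n ≤ Real.exp D) (hg : g ≤ ∫ x, logMass μ B x ∂μ - ∫ x, logMass μ B' x ∂μ) :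
    g / 2 - 1 ≤ μ.real (massDropSet μ B B' (g / 2)) * D := by
  set A := massDropSet μ B B' (g / 2)
  set t : G → ℝ := fun x ↦ logMass μ B x - logMass μ B' x
  have hA : MeasurableSet A := measurableSet_massDropSet hB.measurableSet hB'.measurableSet _
  obtain ⟨hint, hle⟩ := h.integral_exp_logMass_sub_le hB hB'
  have hpointwise : ∀ᵐ x ∂μ, t x ≤ g / 2 + (A.indicator (fun _ ↦ D) x +
      Real.exp (-D) * Real.exp (t x)) := by
    filter_upwards [hB.ae_pos] with x hx
    rw [← Real.exp_add]
    by_cases hxA : x ∈ A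
    · rw [indicator_of_mem hxA]
      linarith [Real.add_one_le_exp (-D + t x)]
    · rw [indicator_of_notMem hxA]
      have ht : t x ≤ g / 2 := logMass_sub_le_of_notMem_massDropSet hx hxA
      linarith [Real.exp_pos (-D + t x)]
  have hD : Integrable (A.indicator fun _ ↦ D) μ := (integrable_const D).indicator hA
  have hexp : Integrable (fun x ↦ Real.exp (-D) * Real.exp (t x)) μ := hint.const_mul _
  have hbound : Real.exp (-D) * ∫ x, Real.exp (t x) ∂μ ≤ 1 :=
    calc _ ≤ Real.exp (-D) * Real.exp D := by gcongr; exact hle.trans hn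
      _ = 1 := by rw [← Real.exp_add, neg_add_cancel, Real.exp_zero]
  have hfinal :=
    calc g ≤ ∫ x, t x ∂μ :=
          hg.trans_eq (integral_sub hB.integrable_logMass hB'.integrable_logMass).symm
      _ ≤ ∫ x, (g / 2 + (A.indicator (fun _ ↦ D) x + Real.exp (-D) * Real.exp (t x))) ∂μ :=
          integral_mono_ae (hB.integrable_logMass.sub hB'.integrable_logMass)
            ((integrable_const _).add (hD.add hexp)) hpointwise
      _ = g / 2 + (μ.real A * D + Real.exp (-D) * ∫ x, Real.exp (t x) ∂μ) := by
          rw [integral_add (integrable_const _) (by exact hD.add hexp), integral_add hD hexp,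
            integral_const_mul, integral_indicator_const _ hA]
          simp
  linarith

end LocalMass

section

open Set
open scoped Pointwise

section FiniteCoding

variable {Ω β : Type*} [MeasurableSpace Ω] [MeasurableSpace β] [MeasurableSingletonClass β]
  {μ : Measure Ω} {W : Ω → β}

lemma lintegral_inv_measure_fiber_mul_le [Fintype β] (hW : Measurable W) (F : β → ℝ≥0∞) :
    ∫⁻ x, (μ (W ⁻¹' {W x}))⁻¹ * F (W x) ∂μ ≤ ∑ b, F b :=
  calc _ = ∑ b, (μ (W ⁻¹' {b}))⁻¹ * F b * μ (W ⁻¹' {b}) := by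
        rw [← lintegral_map (μ := μ) (f := fun b ↦ (μ (W ⁻¹' {b}))⁻¹ * F b)
          (measurable_of_finite _) hW, lintegral_fintype]
        simp only [Measure.map_apply hW (measurableSet_singleton _)]
    _ = ∑ b, F b * (μ (W ⁻¹' {b}) * (μ (W ⁻¹' {b}))⁻¹) := by
        refine Finset.sum_congr rfl fun b _ ↦ ?_
        ring
    _ ≤ ∑ b, F b := Finset.sum_le_sum fun b _ ↦
        mul_le_of_le_one_right' (ENNReal.mul_inv_le_one _)

omit [MeasurableSingletonClass β] [MeasurableSpace β] in
lemma ae_measure_fiber_ne_zero [Finite β] : ∀ᵐ x ∂μ, μ (W ⁻¹' {W x}) ≠ 0 := by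
  have hnull : ∀ᵐ x ∂μ, ∀ b, μ (W ⁻¹' {b}) = 0 → W x ≠ b := by
    rw [ae_all_iff]
    intro b
    rw [Filter.eventually_imp_distrib_left]
    exact fun h ↦ measure_eq_zero_iff_ae_notMem.mp h
  filter_upwards [hnull] with x hx h0 using hx _ h0 rfl

lemma integrable_log_measureReal_fiber [Finite β] [IsFiniteMeasure μ] (hW : Measurable W) :
    Integrable (fun x ↦ Real.log (μ.real (W ⁻¹' {W x}))) μ :=
  Integrable.comp_measurable
    (Integrable.of_finite (f := fun b ↦ Real.log (μ.real (W ⁻¹' {b}))) (μ := μ.map W)) hW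

lemma integral_log_measureReal_fiber [Fintype β] [IsFiniteMeasure μ] (hW : Measurable W) :
    ∫ x, Real.log (μ.real (W ⁻¹' {W x})) ∂μ = -∑ b, Real.negMulLog (μ.real (W ⁻¹' {b})) := by
  rw [← integral_map (φ := W) hW.aemeasurable (f := fun b ↦ Real.log (μ.real (W ⁻¹' {b})))
    (measurable_of_finite _).aestronglyMeasurable, integral_fintype Integrable.of_finite,
    ← Finset.sum_neg_distrib]
  refine Finset.sum_congr rfl fun b _ ↦ ?_
  rw [map_measureReal_apply hW (measurableSet_singleton b), Real.negMulLog, smul_eq_mul]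
  ring

end FiniteCoding

lemma sum_prod_ite_eq_le {κ : Type*} [Fintype κ] [DecidableEq κ] {n : ℕ} (p : Fin n → κ)
    (θ : ℝ≥0∞) :
    ∑ f : Fin n → κ, ∏ k, (if f k = p k then 1 else θ) ≤ (1 + Fintype.card κ * θ) ^ n := by
  have hletter (k : Fin n) :
      ∑ i, (if i = p k then 1 else θ) ≤ 1 + Fintype.card κ * θ :=
    calc _ ≤ ∑ i, ((if i = p k then 1 else 0) + θ) := by
          refine Finset.sum_le_sum fun i _ ↦ ?_
          split_ifs <;> simp
      _ = _ := by simp [Finset.sum_add_distrib]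
  calc _ = ∏ k, ∑ i, (if i = p k then 1 else θ) := by
        rw [Finset.prod_univ_sum, Fintype.piFinset_univ]
    _ ≤ ∏ _ : Fin n, (1 + Fintype.card κ * θ) := Finset.prod_le_prod' fun k _ ↦ hletter k
    _ = _ := by simp

lemma integral_le_of_lintegral_exp_le {Ω : Type*} [MeasurableSpace Ω] {μ : Measure Ω}
    [IsProbabilityMeasure μ] {φ : Ω → ℝ} (hφ : Integrable φ μ) {c : ℝ}
    (h : ∫⁻ x, ENNReal.ofReal (Real.exp (φ x)) ∂μ ≤ ENNReal.ofReal (Real.exp c)) :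
    ∫ x, φ x ∂μ ≤ c := by
  have hmeas : AEStronglyMeasurable (fun x ↦ Real.exp (φ x)) μ :=
    Real.continuous_exp.comp_aestronglyMeasurable hφ.aestronglyMeasurable
  have hnonneg : 0 ≤ᵐ[μ] fun x ↦ Real.exp (φ x) := .of_forall fun x ↦ (Real.exp_pos _).le
  have hint : Integrable (fun x ↦ Real.exp (φ x)) μ := by
    refine ⟨hmeas, ?_⟩
    rw [hasFiniteIntegral_iff_ofReal hnonneg]
    exact h.trans_lt ofReal_lt_top
  refine Real.exp_le_exp.mp ?_
  calc Real.exp (∫ x, φ x ∂μ) ≤ ∫ x, Real.exp (φ x) ∂μ :=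
        convexOn_exp.map_integral_le Real.continuous_exp.continuousOn isClosed_univ
          (.of_forall fun _ ↦ mem_univ _) hφ hint
    _ ≤ Real.exp c := by
        rw [integral_eq_lintegral_of_nonneg_ae hnonneg hmeas]
        exact ENNReal.toReal_le_of_le_ofReal (Real.exp_pos _).le h

lemma integrable_birkhoffSum {Ω : Type*} [MeasurableSpace Ω] {μ : Measure Ω} {T : Ω → Ω}
    (hT : MeasurePreserving T μ μ) {g : Ω → ℝ} (hg : Integrable g μ) (n : ℕ) :
    Integrable (birkhoffSum T g n) μ :=
  integrable_finsetSum _ fun k _ ↦ (hT.iterate k).integrable_comp_of_integrable hg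

lemma integral_birkhoffSum {Ω : Type*} [MeasurableSpace Ω] {μ : Measure Ω} {T : Ω → Ω}
    (hT : MeasurePreserving T μ μ) {g : Ω → ℝ} (hg : Integrable g μ) (n : ℕ) :
    ∫ x, birkhoffSum T g n x ∂μ = n * ∫ x, g x ∂μ := by
  have hterm (k : ℕ) : ∫ x, g (T^[k] x) ∂μ = ∫ x, g x ∂μ := by
    have hk := hT.iterate k
    rw [← integral_map hk.measurable.aemeasurable (by rw [hk.map_eq]; exact hg.1), hk.map_eq]
  simp only [birkhoffSum]
  rw [integral_finsetSum _ fun k _ ↦ by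
    exact (hT.iterate k).integrable_comp_of_integrable hg]
  simp [hterm]

lemma exp_neg_mul_birkhoffSum_indicator {Ω : Type*} (T : Ω → Ω) (E : Set Ω)
    [DecidablePred (· ∈ E)] (b : ℝ) (n : ℕ) (x : Ω) :
    ENNReal.ofReal (Real.exp (-(b * birkhoffSum T (Eᶜ.indicator 1) n x))) =
      ∏ k : Fin n, (if T^[k] x ∈ E then 1 else ENNReal.ofReal (Real.exp (-b))) := by
  rw [birkhoffSum, Finset.sum_range, Finset.mul_sum, ← Finset.sum_neg_distrib, Real.exp_sum,
    ENNReal.ofReal_prod_of_nonneg fun _ _ ↦ (Real.exp_pos _).le]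
  refine Finset.prod_congr rfl fun k _ ↦ ?_
  by_cases hk : T^[k] x ∈ E <;> simp [hk]

lemma one_add_mul_ofReal_exp_pow_le (m n : ℕ) (b : ℝ) :
    (1 + m * ENNReal.ofReal (Real.exp b)) ^ n ≤
      ENNReal.ofReal (Real.exp (n * (m * Real.exp b))) := by
  rw [Real.exp_nat_mul, ← ENNReal.ofReal_natCast, ← ENNReal.ofReal_mul (by positivity),
    ← ENNReal.ofReal_one, ← ENNReal.ofReal_add zero_le_one (by positivity),
    ← ENNReal.ofReal_pow (by positivity)]
  gcongr
  linarith [Real.add_one_le_exp (m * Real.exp b)]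

section Itinerary

/-- The first `n` symbols of the orbit of `x` under `T`, coded by `c`. -/
def itinerary {Ω κ : Type*} (T : Ω → Ω) (c : Ω → κ) (n : ℕ) (x : Ω) : Fin n → κ :=
  fun k ↦ c (T^[k] x)

lemma measurable_itinerary {Ω κ : Type*} [MeasurableSpace Ω] [MeasurableSpace κ] {T : Ω → Ω}
    (hT : Measurable T) {c : Ω → κ} (hc : Measurable c) (n : ℕ) :
    Measurable (itinerary T c n) :=
  measurable_pi_lambda _ fun k ↦ hc.comp (hT.iterate k)

variable {G κ : Type*} [AddCommGroup G] [MeasurableSpace G] [MeasurableSub₂ G]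
  [Fintype κ] [MeasurableSpace κ] [MeasurableSingletonClass κ]
  {μ : Measure G} [IsProbabilityMeasure μ] {T : G →+ G} {c guess : G → κ} {E U B : Set G} {n : ℕ}
  [DecidablePred (· ∈ E)]

/-- If the symbol of `x ∈ E` can be guessed from any point of `x + U`, then a point `y` guesses the
itineraries of all `x ∈ y - B` up to errors at visits to `Eᶜ`, each of which costs a factor `θ`. -/
lemma lintegral_translateMass_mul_inv_measure_itinerary_le (hT : Measurable T) (hc : Measurable c)
    (hE : MeasurableSet E) (hguess : ∀ x y, x ∈ E → y - x ∈ U → c x = guess y)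
    (hB : MeasurableSet B) (hBU : ∀ b ∈ B, ∀ k < n, T^[k] b ∈ U) {θ : ℝ≥0∞} (hθ : θ ≤ 1) :
    ∫⁻ x, translateMass μ B x * ((μ (itinerary T c n ⁻¹' {itinerary T c n x}))⁻¹ *
      ∏ k : Fin n, (if T^[k] x ∈ E then 1 else θ)) ∂μ ≤ (1 + Fintype.card κ * θ) ^ n := by
  classical
  have hW := measurable_itinerary hT hc n
  have hfiber (y : G) : ∫⁻ x in (y - ·) ⁻¹' B,
      (μ (itinerary T c n ⁻¹' {itinerary T c n x}))⁻¹ *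
        ∏ k : Fin n, (if T^[k] x ∈ E then 1 else θ) ∂μ ≤ (1 + Fintype.card κ * θ) ^ n := by
    have hpenalty (x : G) (hx : x ∈ (y - ·) ⁻¹' B) (k : Fin n) :
        (if T^[k] x ∈ E then 1 else θ) ≤
          if itinerary T c n x k = guess (T^[k] y) then 1 else θ := by
      by_cases hk : T^[k] x ∈ E
      · have hsymbol : itinerary T c n x k = guess (T^[k] y) :=
          hguess _ _ hk (by rw [← iterate_map_sub]; exact hBU _ hx k k.2)
        rw [if_pos hk, if_pos hsymbol]
      · rw [if_neg hk]
        split_ifs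
        exacts [hθ, le_rfl]
    calc _ ≤ ∫⁻ x in (y - ·) ⁻¹' B, (μ (itinerary T c n ⁻¹' {itinerary T c n x}))⁻¹ *
          ∏ k, (if itinerary T c n x k = guess (T^[k] y) then 1 else θ) ∂μ :=
          setLIntegral_mono' (measurable_id.const_sub y hB) fun x hx ↦
            mul_le_mul_right (Finset.prod_le_prod' fun k _ ↦ hpenalty x hx k) _
      _ ≤ ∫⁻ x, (μ (itinerary T c n ⁻¹' {itinerary T c n x}))⁻¹ *
          ∏ k, (if itinerary T c n x k = guess (T^[k] y) then 1 else θ) ∂μ :=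
          setLIntegral_le_lintegral _ _
      _ ≤ ∑ f : Fin n → κ, ∏ k, (if f k = guess (T^[k] y) then 1 else θ) :=
          lintegral_inv_measure_fiber_mul_le hW
            fun f ↦ ∏ k, (if f k = guess (T^[k] y) then 1 else θ)
      _ ≤ _ := sum_prod_ite_eq_le _ _
  rw [lintegral_translateMass_mul hB]
  · simpa using lintegral_mono (μ := μ) hfiber
  · refine ((measurable_of_finite fun f ↦ (μ (itinerary T c n ⁻¹' {f}))⁻¹).comp hW).mul
      (Finset.measurable_prod _ fun k _ ↦ ?_)
    exact Measurable.ite (hT.iterate k hE) measurable_const measurable_const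

omit [DecidablePred (· ∈ E)] in
lemma sum_negMulLog_itinerary_sub_le (hT : MeasurePreserving T μ μ) (hc : Measurable c)
    (hE : MeasurableSet E) (hguess : ∀ x y, x ∈ E → y - x ∈ U → c x = guess y)
    (hB : HasMassBoundedBelow μ B) (hBU : ∀ b ∈ B, ∀ k < n, T^[k] b ∈ U) {b : ℝ} (hb : 0 ≤ b) :
    ∑ f, Real.negMulLog (μ.real (itinerary T c n ⁻¹' {f})) -
      n * (Fintype.card κ * Real.exp (-b) + b * μ.real Eᶜ) ≤ -∫ x, logMass μ B x ∂μ := by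
  classical
  have hW := measurable_itinerary hT.measurable hc n
  set p : G → ℝ := fun x ↦ μ.real (itinerary T c n ⁻¹' {itinerary T c n x})
  set s : G → ℝ := birkhoffSum T (Eᶜ.indicator 1) n
  have hindicator : Integrable (Eᶜ.indicator (1 : G → ℝ)) μ :=
    (integrable_const 1).indicator hE.compl
  have hs : Integrable (fun x ↦ b * s x) μ := (integrable_birkhoffSum hT hindicator n).const_mul b
  have hp : Integrable (fun x ↦ Real.log (p x)) μ := integrable_log_measureReal_fiber hW
  have hmass := hB.integrable_logMass
  have hexp : ∀ᵐ x ∂μ, ENNReal.ofReal (Real.exp (logMass μ B x - Real.log (p x) - b * s x)) =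
      translateMass μ B x * ((μ (itinerary T c n ⁻¹' {itinerary T c n x}))⁻¹ *
        ∏ k : Fin n, (if T^[k] x ∈ E then 1 else ENNReal.ofReal (Real.exp (-b)))) := by
    filter_upwards [hB.ae_pos, ae_measure_fiber_ne_zero (W := itinerary T c n)] with x hx hfiber
    have hpx : 0 < p x := ENNReal.toReal_pos hfiber (measure_ne_top _ _)
    rw [sub_eq_add_neg, Real.exp_add, ENNReal.ofReal_mul (Real.exp_pos _).le,
      exp_neg_mul_birkhoffSum_indicator, Real.exp_sub, Real.exp_log hpx, logMass, Real.exp_log hx,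
      ENNReal.ofReal_div_of_pos hpx, ENNReal.ofReal_toReal (translateMass_ne_top _ _),
      ofReal_measureReal, div_eq_mul_inv, mul_assoc]
  have hjensen := integral_le_of_lintegral_exp_le ((hmass.sub hp).sub hs) <|
    (lintegral_congr_ae hexp).trans_le <|
      (lintegral_translateMass_mul_inv_measure_itinerary_le hT.measurable hc hE hguess
        hB.measurableSet hBU (by simpa using hb)).trans
      (one_add_mul_ofReal_exp_pow_le _ n (-b))
  have hintegral : ∫ x, (logMass μ B x - Real.log (p x) - b * s x) ∂μ = ∫ x, logMass μ B x ∂μ +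
      ∑ f, Real.negMulLog (μ.real (itinerary T c n ⁻¹' {f})) - b * (n * μ.real Eᶜ) := by
    rw [integral_sub (by exact hmass.sub hp) hs, integral_sub hmass hp,
      integral_log_measureReal_fiber hW, integral_const_mul, integral_birkhoffSum hT hindicator,
      integral_indicator_one hE.compl, sub_neg_eq_add]
  rw [Pi.sub_def, Pi.sub_def, hintegral] at hjensen
  linarith

end Itinerary

end

section

open Set Filter Topology

section Coding

variable {Ω : Type*} [MeasurableSpace Ω] {μ : Measure Ω} {T : Ω → Ω}
  {m : ℕ} {P : Fin m → Set Ω}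

lemma exists_measurable_coding [NeZero μ] (hP : IsFinMeasPartition μ P) :
    ∃ c : Ω → Fin m, Measurable c ∧ ∀ i, ∀ x ∈ P i, c x = i := by
  obtain ⟨hmeas, hdisj, hnull⟩ := hP
  have hm : NeZero m := by
    refine ⟨?_⟩
    rintro rfl
    exact NeZero.ne μ (by simpa using hnull)
  obtain ⟨c, hc, hcP⟩ := exists_measurable_piecewise P hmeas (fun i _ ↦ i)
    (fun _ ↦ measurable_const) fun i j hij x hx ↦
      (disjoint_left.mp (hdisj hij) hx.1 hx.2).elim
  exact ⟨c, hc, fun i x hx ↦ hcP i hx⟩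

lemma measure_refinedPartition_eq (hT : MeasurePreserving T μ μ) (hP : IsFinMeasPartition μ P)
    {c : Ω → Fin m} (hc : ∀ i, ∀ x ∈ P i, c x = i) (n : ℕ) (f : Fin n → Fin m) :
    μ (refinedPartition T P n f) = μ (itinerary T c n ⁻¹' {f}) := by
  refine measure_congr ?_
  have hmem : ∀ᵐ x ∂μ, ∀ k : Fin n, T^[k] x ∈ ⋃ i, P i :=
    ae_all_iff.mpr fun k ↦ (hT.iterate k).quasiMeasurePreserving.ae
      (p := fun x ↦ x ∈ ⋃ i, P i) (ae_iff.mpr hP.2.2)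
  filter_upwards [hmem] with x hx
  have hsymbol (k : Fin n) : T^[k] x ∈ P (f k) ↔ c (T^[k] x) = f k := by
    refine ⟨hc _ _, fun h ↦ ?_⟩
    obtain ⟨i, hi⟩ := mem_iUnion.mp (hx k)
    rwa [← h, hc i _ hi]
  refine propext ?_
  change x ∈ refinedPartition T P n f ↔ itinerary T c n x = f
  simp only [refinedPartition, mem_iInter, mem_preimage, hsymbol, itinerary, funext_iff]

lemma exists_coding_of_ksEntropy_pos [IsProbabilityMeasure μ] (hT : MeasurePreserving T μ μ)
    (hent : 0 < ksEntropy T μ) :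
    ∃ (m : ℕ) (c : Ω → Fin m), Measurable c ∧ ∃ h > 0, ∀ n : ℕ,
      h * n ≤ ∑ f, Real.negMulLog (μ.real (itinerary T c n ⁻¹' {f})) := by
  simp only [ksEntropy, lt_iSup_iff] at hent
  obtain ⟨m, P, hP, hpos⟩ := hent
  obtain ⟨h, hh, hlt⟩ := ENNReal.lt_iff_exists_nnreal_btwn.mp hpos
  obtain ⟨c, hc, hcP⟩ := exists_measurable_coding hP
  refine ⟨m, c, hc, h, by exact_mod_cast hh, ?_⟩
  rintro (_ | n)
  · simpa using Real.negMulLog_nonneg measureReal_nonneg measureReal_le_one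
  · have hle : (h : ℝ≥0∞) ≤
        finPartitionEntropy μ (refinedPartition T P (n + 1)) / (n + 1 : ℝ≥0∞) :=
      hlt.le.trans (iInf_le _ n)
    rw [ENNReal.le_div_iff_mul_le (by simp) (by simp), finPartitionEntropy] at hle
    simp only [measure_refinedPartition_eq hT hP hcP] at hle
    have hreal := ENNReal.toReal_mono ENNReal.ofReal_ne_top hle
    rw [ENNReal.toReal_ofReal (Finset.sum_nonneg fun f _ ↦ Real.negMulLog_nonneg toReal_nonneg
      measureReal_le_one)] at hreal
    rwa [ENNReal.toReal_mul, ENNReal.coe_toReal, ← Nat.cast_succ, ENNReal.toReal_natCast] at hreal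

end Coding

section Separation

variable {G κ : Type*} [AddCommGroup G] [TopologicalSpace G] [IsTopologicalAddGroup G] [Finite κ]

open scoped Pointwise

lemma exists_open_guess [T2Space G] [Nonempty κ] {K : κ → Set G} (hK : ∀ i, IsCompact (K i))
    (hdisj : Pairwise (Function.onFun Disjoint K)) :
    ∃ U : Set G, IsOpen U ∧ 0 ∈ U ∧ ∃ guess : G → κ, ∀ i, ∀ x ∈ K i, ∀ y, y - x ∈ U →
      guess y = i := by
  have hseparated : ∀ i j, i ≠ j → (K i - K j)ᶜ ∈ 𝓝 (0 : G) := by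
    intro i j hij
    have hclosed : IsClosed (K i - K j) := by
      simpa only [sub_eq_add_neg] using ((hK i).add (hK j).neg).isClosed
    refine hclosed.isOpen_compl.mem_nhds ?_
    rintro ⟨x, hx, y, hy, hxy⟩
    rw [sub_eq_zero.mp hxy] at hx
    exact disjoint_left.mp (hdisj hij) hx hy
  have hV : ⋂ (i) (j) (_ : i ≠ j), (K i - K j)ᶜ ∈ 𝓝 (0 : G) := by
    simpa only [iInter_mem] using hseparated
  obtain ⟨U, hU, hUV⟩ := exists_nhds_half_neg hV
  have hunique (y : G) : ∃ i, ∀ j, ∀ x ∈ K j, y - x ∈ interior U → i = j := by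
    by_cases hy : ∃ i, ∃ x ∈ K i, y - x ∈ interior U
    · obtain ⟨i, x, hx, hxU⟩ := hy
      refine ⟨i, fun j z hz hzU ↦ ?_⟩
      by_contra hij
      have hzx := hUV _ (interior_subset hzU) _ (interior_subset hxU)
      rw [_root_.sub_sub_sub_cancel_left] at hzx
      simp only [mem_iInter] at hzx
      exact hzx i j hij (sub_mem_sub hx hz)
    · exact ⟨Classical.arbitrary κ, fun j x hx hxU ↦ (hy ⟨j, x, hx, hxU⟩).elim⟩
  choose guess hguess using hunique
  exact ⟨interior U, isOpen_interior, mem_interior_iff_mem_nhds.mpr hU, guess,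
    fun i x hx y ↦ hguess y i x hx⟩

lemma exists_compact_fibers {Ω : Type*} [TopologicalSpace Ω] [T2Space Ω] [MeasurableSpace Ω]
    [OpensMeasurableSpace Ω] {μ : Measure Ω} [IsFiniteMeasure μ] [μ.InnerRegularCompactLTTop]
    [MeasurableSpace κ] [MeasurableSingletonClass κ]
    {c : Ω → κ} (hc : Measurable c) {ε : ℝ} (hε : 0 < ε) :
    ∃ K : κ → Set Ω, (∀ i, IsCompact (K i)) ∧ (∀ i, K i ⊆ c ⁻¹' {i}) ∧
      μ.real (⋃ i, K i)ᶜ ≤ ε := by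
  obtain ⟨δ, hδ, hsum⟩ := ENNReal.exists_pos_sum_of_countable
    (ENNReal.ofReal_pos.mpr hε).ne' κ
  have hK (i : κ) : ∃ K ⊆ c ⁻¹' {i}, IsCompact K ∧ μ (c ⁻¹' {i} \ K) < δ i :=
    (hc (measurableSet_singleton i)).exists_isCompact_sdiff_lt (measure_ne_top _ _)
      (by simpa using (hδ i).ne')
  choose K hKc hKcompact hKμ using hK
  refine ⟨K, hKcompact, hKc, ENNReal.toReal_le_of_le_ofReal hε.le ?_⟩
  have hsub : (⋃ i, K i)ᶜ ⊆ ⋃ i, c ⁻¹' {i} \ K i := fun x hx ↦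
    mem_iUnion.mpr ⟨c x, rfl, fun h ↦ hx (mem_iUnion.mpr ⟨_, h⟩)⟩
  calc μ (⋃ i, K i)ᶜ ≤ ∑' i, μ (c ⁻¹' {i} \ K i) :=
        (measure_mono hsub).trans (measure_iUnion_le _)
    _ ≤ ∑' i, (δ i : ℝ≥0∞) := ENNReal.tsum_le_tsum fun i ↦ (hKμ i).le
    _ ≤ ENNReal.ofReal ε := hsum.le

end Separation

lemma exists_nonneg_mul_exp_neg_le (m : ℝ) {δ : ℝ} (hδ : 0 < δ) :
    ∃ b ≥ 0, m * Real.exp (-b) ≤ δ := by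
  have hlim : Tendsto (fun b ↦ m * Real.exp (-b)) atTop (𝓝 0) := by
    simpa using Real.tendsto_exp_neg_atTop_nhds_zero.const_mul m
  exact ((eventually_ge_atTop 0).and (hlim.eventually_le_const hδ)).exists

lemma exists_mul_le_neg_integral_logMass {G : Type*} [AddCommGroup G] [MeasurableSpace G]
    [MeasurableSub₂ G] [TopologicalSpace G] [IsTopologicalAddGroup G] [T2Space G]
    [OpensMeasurableSpace G] {μ : Measure G} [IsProbabilityMeasure μ]
    [μ.InnerRegularCompactLTTop] {T : G →+ G} (hT : MeasurePreserving T μ μ)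
    (hent : 0 < ksEntropy T μ) :
    ∃ h > 0, ∃ U : Set G, IsOpen U ∧ 0 ∈ U ∧ ∀ (n : ℕ) (B : Set G), HasMassBoundedBelow μ B →
      (∀ b ∈ B, ∀ k < n, T^[k] b ∈ U) → h * n ≤ -∫ x, logMass μ B x ∂μ := by
  obtain ⟨m, c, hc, h, hh, hle⟩ := exists_coding_of_ksEntropy_pos hT hent
  obtain ⟨b, hb, hbm⟩ := exists_nonneg_mul_exp_neg_le m (δ := h / 4) (by positivity)
  obtain ⟨K, hK, hKc, hKμ⟩ :=
    exists_compact_fibers (μ := μ) hc (ε := h / 4 / (b + 1)) (by positivity)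
  have hdisj : Pairwise (Function.onFun Disjoint K) := fun i j hij ↦
    disjoint_left.mpr fun x hi hj ↦ hij ((hKc i hi).symm.trans (hKc j hj))
  have : Nonempty (Fin m) := ⟨c 0⟩
  obtain ⟨U, hU, hU0, guess, hguess⟩ := exists_open_guess hK hdisj
  refine ⟨h / 2, half_pos hh, U, hU, hU0, fun n B hB hBU ↦ ?_⟩
  have hcguess : ∀ x y, x ∈ ⋃ i, K i → y - x ∈ U → c x = guess y := by
    intro x y hx hxy
    obtain ⟨i, hi⟩ := mem_iUnion.mp hx
    rw [hguess i x hi y hxy, hKc i hi]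
  have hentropy := sum_negMulLog_itinerary_sub_le hT hc
    (.iUnion fun i ↦ (hK i).measurableSet) hcguess hB hBU hb
  have herror : b * μ.real (⋃ i, K i)ᶜ ≤ h / 4 :=
    calc _ ≤ (b + 1) * (h / 4 / (b + 1)) := by gcongr; linarith
      _ = h / 4 := by field_simp
  have herrors : n * (Fintype.card (Fin m) * Real.exp (-b) + b * μ.real (⋃ i, K i)ᶜ) ≤
      n * (h / 2) := by
    rw [Fintype.card_fin]
    gcongr
    linarith
  linarith [hle n]

end

section

open Set
open scoped Pointwise

lemma measure_univ_sq_le_lintegral_mul_lintegral_inv {Ω : Type*} [MeasurableSpace Ω]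
    {μ : Measure Ω} {f : Ω → ℝ≥0∞} (hf : AEMeasurable f μ) (h0 : ∀ᵐ x ∂μ, f x ≠ 0)
    (htop : ∀ᵐ x ∂μ, f x ≠ ∞) :
    μ univ ^ 2 ≤ (∫⁻ x, f x ∂μ) * ∫⁻ x, (f x)⁻¹ ∂μ := by
  have hsq (a : ℝ≥0∞) : (a ^ (1 / 2 : ℝ)) ^ (2 : ℝ) = a := by
    rw [← ENNReal.rpow_mul]
    norm_num
  have hsq' (a : ℝ≥0∞) : (a ^ (1 / 2 : ℝ)) ^ 2 = a := by
    rw [← ENNReal.rpow_natCast]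
    exact hsq a
  have hprod : ∀ᵐ x ∂μ, f x ^ (1 / 2 : ℝ) * (f x)⁻¹ ^ (1 / 2 : ℝ) = 1 := by
    filter_upwards [h0, htop] with x hx0 hxtop
    rw [← ENNReal.mul_rpow_of_nonneg _ _ (by norm_num), ENNReal.mul_inv_cancel hx0 hxtop,
      ENNReal.one_rpow]
  have hholder := ENNReal.lintegral_mul_le_Lp_mul_Lq μ Real.HolderConjugate.two_two
    (hf.pow_const (1 / 2 : ℝ)) (hf.inv.pow_const (1 / 2 : ℝ))
  simp only [Pi.mul_apply, hsq, Pi.inv_apply] at hholder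
  rw [lintegral_congr_ae hprod, lintegral_one] at hholder
  calc μ univ ^ 2 ≤ _ := pow_le_pow_left' hholder 2
    _ = _ := by rw [mul_pow, hsq', hsq']

section LocalMeasure

variable {G : Type*} [AddCommGroup G] [MeasurableSpace G] {μ : Measure G} {A B C : Set G}

/-- The restriction of `μ` to the part of `A` in the translate `x + B`, normalized by the mass of
the larger translate `x + C`. Averaged over `x`, these measures are dominated by `μ`. -/
noncomputable def localMeasure (μ : Measure G) (A B C : Set G) (x : G) : Measure G :=
  (translateMass μ C x)⁻¹ • μ.restrict (A ∩ {y | y - x ∈ B})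

lemma localMeasure_le_smul (x : G) : localMeasure μ A B C x ≤ (translateMass μ C x)⁻¹ • μ := by
  unfold localMeasure
  gcongr
  exact Measure.restrict_le_self

lemma localMeasure_univ_le_one (hBC : B ⊆ C) (x : G) : localMeasure μ A B C x univ ≤ 1 :=
  calc _ = (translateMass μ C x)⁻¹ * μ (A ∩ {y | y - x ∈ B}) := by simp [localMeasure]
    _ ≤ (translateMass μ C x)⁻¹ * translateMass μ C x := by
        gcongr
        exact measure_mono fun y hy ↦ hBC hy.2
    _ ≤ 1 := ENNReal.inv_mul_le_one _

variable [MeasurableSub₂ G]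

lemma ae_localMeasure_mem (hA : MeasurableSet A) (hB : MeasurableSet B) (x : G) :
    ∀ᵐ y ∂localMeasure μ A B C x, y ∈ A ∧ y - x ∈ B :=
  Measure.ae_smul_measure (ae_restrict_mem (hA.inter (measurable_id.sub_const x hB))) _

lemma lintegral_translateMass_localMeasure_le (hA : MeasurableSet A) (hB : MeasurableSet B)
    (hBC : B ⊆ C) {E E' : Set G} (hE : E + B ⊆ C) {γ : ℝ≥0∞}
    (hγ : ∀ y ∈ A, translateMass μ E' y ≤ γ * translateMass μ E y) (x : G) :
    ∫⁻ y, translateMass (localMeasure μ A B C x) E' y ∂localMeasure μ A B C x ≤ γ := by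
  have hpoint : ∀ᵐ y ∂localMeasure μ A B C x,
      translateMass (localMeasure μ A B C x) E' y ≤ γ := by
    filter_upwards [ae_localMeasure_mem hA hB x] with y ⟨hyA, hyB⟩
    have hmass : translateMass μ E y ≤ translateMass μ C x := measure_mono fun z hz ↦ by
      simpa using hE (add_mem_add hz hyB)
    calc translateMass (localMeasure μ A B C x) E' y
        ≤ (translateMass μ C x)⁻¹ * translateMass μ E' y := localMeasure_le_smul x _
      _ ≤ (translateMass μ C x)⁻¹ * (γ * translateMass μ C x) := by
          gcongr
          exact (hγ y hyA).trans (by gcongr)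
      _ = γ * ((translateMass μ C x)⁻¹ * translateMass μ C x) := by ring
      _ ≤ γ := mul_le_of_le_one_right' (ENNReal.inv_mul_le_one _)
  calc _ ≤ ∫⁻ _, γ ∂localMeasure μ A B C x := lintegral_mono_ae hpoint
    _ = γ * localMeasure μ A B C x univ := lintegral_const _
    _ ≤ γ := mul_le_of_le_one_right' (localMeasure_univ_le_one hBC x)

lemma lintegral_localMeasure (hB : MeasurableSet B) (f : G → ℝ≥0∞) (x : G) :
    ∫⁻ y, f y ∂localMeasure μ A B C x =
      translateMass ((μ.restrict A).withDensity f) B x * (translateMass μ C x)⁻¹ := by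
  have hBx : MeasurableSet {y | y - x ∈ B} := measurable_id.sub_const x hB
  rw [localMeasure, lintegral_smul_measure, smul_eq_mul, mul_comm,
    translateMass.eq_1 _ B, withDensity_apply _ hBx, Measure.restrict_restrict hBx, inter_comm]

variable [SFinite μ] {f : G → ℝ≥0∞}

lemma measurable_lintegral_localMeasure (hB : MeasurableSet B) (hC : MeasurableSet C) :
    Measurable fun x ↦ ∫⁻ y, f y ∂localMeasure μ A B C x := by
  simp only [lintegral_localMeasure hB]
  exact (measurable_translateMass hB).mul (measurable_translateMass hC).inv

lemma lintegral_lintegral_localMeasure (hB : MeasurableSet B) (hC : MeasurableSet C)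
    (hf : Measurable f) :
    ∫⁻ x, ∫⁻ y, f y ∂localMeasure μ A B C x ∂μ =
      ∫⁻ y in A, (∫⁻ x in (y - ·) ⁻¹' B, (translateMass μ C x)⁻¹ ∂μ) * f y ∂μ := by
  have hinv : Measurable fun x ↦ (translateMass μ C x)⁻¹ := (measurable_translateMass hC).inv
  simp only [lintegral_localMeasure hB]
  rw [lintegral_translateMass_mul hB hinv, lintegral_withDensity_eq_lintegral_mul _ hf]
  · simp only [Pi.mul_apply, mul_comm]
  · have hfiber (y : G) : ∫⁻ x in (y - ·) ⁻¹' B, (translateMass μ C x)⁻¹ ∂μ =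
        ∫⁻ x, {q : G × G | q.1 - q.2 ∈ B}.indicator (fun q ↦ (translateMass μ C q.2)⁻¹) (y, x) ∂μ :=
      (lintegral_indicator (measurable_id.const_sub y hB) _).symm
    simp only [hfiber]
    exact ((hinv.comp measurable_snd).indicator
      (measurable_fst.sub measurable_snd hB)).lintegral_prod_right'

lemma lintegral_lintegral_localMeasure_le (hB : MeasurableSet B) (hC : MeasurableSet C)
    (hBC : B - B ⊆ C) (hf : Measurable f) :
    ∫⁻ x, ∫⁻ y, f y ∂localMeasure μ A B C x ∂μ ≤ ∫⁻ y, f y ∂μ := by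
  rw [lintegral_lintegral_localMeasure hB hC hf]
  refine (setLIntegral_le_lintegral A _).trans (lintegral_mono fun y ↦ mul_le_of_le_one_left' ?_)
  exact lintegral_inv_translateMass_le_one (preimage_const_sub_sub_subset hBC y)

lemma translateMass_mul_inv_le_lintegral_inv (hB : -B = B) (hC : MeasurableSet C) {C' : Set G}
    (hCC' : C + B ⊆ C') (y : G) :
    translateMass μ B y * (translateMass μ C' y)⁻¹ ≤
      ∫⁻ x in (y - ·) ⁻¹' B, (translateMass μ C x)⁻¹ ∂μ := by
  have hfiber : (y - ·) ⁻¹' B = {x | x - y ∈ B} := by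
    ext x
    change y - x ∈ B ↔ x - y ∈ B
    rw [← hB, Set.mem_neg, neg_sub, hB]
  calc _ = ∫⁻ _ in (y - ·) ⁻¹' B, (translateMass μ C' y)⁻¹ ∂μ := by
        rw [setLIntegral_const, mul_comm, hfiber]; rfl
    _ ≤ _ := setLIntegral_mono (measurable_translateMass hC).inv fun x hx ↦
        ENNReal.inv_le_inv.mpr <| measure_mono fun z hz ↦ by
          simpa using hCC' (add_mem_add hz (hfiber.subset hx))

end LocalMeasure

lemma measure_sq_le_lintegral_localMeasure_univ_mul {G : Type*} [AddCommGroup G]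
    [MeasurableSpace G] [MeasurableSub₂ G] {μ : Measure G} [IsProbabilityMeasure μ]
    {A B C C' : Set G} (hB : HasMassBoundedBelow μ B)
    (hC : MeasurableSet C) (hC' : HasMassBoundedBelow μ C') (hBneg : -B = B) (hCC' : C + B ⊆ C')
    {M : ℕ} (hcov : CoveredByTranslates C' B M) :
    μ A ^ 2 ≤ (∫⁻ x, localMeasure μ A B C x univ ∂μ) * M := by
  set ratio : G → ℝ≥0∞ := fun y ↦ translateMass μ B y * (translateMass μ C' y)⁻¹ with hratio
  have hmeas : Measurable ratio :=
    (measurable_translateMass hB.measurableSet).mul (measurable_translateMass hC'.measurableSet).inv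
  have hratio0 : ∀ᵐ y ∂μ, ratio y ≠ 0 := hB.ae_pos.mono fun y hy ↦
    mul_ne_zero (toReal_pos_iff.mp hy).1.ne' (ENNReal.inv_ne_zero.mpr (translateMass_ne_top _ _))
  have hratiotop : ∀ᵐ y ∂μ, ratio y ≠ ∞ := hC'.ae_pos.mono fun y hy ↦
    ENNReal.mul_ne_top (translateMass_ne_top _ _)
      (ENNReal.inv_ne_top.mpr (toReal_pos_iff.mp hy).1.ne')
  have hlower : ∫⁻ y in A, ratio y ∂μ ≤ ∫⁻ x, localMeasure μ A B C x univ ∂μ := by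
    simp only [← lintegral_one]
    rw [lintegral_lintegral_localMeasure hB.measurableSet hC measurable_const]
    simp only [mul_one]
    exact lintegral_mono (translateMass_mul_inv_le_lintegral_inv hBneg hC hCC')
  have hupper : ∫⁻ y in A, (ratio y)⁻¹ ∂μ ≤ M := by
    calc _ ≤ ∫⁻ y, (ratio y)⁻¹ ∂μ := setLIntegral_le_lintegral _ _
      _ = ∫⁻ y, translateMass μ C' y * (translateMass μ B y)⁻¹ ∂μ :=
          lintegral_congr_ae <| hB.ae_pos.mono fun y hy ↦ by
            simp only [hratio]
            rw [ENNReal.mul_inv (.inl (toReal_pos_iff.mp hy).1.ne')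
              (.inl (translateMass_ne_top _ _)), inv_inv, mul_comm]
      _ ≤ M := by
          simpa using hcov.lintegral_mul_inv_le (μ := μ) hC'.measurableSet hB.measurableSet
  have hsq := measure_univ_sq_le_lintegral_mul_lintegral_inv hmeas.aemeasurable
    (ae_restrict_of_ae (s := A) hratio0) (ae_restrict_of_ae hratiotop)
  rw [Measure.restrict_apply_univ] at hsq
  exact hsq.trans (mul_le_mul' hlower hupper)

end

section

open Set
open scoped ComplexConjugate

section Correlation

variable {G ι : Type*} [AddCommGroup G] [MeasurableSpace G] {ν : Measure G}

lemma sq_norm_integral_addChar_eq [SFinite ν] (χ : AddChar G Circle) :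
    ((‖∫ x, (χ x : ℂ) ∂ν‖ ^ 2 : ℝ) : ℂ) = ∫ q, (χ (q.2 - q.1) : ℂ) ∂ν.prod ν := by
  have hχ (q : G × G) : (χ (q.2 - q.1) : ℂ) = conj (χ q.1 : ℂ) * χ q.2 := by
    rw [sub_eq_neg_add, χ.map_add_eq_mul, χ.map_neg_eq_inv, Circle.coe_mul, Circle.coe_inv_eq_conj]
  calc ((‖∫ x, (χ x : ℂ) ∂ν‖ ^ 2 : ℝ) : ℂ)
      = (∫ x, conj (χ x : ℂ) ∂ν) * ∫ x, (χ x : ℂ) ∂ν := by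
        rw [Complex.ofReal_pow, ← Complex.conj_mul', ← integral_conj]
    _ = ∫ q, conj (χ q.1 : ℂ) * χ q.2 ∂ν.prod ν :=
        (integral_prod_mul (fun x ↦ conj (χ x : ℂ)) fun x ↦ (χ x : ℂ)).symm
    _ = _ := integral_congr_ae (.of_forall fun q ↦ (hχ q).symm)

variable [MeasurableSub₂ G] [Fintype ι] {χ : ι → AddChar G Circle} {B : Set G} {ε γ : ℝ}

/- Expanding the squares turns the left-hand side into the integral over `ν × ν` of the exponential
sums evaluated at differences of points. -/
lemma sum_sq_norm_integral_addChar_le [IsFiniteMeasure ν] (hν : ν.real univ ≤ 1)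
    (hχ : ∀ i, Measurable fun x ↦ (χ i x : ℂ)) (hB : MeasurableSet B) (hε : 0 ≤ ε)
    (hsum : ∀ᵐ q ∂ν.prod ν, q.2 - q.1 ∉ B →
      ‖∑ i, (χ i (q.2 - q.1) : ℂ)‖ ≤ Fintype.card ι * ε)
    (hγ : (ν.prod ν).real {q | q.2 - q.1 ∈ B} ≤ γ) :
    ∑ i, ‖∫ x, (χ i x : ℂ) ∂ν‖ ^ 2 ≤ Fintype.card ι * (ε + γ) := by
  set D : Set (G × G) := {q | q.2 - q.1 ∈ B}
  have hint (i : ι) : Integrable (fun q : G × G ↦ (χ i (q.2 - q.1) : ℂ)) (ν.prod ν) :=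
    .of_bound ((hχ i).comp (measurable_snd.sub measurable_fst)).aestronglyMeasurable 1
      (.of_forall fun q ↦ (Circle.norm_coe _).le)
  have hcorr : ((∑ i, ‖∫ x, (χ i x : ℂ) ∂ν‖ ^ 2 : ℝ) : ℂ) =
      ∫ q, ∑ i, (χ i (q.2 - q.1) : ℂ) ∂ν.prod ν := by
    rw [integral_finsetSum _ fun i _ ↦ hint i, Complex.ofReal_sum]
    simp only [sq_norm_integral_addChar_eq]
  have hbound : ∀ᵐ q ∂ν.prod ν, ‖∑ i, (χ i (q.2 - q.1) : ℂ)‖ ≤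
      Fintype.card ι * (ε + D.indicator 1 q) := by
    filter_upwards [hsum] with q hq
    by_cases hqD : q ∈ D
    · calc _ ≤ ∑ i, ‖(χ i (q.2 - q.1) : ℂ)‖ := norm_sum_le _ _
        _ = Fintype.card ι * 1 := by simp [Circle.norm_coe]
        _ ≤ _ := by
          rw [indicator_of_mem hqD, Pi.one_apply]
          gcongr
          linarith
    · simpa [indicator_of_notMem hqD] using hq hqD
  have hDmeas : MeasurableSet D := measurableSet_sub_mem hB
  have hindicator : Integrable (D.indicator (1 : G × G → ℝ)) (ν.prod ν) :=
    (integrable_const (1 : ℝ)).indicator hDmeas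
  calc _ = ‖∫ q, ∑ i, (χ i (q.2 - q.1) : ℂ) ∂ν.prod ν‖ := by
        rw [← hcorr, Complex.norm_real, Real.norm_of_nonneg (by positivity)]
    _ ≤ ∫ q, Fintype.card ι * (ε + D.indicator 1 q) ∂ν.prod ν :=
        norm_integral_le_of_norm_le (((integrable_const ε).add hindicator).const_mul _) hbound
    _ = Fintype.card ι * ((ν.prod ν).real univ * ε + (ν.prod ν).real D) := by
        rw [integral_const_mul, integral_add (integrable_const ε) hindicator,
          integral_indicator_one hDmeas, integral_const, smul_eq_mul]
    _ ≤ Fintype.card ι * (ε + γ) := by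
        gcongr
        refine mul_le_of_le_one_left hε ?_
        rw [← univ_prod_univ, measureReal_prod_prod]
        exact mul_le_one₀ hν measureReal_nonneg hν

lemma norm_sum_integral_addChar_le [IsFiniteMeasure ν] (hν : ν.real univ ≤ 1)
    (hχ : ∀ i, Measurable fun x ↦ (χ i x : ℂ)) (hB : MeasurableSet B) (hε : 0 ≤ ε)
    (hsum : ∀ᵐ q ∂ν.prod ν, q.2 - q.1 ∉ B →
      ‖∑ i, (χ i (q.2 - q.1) : ℂ)‖ ≤ Fintype.card ι * ε)
    (hγ : (ν.prod ν).real {q | q.2 - q.1 ∈ B} ≤ γ) :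
    ‖∑ i, ∫ x, (χ i x : ℂ) ∂ν‖ ≤ Fintype.card ι * √(ε + γ) := by
  have hγ0 : 0 ≤ γ := measureReal_nonneg.trans hγ
  refine (norm_sum_le _ _).trans (le_of_sq_le_sq ?_ (by positivity))
  calc (∑ i, ‖∫ x, (χ i x : ℂ) ∂ν‖) ^ 2
      ≤ Fintype.card ι * ∑ i, ‖∫ x, (χ i x : ℂ) ∂ν‖ ^ 2 := sq_sum_le_card_mul_sum_sq
    _ ≤ Fintype.card ι * (Fintype.card ι * (ε + γ)) := by
        gcongr
        exact sum_sq_norm_integral_addChar_le hν hχ hB hε hsum hγ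
    _ = _ := by rw [mul_pow, Real.sq_sqrt (by positivity)]; ring

lemma card_mul_mul_measureReal_le_sum_integral_add {Ω κ : Type*} [MeasurableSpace Ω]
    {ν : Measure Ω} [IsFiniteMeasure ν] (hν : ν.real univ ≤ 1) {F : ι → Ω → ℝ} {I δ t : ℝ}
    (hF : ∀ i, Integrable (F i) ν) {Ξ : Finset κ} {a : κ → ℂ} {e : κ → ι → Ω → ℂ}
    (he : ∀ k i, Integrable (e k i) ν) (hδ : 0 ≤ δ)
    (happrox : ∀ i x, ‖(F i x : ℂ) - I - ∑ k ∈ Ξ, a k * e k i x‖ ≤ δ)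
    (hsum : ∀ k ∈ Ξ, ‖∑ i, ∫ x, e k i x ∂ν‖ ≤ Fintype.card ι * t) :
    Fintype.card ι * I * ν.real univ ≤
      ∑ i, ∫ x, F i x ∂ν + Fintype.card ι * (δ + (∑ k ∈ Ξ, ‖a k‖) * t) := by
  have hFc (i : ι) : Integrable (fun x ↦ (F i x : ℂ)) ν := (hF i).ofReal
  have hterm (i : ι) (k : κ) : Integrable (fun x ↦ a k * e k i x) ν := (he k i).const_mul _
  have hintegral (i : ι) : ∫ x, ((F i x : ℂ) - I - ∑ k ∈ Ξ, a k * e k i x) ∂ν =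
      ((∫ x, F i x ∂ν : ℝ) : ℂ) - ν.real univ * I - ∑ k ∈ Ξ, a k * ∫ x, e k i x ∂ν := by
    rw [integral_sub (by exact (hFc i).sub (integrable_const _))
        (by exact integrable_finsetSum _ fun k _ ↦ hterm i k),
      integral_sub (hFc i) (integrable_const _), integral_finsetSum _ fun k _ ↦ hterm i k,
      integral_const, integral_complex_ofReal]
    simp only [integral_const_mul, Complex.real_smul]
  have hresidual :
      ‖∑ i, ∫ x, ((F i x : ℂ) - I - ∑ k ∈ Ξ, a k * e k i x) ∂ν‖ ≤ Fintype.card ι * δ := by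
    refine (norm_sum_le_of_le Finset.univ fun i _ ↦ ?_).trans_eq
      (by rw [Finset.sum_const, Finset.card_univ, nsmul_eq_mul])
    exact (norm_integral_le_of_norm_le_const (.of_forall (happrox i))).trans
      (mul_le_of_le_one_right hδ hν)
  have hoscillation : ‖∑ k ∈ Ξ, a k * ∑ i, ∫ x, e k i x ∂ν‖ ≤
      (∑ k ∈ Ξ, ‖a k‖) * (Fintype.card ι * t) := by
    rw [Finset.sum_mul]
    refine norm_sum_le_of_le Ξ fun k hk ↦ ?_
    rw [norm_mul]
    exact mul_le_mul_of_nonneg_left (hsum k hk) (norm_nonneg _)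
  have hdecomp : ((Fintype.card ι * I * ν.real univ - ∑ i, ∫ x, F i x ∂ν : ℝ) : ℂ) =
      -(∑ i, ∫ x, ((F i x : ℂ) - I - ∑ k ∈ Ξ, a k * e k i x) ∂ν +
        ∑ k ∈ Ξ, a k * ∑ i, ∫ x, e k i x ∂ν) := by
    simp only [hintegral, Finset.sum_sub_distrib, Finset.mul_sum]
    rw [Finset.sum_comm (s := Ξ)]
    simp [mul_assoc, mul_comm, mul_left_comm]
  have hnorm := (norm_neg _).trans_le ((norm_add_le _ _).trans (add_le_add hresidual hoscillation))
  rw [← hdecomp, Complex.norm_real] at hnorm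
  linarith [(le_abs_self _).trans hnorm]

end Correlation

section TorusCharacters

variable {ι : Type*} [Fintype ι]

/-- The unitary character of the torus with frequency `ξ`. -/
noncomputable def torusAddChar (ξ : ι → ℤ) : AddChar (UnitAddTorus ι) Circle :=
  AddCircle.toCircle_addChar.compAddMonoidHom (torusChar ξ)

lemma continuous_torusAddChar (ξ : ι → ℤ) : Continuous (torusAddChar ξ) :=
  AddCircle.continuous_toCircle.comp (continuous_torusChar ξ)

@[simp] lemma torusAddChar_zero_apply (x : UnitAddTorus ι) : torusAddChar 0 x = 1 := by
  change AddCircle.toCircle (torusChar 0 x) = 1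
  simp [torusChar_apply]

lemma torusAddChar_torusProj (ξ : ι → ℤ) (w : ι → ℝ) :
    torusAddChar ξ (torusProj w) = Real.fourierChar (phase ξ w) := by
  change AddCircle.toCircle (torusChar ξ (torusProj w)) = _
  rw [torusChar_torusProj, AddCircle.toCircle_apply_mk, Real.fourierChar_apply', div_one]

lemma mFourier_eq_torusAddChar (ξ : ι → ℤ) (x : UnitAddTorus ι) :
    UnitAddTorus.mFourier ξ x = torusAddChar ξ x := by
  have hprod : torusAddChar ξ x = ∏ i, AddCircle.toCircle (ξ i • x i) := by
    change AddCircle.toCircle_addChar.toAddMonoidHom (torusChar ξ x) = _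
    rw [torusChar_apply, map_sum]
    rfl
  exact (map_prod Circle.coeHom _ _).symm.trans (congrArg Circle.coeHom hprod.symm)

instance : IsProbabilityMeasure (volume : Measure UnitAddCircle) :=
  ⟨UnitAddCircle.measure_univ⟩

lemma integral_torusAddChar_of_ne_zero {ξ : ι → ℤ} (hξ : ξ ≠ 0) :
    ∫ x, (torusAddChar ξ x : ℂ) = 0 := by
  obtain ⟨y, hy⟩ := torusChar_surjective hξ ((1 / 2 : ℝ) : UnitAddCircle)
  have hneg : (torusAddChar ξ y : ℂ) = -1 := by
    change (AddCircle.toCircle (torusChar ξ y) : ℂ) = -1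
    rw [hy, AddCircle.toCircle_apply_mk, ← Complex.exp_pi_mul_I, Circle.coe_exp]
    congr 1
    push_cast
    ring
  refine integral_eq_zero_of_add_right_eq_neg (g := y) fun x ↦ ?_
  rw [AddChar.map_add_eq_mul, Circle.coe_mul, hneg, mul_neg_one]

lemma exists_norm_sub_sum_torusAddChar_le (f : C(UnitAddTorus ι, ℂ)) {δ : ℝ} (hδ : 0 < δ) :
    ∃ c : (ι → ℤ) →₀ ℂ, ∀ x, ‖f x - ∑ ξ ∈ c.support, c ξ * torusAddChar ξ x‖ ≤ δ := by
  have hf : f ∈ (Submodule.span ℂ (range (UnitAddTorus.mFourier (d := ι)))).topologicalClosure := by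
    rw [UnitAddTorus.span_mFourier_closure_eq_top]
    trivial
  obtain ⟨p, hp, hfp⟩ := Metric.mem_closure_iff.mp hf δ hδ
  obtain ⟨c, rfl⟩ := Finsupp.mem_span_range_iff_exists_finsupp.mp hp
  refine ⟨c, fun x ↦ ?_⟩
  have hx := (ContinuousMap.norm_coe_le_norm _ x).trans (dist_eq_norm f _ ▸ hfp.le)
  simpa [Finsupp.sum, mFourier_eq_torusAddChar] using hx

lemma integral_sum_torusAddChar (c : (ι → ℤ) →₀ ℂ) :
    ∫ x, ∑ ξ ∈ c.support, c ξ * torusAddChar ξ x = c 0 := by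
  classical
  have hint (ξ : ι → ℤ) : Integrable fun x ↦ (torusAddChar ξ x : ℂ) :=
    (continuous_subtype_val.comp (continuous_torusAddChar ξ)).integrable_of_hasCompactSupport
      (.of_compactSpace _)
  have hvalue (ξ : ι → ℤ) : ∫ x, (torusAddChar ξ x : ℂ) = if ξ = 0 then 1 else 0 := by
    split_ifs with hξ
    · simp [hξ]
    · exact integral_torusAddChar_of_ne_zero hξ
  rw [integral_finsetSum _ fun ξ _ ↦ (hint ξ).const_mul _]
  simp only [integral_const_mul, hvalue, mul_ite, mul_one, mul_zero, Finset.sum_ite_eq',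
    Finsupp.mem_support_iff, ite_not]
  exact ite_eq_right_iff.mpr Eq.symm

lemma exists_trig_approx (f : C(UnitAddTorus ι, ℝ)) {δ : ℝ} (hδ : 0 < δ) :
    ∃ (Ξ : Finset (ι → ℤ)) (a : (ι → ℤ) → ℂ), (∀ ξ ∈ Ξ, ξ ≠ 0) ∧
      ∀ x, ‖(f x : ℂ) - (∫ y, f y : ℝ) - ∑ ξ ∈ Ξ, a ξ * torusAddChar ξ x‖ ≤ δ := by
  classical
  obtain ⟨c, hc⟩ := exists_norm_sub_sum_torusAddChar_le
    (⟨fun x ↦ (f x : ℂ), by fun_prop⟩ : C(UnitAddTorus ι, ℂ)) (half_pos hδ)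
  simp only [ContinuousMap.coe_mk] at hc
  have hsum (x : UnitAddTorus ι) : ∑ ξ ∈ c.support, c ξ * torusAddChar ξ x =
      c 0 + ∑ ξ ∈ c.support.erase 0, c ξ * torusAddChar ξ x := by
    by_cases h0 : 0 ∈ c.support
    · rw [← Finset.add_sum_erase _ _ h0]
      simp
    · rw [Finset.erase_eq_of_notMem h0, Finsupp.notMem_support_iff.mp h0, zero_add]
  have hmean : ‖((∫ y, f y : ℝ) : ℂ) - c 0‖ ≤ δ / 2 := by
    rw [← integral_sum_torusAddChar, ← integral_complex_ofReal, ← integral_sub]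
    · simpa using norm_integral_le_of_norm_le_const (μ := volume) (.of_forall hc)
    · exact Continuous.integrable_of_hasCompactSupport (by fun_prop) (.of_compactSpace _)
    · refine Continuous.integrable_of_hasCompactSupport ?_ (.of_compactSpace _)
      exact continuous_finsetSum _ fun ξ _ ↦
        continuous_const.mul (continuous_subtype_val.comp (continuous_torusAddChar ξ))
  refine ⟨c.support.erase 0, c, fun ξ hξ ↦ Finset.ne_of_mem_erase hξ, fun x ↦ ?_⟩
  calc _ = ‖((f x : ℂ) - ∑ ξ ∈ c.support, c ξ * torusAddChar ξ x) -
        ((∫ y, f y : ℝ) - c 0)‖ := by rw [hsum]; ring_nf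
    _ ≤ δ / 2 + δ / 2 := (norm_sub_le _ _).trans (add_le_add (hc x) hmean)
    _ = δ := add_halves δ

end TorusCharacters

end

section

open Set
open scoped Pointwise

section Coverings

variable {G H κ : Type*} [AddCommGroup G] [AddCommGroup H] {B B' S : Set G} {n : ℕ}

lemma CoveredByTranslates.of_labelling {label : G → κ} {Λ : Finset κ} (hlabel : MapsTo label B Λ)
    (hS : ∀ b ∈ B, ∀ b' ∈ B, label b = label b' → b - b' ∈ S) (hSB : S - S ⊆ B') :
    CoveredByTranslates B B' Λ.card := by
  classical
  refine ⟨Λ.image (Function.invFunOn label B), Finset.card_image_le, S, fun b hb ↦ ?_, hSB⟩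
  have hex : ∃ b' ∈ B, label b' = label b := ⟨b, hb, rfl⟩
  refine mem_add.mpr ⟨Function.invFunOn label B (label b),
    Finset.mem_image_of_mem _ (hlabel hb), b - Function.invFunOn label B (label b),
    hS b hb _ (Function.invFunOn_mem hex) (Function.invFunOn_eq hex).symm, ?_⟩
  rw [add_sub_cancel]

lemma CoveredByTranslates.image (φ : G →+ H) (h : CoveredByTranslates B B' n) :
    CoveredByTranslates (φ '' B) (φ '' B') n := by
  classical
  obtain ⟨F, hF, S, hBS, hSB⟩ := h
  refine ⟨F.image φ, Finset.card_image_le.trans hF, φ '' S, ?_, ?_⟩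
  · rw [Finset.coe_image, ← image_add]
    exact image_mono hBS
  · rw [← image_sub]
    exact image_mono hSB

lemma floor_mem_Icc_neg_of_abs_lt {t : ℝ} {M : ℕ} (ht : |t| < M) :
    ⌊t⌋ ∈ Finset.Icc (-M : ℤ) M := by
  obtain ⟨hlower, hupper⟩ := abs_lt.mp ht
  rw [Finset.mem_Icc, Int.le_floor]
  refine ⟨by exact_mod_cast hlower.le, ?_⟩
  exact_mod_cast (Int.floor_le t).trans hupper.le

/- The cells are the squares of side `1/4`. -/
lemma exists_complex_labelling {T : ℝ} (hT : 0 ≤ T) :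
    ∃ (cell : ℂ → ℤ × ℤ) (Λ : Finset (ℤ × ℤ)), (∀ z, ‖z‖ < Real.exp T → cell z ∈ Λ) ∧
      (∀ z z', cell z = cell z' → ‖z - z'‖ < 1 / 2) ∧ (Λ.card : ℝ) ≤ Real.exp (T + 3) ^ 2 := by
  set M : ℕ := ⌈4 * Real.exp T⌉₊
  have hM : 4 * Real.exp T ≤ M := Nat.le_ceil _
  have hclose {t t' : ℝ} (h : ⌊4 * t⌋ = ⌊4 * t'⌋) : |t - t'| < 1 / 4 := by
    have := Int.abs_sub_lt_one_of_floor_eq_floor h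
    rw [← mul_sub, abs_mul, abs_of_pos four_pos] at this
    linarith
  have hmem {t : ℝ} (ht : |t| < Real.exp T) : ⌊4 * t⌋ ∈ Finset.Icc (-M : ℤ) M := by
    apply floor_mem_Icc_neg_of_abs_lt
    rw [abs_mul, abs_of_pos four_pos]
    linarith
  have hcard : (2 * M + 1 : ℝ) ≤ Real.exp (T + 3) := by
    have hM' : (M : ℝ) < 4 * Real.exp T + 1 := Nat.ceil_lt_add_one (by positivity)
    have hexp3 : (11 : ℝ) ≤ Real.exp 3 := by
      calc (11 : ℝ) ≤ 2.7 ^ 3 := by norm_num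
        _ ≤ Real.exp 1 ^ 3 := by gcongr; linarith [Real.exp_one_gt_d9]
        _ = Real.exp 3 := by rw [← Real.exp_nat_mul]; norm_num
    rw [Real.exp_add]
    nlinarith [Real.one_le_exp hT]
  refine ⟨fun z ↦ (⌊4 * z.re⌋, ⌊4 * z.im⌋), Finset.Icc (-M : ℤ) M ×ˢ Finset.Icc (-M : ℤ) M,
    fun z hz ↦ Finset.mem_product.mpr ⟨hmem ((Complex.abs_re_le_norm z).trans_lt hz),
      hmem ((Complex.abs_im_le_norm z).trans_lt hz)⟩, fun z z' hcell ↦ ?_, ?_⟩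
  · obtain ⟨hre, him⟩ := Prod.mk.inj hcell
    refine (Complex.norm_le_abs_re_add_abs_im _).trans_lt ?_
    rw [Complex.sub_re, Complex.sub_im]
    linarith [hclose hre, hclose him]
  · have : (Finset.Icc (-M : ℤ) M).card = 2 * M + 1 := by
      rw [Int.card_Icc]
      lia
    rw [Finset.card_product, this, ← sq]
    push_cast
    gcongr

end Coverings

section Boxes

variable {ι κ : Type*} (f : κ → (ι → ℝ) →ₗ[ℝ] ℂ) {r r' q : κ → ℝ}

/-- The image in the torus of the box with half-widths `r` in the coordinates `f`. -/
def torusBox (r : κ → ℝ) : Set (UnitAddTorus ι) :=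
  torusProj '' {w | ∀ j, ‖f j w‖ < r j}

lemma neg_torusBox (r : κ → ℝ) : -torusBox f r = torusBox f r := by
  rw [torusBox, ← image_neg_eq_neg, image_image]
  simp_rw [← map_neg]
  rw [← image_image torusProj, image_neg_eq_neg]
  congr 1
  ext w
  simp

lemma torusBox_add_subset (h : ∀ j, r j + r' j ≤ q j) :
    torusBox f r + torusBox f r' ⊆ torusBox f q := by
  rw [torusBox, torusBox, ← image_add]
  refine image_mono (add_subset_iff.mpr fun w hw w' hw' j ↦ ?_)
  rw [map_add]
  exact (norm_add_le _ _).trans_lt ((add_lt_add (hw j) (hw' j)).trans_le (h j))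

lemma torusBox_sub_subset (h : ∀ j, r j + r' j ≤ q j) :
    torusBox f r - torusBox f r' ⊆ torusBox f q := by
  rw [sub_eq_add_neg, neg_torusBox]
  exact torusBox_add_subset f h

lemma torusBox_mono (h : r ≤ q) : torusBox f r ⊆ torusBox f q :=
  image_mono fun _ hw j ↦ (hw j).trans_le (h j)

lemma isOpen_torusBox [Finite ι] [Finite κ] (r : κ → ℝ) : IsOpen (torusBox f r) := by
  have hopen : IsOpenMap (torusProj (ι := ι)) :=
    .piMap (fun _ ↦ QuotientAddGroup.isOpenMap_coe)
      (.of_forall fun _ ↦ QuotientAddGroup.mk_surjective)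
  refine hopen _ ?_
  simp only [ofPred_forall]
  exact isOpen_iInter_of_finite fun j ↦
    isOpen_lt (f j).continuous_of_finiteDimensional.norm continuous_const

lemma measurableSet_torusBox [Finite ι] [Finite κ] (r : κ → ℝ) : MeasurableSet (torusBox f r) :=
  (isOpen_torusBox f r).measurableSet

lemma exists_coveredByTranslates_torusBox [Fintype κ] {T : ℝ} (hr : ∀ j, 0 < r j) (hT : 0 ≤ T)
    (h : ∀ j, q j ≤ Real.exp T * r j) :
    ∃ n : ℕ, CoveredByTranslates (torusBox f q) (torusBox f r) n ∧
      (n : ℝ) ≤ Real.exp (2 * Fintype.card κ * (T + 3)) := by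
  classical
  obtain ⟨cell, Λ, hΛ, hcell, hcard⟩ := exists_complex_labelling hT
  have hscaled (j : κ) (w : ι → ℝ) : ‖f j w / r j‖ = ‖f j w‖ / r j := by
    rw [norm_div, Complex.norm_real, Real.norm_of_nonneg (hr j).le]
  refine ⟨_, CoveredByTranslates.image torusProj <|
    .of_labelling (label := fun w j ↦ cell (f j w / r j)) (Λ := Fintype.piFinset fun _ ↦ Λ)
      (S := {w | ∀ j, ‖f j w‖ < r j / 2}) (fun w hw ↦ ?_) (fun w _ w' _ heq j ↦ ?_) ?_, ?_⟩
  · refine Fintype.mem_piFinset.mpr fun j ↦ hΛ _ ?_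
    rw [hscaled, div_lt_iff₀ (hr j)]
    exact (hw j).trans_le (h j)
  · have := hcell _ _ (congrFun heq j)
    rw [← sub_div, ← map_sub, hscaled, div_lt_iff₀ (hr j)] at this
    linarith
  · refine sub_subset_iff.mpr fun w hw w' hw' j ↦ ?_
    rw [map_sub]
    linarith [norm_sub_le (f j w) (f j w'), hw j, hw' j]
  · rw [Fintype.card_piFinset, Finset.prod_const, Finset.card_univ, Nat.cast_pow]
    refine (pow_le_pow_left₀ (Nat.cast_nonneg _) hcard _).trans_eq ?_
    rw [← pow_mul, ← Real.exp_nat_mul]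
    push_cast
    rfl

lemma exists_torusProj_eq_norm_le_one [Fintype ι] (x : UnitAddTorus ι) :
    ∃ w, ‖w‖ ≤ 1 ∧ torusProj w = x := by
  have hcoord (i : ι) : ∃ t ∈ Ico (0 : ℝ) (0 + 1), (t : UnitAddCircle) = x i := by
    have : x i ∈ ((↑) : ℝ → UnitAddCircle) '' Ico 0 (0 + 1) :=
      AddCircle.coe_image_Ico_eq (1 : ℝ) 0 ▸ mem_univ _
    exact this
  choose w hw hwx using hcoord
  refine ⟨w, (pi_norm_le_iff_of_nonneg zero_le_one).mpr fun i ↦ ?_, funext hwx⟩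
  rw [Real.norm_of_nonneg (hw i).1]
  linarith [(hw i).2]

lemma exists_torusBox_const_eq_univ [Finite ι] [Finite κ] :
    ∃ C : ℝ, torusBox f (fun _ ↦ C) = univ := by
  have := Fintype.ofFinite ι
  obtain ⟨C, hC, hf⟩ := exists_norm_linearMap_le f
  refine ⟨C + 1, eq_univ_of_forall fun x ↦ ?_⟩
  obtain ⟨w, hw, rfl⟩ := exists_torusProj_eq_norm_le_one x
  exact ⟨w, fun j ↦ by nlinarith [hf j w], rfl⟩

lemma hasMassBoundedBelow_torusBox [Finite ι] [Finite κ] (μ : Measure (UnitAddTorus ι))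
    [IsProbabilityMeasure μ] (hr : ∀ j, 0 < r j) : HasMassBoundedBelow μ (torusBox f r) := by
  have := Fintype.ofFinite κ
  obtain ⟨C, hC⟩ := exists_torusBox_const_eq_univ f
  obtain ⟨a, ha, hra⟩ := exists_pos_forall_le hr
  set T := max 0 (Real.log (max C 1 / a))
  have hT (j : κ) : C ≤ Real.exp T * r j := by
    calc C ≤ max C 1 / a * a := by rw [div_mul_cancel₀ _ ha.ne']; exact le_max_left _ _
      _ = Real.exp (Real.log (max C 1 / a)) * a := by rw [Real.exp_log (by positivity)]
      _ ≤ _ := by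
        gcongr
        exacts [le_max_right _ _, hra j]
  obtain ⟨n, hn, -⟩ := exists_coveredByTranslates_torusBox f hr (le_max_left _ _) hT
  rw [hC] at hn
  exact hn.hasMassBoundedBelow (measurableSet_torusBox f r)

lemma exists_mem_of_forall_norm_le [Finite ι] [Finite κ] (hf : ∀ w, (∀ j, f j w = 0) → w = 0)
    {U : Set (UnitAddTorus ι)} (hU : IsOpen U) (h0 : 0 ∈ U) :
    ∃ δ > 0, ∀ w, (∀ j, ‖f j w‖ ≤ δ) → torusProj w ∈ U := by
  have := Fintype.ofFinite ι
  have hnhds : torusProj ⁻¹' U ∈ nhds (0 : ι → ℝ) :=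
    (hU.preimage continuous_torusProj).mem_nhds (by rwa [mem_preimage, map_zero])
  obtain ⟨ε, hε, hball⟩ := Metric.mem_nhds_iff.mp hnhds
  obtain ⟨C, hC, hnorm⟩ := exists_norm_le_of_separating f hf
  refine ⟨ε / (2 * C), by positivity, fun w hw ↦ hball (mem_ball_zero_iff.mpr ?_)⟩
  calc ‖w‖ ≤ C * (ε / (2 * C)) := hnorm w _ (by positivity) hw
    _ = ε / 2 := by field_simp
    _ < ε := half_lt_self hε

end Boxes

end

section

open Set

section AbsoluteContinuity

variable {X : Type*} [TopologicalSpace X] [CompactSpace X] [T2Space X] [MeasurableSpace X]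
  [BorelSpace X] {μ ν : Measure X} {c : ℝ≥0∞}

lemma mul_measure_le_of_forall_continuousMap [IsFiniteMeasure ν] [ν.Regular]
    (h : ∀ f : C(X, ℝ), 0 ≤ f →
      c * ENNReal.ofReal (∫ x, f x ∂ν) ≤ ∫⁻ x, ENNReal.ofReal (f x) ∂μ)
    {U : Set X} (hU : IsOpen U) : c * ν U ≤ μ U := by
  rw [hU.measure_eq_iSup_isCompact]
  simp only [ENNReal.mul_iSup]
  refine iSup₂_le fun K hKU ↦ iSup_le fun hK ↦ ?_
  obtain ⟨f, hf0, hf1, hf⟩ := exists_continuous_zero_one_of_isClosed hU.isClosed_compl hK.isClosed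
    (disjoint_compl_left_iff_subset.mpr hKU)
  have hK_le : ν K ≤ ENNReal.ofReal (∫ x, f x ∂ν) := by
    rw [ofReal_integral_eq_lintegral_ofReal (f.continuous.integrable_of_hasCompactSupport
      (.of_compactSpace _)) (.of_forall fun x ↦ (hf x).1),
      ← lintegral_indicator_one hK.measurableSet]
    refine lintegral_mono fun x ↦ ?_
    by_cases hx : x ∈ K
    · simp [hx, hf1 hx]
    · simp [hx]
  have hU_ge : ∫⁻ x, ENNReal.ofReal (f x) ∂μ ≤ μ U := by
    rw [← lintegral_indicator_one hU.measurableSet]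
    refine lintegral_mono fun x ↦ ?_
    by_cases hx : x ∈ U
    · simpa [hx] using (hf x).2
    · simp [hx, hf0 hx]
  calc c * ν K ≤ c * ENNReal.ofReal (∫ x, f x ∂ν) := by gcongr
    _ ≤ ∫⁻ x, ENNReal.ofReal (f x) ∂μ := h f fun x ↦ (hf x).1
    _ ≤ μ U := hU_ge

lemma absolutelyContinuous_of_forall_continuousMap [IsFiniteMeasure ν] [ν.Regular]
    [μ.OuterRegular] (hc : c ≠ 0) (h : ∀ f : C(X, ℝ), 0 ≤ f →
      c * ENNReal.ofReal (∫ x, f x ∂ν) ≤ ∫⁻ x, ENNReal.ofReal (f x) ∂μ) : ν ≪ μ := by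
  intro A hA
  by_contra hne
  obtain ⟨U, hAU, hU, hlt⟩ := A.exists_isOpen_lt_of_lt (μ := μ) (c * ν A)
    (hA.trans_lt (ENNReal.mul_pos hc hne))
  refine hlt.not_ge ?_
  calc c * ν A ≤ c * ν U := by gcongr
    _ ≤ μ U := mul_measure_le_of_forall_continuousMap h hU

end AbsoluteContinuity

section Rigidity

variable {V X : Type*} [AddGroup V] [Countable V] [MeasurableSpace X] {μ ν : Measure X}
  [IsProbabilityMeasure μ] {T : V → X → X}

lemma ae_eq_const_of_forall_comp_ae_eq (hT : ∀ v, Measurable (T v))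
    (hadd : ∀ v w x, T v (T w x) = T (v + w) x)
    (herg : ∀ A, MeasurableSet A → (∀ v, T v ⁻¹' A = A) → μ A = 0 ∨ μ A = 1)
    {f : X → ℝ≥0∞} (hf : Measurable f) (hinv : ∀ v, f ∘ T v =ᵐ[μ] f) :
    ∃ a, f =ᵐ[μ] fun _ ↦ a := by
  -- The supremum over the orbit is a version of `f` that is invariant everywhere.
  set F : X → ℝ≥0∞ := fun x ↦ ⨆ v, f (T v x)
  have hF : Measurable F := .iSup fun v ↦ hf.comp (hT v)
  have hFf : F =ᵐ[μ] f := by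
    filter_upwards [ae_all_iff.mpr hinv] with x hx
    exact (iSup_congr hx).trans ciSup_const
  have hFT (w : V) (x : X) : F (T w x) = F x := by
    simp only [F, hadd]
    exact (Equiv.addRight w).iSup_comp (g := fun v ↦ f (T v x))
  have hsep (U : Set ℝ≥0∞) (hU : MeasurableSet U) :
      (∀ᵐ x ∂μ, F x ∈ U) ∨ ∀ᵐ x ∂μ, F x ∉ U := by
    refine (herg (F ⁻¹' U) (hF hU) fun v ↦ ?_).symm.imp (fun h ↦ ?_) fun h ↦ ?_
    · ext x
      simp only [mem_preimage, hFT]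
    · exact (mem_ae_iff_prob_eq_one (hF hU)).mpr h
    · exact measure_eq_zero_iff_ae_notMem.mp h
  obtain ⟨a, ha⟩ := Filter.exists_eventuallyEq_const_of_forall_separating MeasurableSet hsep
  exact ⟨a, hFf.symm.trans ha⟩

lemma eq_of_absolutelyContinuous_of_invariant [IsProbabilityMeasure ν]
    (hμ : ∀ v, MeasurePreserving (T v) μ μ) (hν : ∀ v, MeasurePreserving (T v) ν ν)
    (hadd : ∀ v w x, T v (T w x) = T (v + w) x)
    (herg : ∀ A, MeasurableSet A → (∀ v, T v ⁻¹' A = A) → μ A = 0 ∨ μ A = 1)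
    (hνμ : ν ≪ μ) : μ = ν := by
  obtain ⟨a, ha⟩ := ae_eq_const_of_forall_comp_ae_eq (fun v ↦ (hμ v).measurable) hadd herg
    (Measure.measurable_rnDeriv ν μ) fun v ↦ (hν v).rnDeriv_comp_aeEq (hμ v)
  have hνa : ν = a • μ := by
    rw [← Measure.withDensity_rnDeriv_eq ν μ hνμ, withDensity_congr_ae ha, withDensity_const]
  have ha1 : a = 1 := by simpa using (congrArg (· univ) hνa).symm
  rw [hνa, ha1, one_smul]

end Rigidity

section ToralActions

variable {V : Type*} [AddCommGroup V] {N : ℕ} (α : AddChar V (Matrix (Fin N) (Fin N) ℤ))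

lemma toralMap_toralMap_addChar (v w : V) (x : UnitAddTorus (Fin N)) :
    toralMap (α v) (toralMap (α w) x) = toralMap (α (v + w)) x := by
  rw [α.map_add_eq_mul, toralMap_mul]

lemma measurePreserving_toralMap_volume (v : V) :
    MeasurePreserving (toralMap (α v)) volume volume := by
  refine (AddMonoidHom.ofMapSub (toralMap (α v)) (toralMap_sub _)).measurePreserving
    (continuous_toralMap _) (fun x ↦ ⟨toralMap (α (-v)) x, ?_⟩) rfl
  change toralMap (α v) (toralMap (α (-v)) x) = x
  rw [toralMap_toralMap_addChar, add_neg_cancel, α.map_zero_eq_one, toralMap_one]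

end ToralActions

end

section

open Matrix

section Pigeonhole

lemma exists_div_card_le_insert_sub {ι : Type*} [Fintype ι] [Nonempty ι] [DecidableEq ι]
    (f : Finset ι → ℝ) :
    ∃ S r, (f Finset.univ - f ∅) / Fintype.card ι ≤ f (insert r S) - f S := by
  set c := (f Finset.univ - f ∅) / Fintype.card ι with hc
  by_contra! hstep
  have hlt (S : Finset ι) (hS : S.Nonempty) : f S - f ∅ < S.card * c := by
    induction hS using Finset.Nonempty.cons_induction with
    | singleton r => simpa using hstep ∅ r
    | cons r S hr _ ih =>
      rw [Finset.card_cons, Finset.cons_eq_insert]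
      push_cast
      linarith [hstep S r]
  refine (hlt Finset.univ Finset.univ_nonempty).ne ?_
  rw [hc, Finset.card_univ, mul_div_cancel₀ _ (by positivity)]

lemma exists_mul_le_sub_of_linear_growth {φ : ℝ → ℝ} {R₀ h h' l : ℝ}
    (hφ : ∀ R ≥ R₀, h * R ≤ φ R) (hh : h' < h) (hl : 0 < l) (s₀ : ℝ) :
    ∃ s ≥ s₀, h' * l ≤ φ (s + l) - φ s := by
  by_contra! hstep
  have hle (k : ℕ) : φ (s₀ + k * l) ≤ φ s₀ + k * (h' * l) := by
    induction k with
    | zero => simp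
    | succ k ih =>
      have hk := hstep (s₀ + k * l) (by nlinarith [k.cast_nonneg (α := ℝ)])
      push_cast
      rw [add_one_mul, ← add_assoc]
      linarith
  obtain ⟨k, hk⟩ := exists_nat_gt (max ((R₀ - s₀) / l) ((φ s₀ - h * s₀) / ((h - h') * l)))
  obtain ⟨hk_large, hk_contra⟩ := max_lt_iff.1 hk
  rw [div_lt_iff₀ hl] at hk_large
  rw [div_lt_iff₀ (mul_pos (sub_pos.2 hh) hl)] at hk_contra
  linarith [hφ (s₀ + k * l) (by linarith), hle k]

end Pigeonhole

lemma exists_pos_forall_le_of_pos {ι : Type*} [Finite ι] (f : ι → ℝ) :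
    ∃ a > 0, ∀ i, 0 < f i → a ≤ f i := by
  obtain ⟨a, ha, hle⟩ := exists_pos_forall_le fun i : {i // 0 < f i} ↦ i.2
  exact ⟨a, ha, fun i hi ↦ hle ⟨i, hi⟩⟩

lemma exists_nat_mul_le_half {L R : ℝ} (hL : 0 < L) (hR : 4 * L ≤ R) :
    ∃ n : ℕ, n * L ≤ R / 2 ∧ R / (4 * L) ≤ n := by
  have hfloor := Nat.floor_le (a := R / (2 * L)) (div_nonneg (by linarith) (by positivity))
  have hlt := Nat.lt_floor_add_one (R / (2 * L))
  have hone : 1 ≤ R / (4 * L) := (one_le_div (by positivity)).2 hR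
  have htwo : R / (2 * L) = R / (4 * L) + R / (4 * L) := by
    field_simp
    ring
  refine ⟨⌊R / (2 * L)⌋₊, ?_, by linarith⟩
  calc (⌊R / (2 * L)⌋₊ : ℝ) * L ≤ R / (2 * L) * L := by gcongr
    _ = R / 2 := by field_simp

lemma mul_exp_le_of_log_le {x y c : ℝ} (hx : 0 < x) (hy : 0 < y) (hc : c ≤ -Real.log (x / y)) :
    x * Real.exp c ≤ y := by
  calc x * Real.exp c ≤ x * Real.exp (-Real.log (x / y)) := by gcongr
    _ = y := by
        rw [Real.exp_neg, Real.exp_log (by positivity)]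
        field_simp

lemma toralMap_iterate_torusProj {V : Type*} [AddCommGroup V] {N : ℕ}
    (α : AddChar V (Matrix (Fin N) (Fin N) ℤ)) (v : V) (k : ℕ) (w : Fin N → ℝ) :
    (toralMap (α v))^[k] (torusProj w) = torusProj (castMatrix ℝ (α (k • v)) *ᵥ w) := by
  induction k with
  | zero => simp
  | succ k ih =>
    rw [Function.iterate_succ_apply', ih, toralMap_torusProj, mulVec_mulVec, ← map_mul,
      ← α.map_add_eq_mul, succ_nsmul']

namespace Eigenforms

variable {d N : ℕ} {α : AddChar (Fin d → ℤ) (Matrix (Fin N) (Fin N) ℤ)} (E : Eigenforms α)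
  {X η : ℝ}

open Classical in
/-- The radii of a box that has size `η` in the directions with vanishing Lyapunov exponent, and in
every other direction `j` has been contracted from size `X` by flowing for time `s j` against the
Lyapunov exponent. -/
noncomputable def boxRadius (X η : ℝ) (s : Fin N → ℝ) (j : Fin N) : ℝ :=
  if E.lyapunov j = 0 then η else X * Real.exp (-(s j * ‖E.lyapunov j‖))

variable {E}

lemma boxRadius_of_eq_zero {j : Fin N} (hj : E.lyapunov j = 0) (s : Fin N → ℝ) :
    E.boxRadius X η s j = η := if_pos hj

lemma boxRadius_of_ne_zero {j : Fin N} (hj : E.lyapunov j ≠ 0) (s : Fin N → ℝ) :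
    E.boxRadius X η s j = X * Real.exp (-(s j * ‖E.lyapunov j‖)) := if_neg hj

variable (E)

lemma boxRadius_pos (hX : 0 < X) (hη : 0 < η) (s : Fin N → ℝ) (j : Fin N) :
    0 < E.boxRadius X η s j := by
  unfold boxRadius
  split_ifs <;> positivity

lemma boxRadius_le_exp_mul {l Q : ℝ} {s t : Fin N → ℝ} (hX : 0 < X) (hη : 0 < η) (hl : 0 ≤ l)
    (hst : ∀ j, t j ≤ s j + l) (hQ : ∀ j, ‖E.lyapunov j‖ ≤ Q) (j : Fin N) :
    E.boxRadius X η s j ≤ Real.exp (l * Q) * E.boxRadius X η t j := by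
  have hQ0 : 0 ≤ Q := (norm_nonneg _).trans (hQ j)
  by_cases hj : E.lyapunov j = 0
  · simpa only [boxRadius_of_eq_zero hj] using
      le_mul_of_one_le_left hη.le (Real.one_le_exp (by positivity))
  · rw [boxRadius_of_ne_zero hj, boxRadius_of_ne_zero hj, mul_left_comm, ← Real.exp_add]
    have hshift : t j * ‖E.lyapunov j‖ ≤ s j * ‖E.lyapunov j‖ + l * Q := by
      calc t j * ‖E.lyapunov j‖ ≤ (s j + l) * ‖E.lyapunov j‖ := by gcongr; exact hst j
        _ ≤ s j * ‖E.lyapunov j‖ + l * Q := by rw [add_mul]; gcongr; exact hQ j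
    gcongr
    linarith

variable {E}

lemma norm_form_mulVec_le_mul_exp {s c : ℝ} {t : Fin N → ℝ} {v : Fin d → ℤ}
    {w : Fin N → ℝ} {j : Fin N} (hX : 0 < X) (hj : E.lyapunov j ≠ 0) (hst : s ≤ t j)
    (hw : ‖E.form j w‖ < E.boxRadius X η t j)
    (hv : inner ℝ (E.lyapunov j) (latticeVec v) ≤ s * ‖E.lyapunov j‖ + c) :
    ‖E.form j (castMatrix ℝ (α v) *ᵥ w)‖ ≤ X * Real.exp c := by
  rw [boxRadius_of_ne_zero hj] at hw
  calc ‖E.form j (castMatrix ℝ (α v) *ᵥ w)‖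
      = Real.exp (inner ℝ (E.lyapunov j) (latticeVec v)) * ‖E.form j w‖ := norm_form_mulVec ..
    _ ≤ Real.exp (s * ‖E.lyapunov j‖ + c) * (X * Real.exp (-(s * ‖E.lyapunov j‖))) := by
        gcongr
        exact hw.le.trans (by gcongr)
    _ = X * Real.exp c := by
        rw [mul_left_comm, ← Real.exp_add, add_comm, neg_add_cancel_left]

lemma mul_exp_neg_le_norm_form_mulVec {t : Fin N → ℝ} {c : ℝ} {v : Fin d → ℤ} {w : Fin N → ℝ}
    {j : Fin N} (hX : 0 < X) (hj : E.lyapunov j ≠ 0) (hw : E.boxRadius X η t j ≤ ‖E.form j w‖)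
    (hv : t j * ‖E.lyapunov j‖ - c ≤ inner ℝ (E.lyapunov j) (latticeVec v)) :
    X * Real.exp (-c) ≤ ‖E.form j (castMatrix ℝ (α v) *ᵥ w)‖ := by
  rw [boxRadius_of_ne_zero hj] at hw
  calc X * Real.exp (-c)
      = Real.exp (t j * ‖E.lyapunov j‖ - c) * (X * Real.exp (-(t j * ‖E.lyapunov j‖))) := by
        rw [mul_left_comm, ← Real.exp_add, sub_add_eq_add_sub, add_neg_cancel, zero_sub]
    _ ≤ Real.exp (inner ℝ (E.lyapunov j) (latticeVec v)) * ‖E.form j w‖ := by gcongr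
    _ = ‖E.form j (castMatrix ℝ (α v) *ᵥ w)‖ := (norm_form_mulVec ..).symm

lemma norm_form_mulVec_lt_of_lyapunov_eq_zero {t : Fin N → ℝ} {v : Fin d → ℤ} {w : Fin N → ℝ}
    {j : Fin N} (hj : E.lyapunov j = 0) (hw : ‖E.form j w‖ < E.boxRadius X η t j) :
    ‖E.form j (castMatrix ℝ (α v) *ᵥ w)‖ < η := by
  rw [boxRadius_of_eq_zero hj] at hw
  rwa [norm_form_mulVec, hj, inner_zero_left, Real.exp_zero, one_mul]

lemma norm_form_mulVec_le_of_norm_latticeVec_le {δ R : ℝ} {v : Fin d → ℤ} {w : Fin N → ℝ}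
    (hX : 0 < X) (hδ : 0 < δ) (hηδ : η ≤ δ)
    (hlog : ∀ j, E.lyapunov j ≠ 0 → Real.log (X / δ) ≤ R / 2 * ‖E.lyapunov j‖)
    (hv : ‖latticeVec v‖ ≤ R / 2) (hw : ∀ j, ‖E.form j w‖ < E.boxRadius X η (fun _ ↦ R) j)
    (j : Fin N) : ‖E.form j (castMatrix ℝ (α v) *ᵥ w)‖ ≤ δ := by
  by_cases hj : E.lyapunov j = 0
  · exact (norm_form_mulVec_lt_of_lyapunov_eq_zero hj (hw j)).le.trans hηδ
  · have hinner : inner ℝ (E.lyapunov j) (latticeVec v) ≤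
        R * ‖E.lyapunov j‖ + -(R / 2 * ‖E.lyapunov j‖) := by
      calc inner ℝ (E.lyapunov j) (latticeVec v)
          ≤ ‖E.lyapunov j‖ * ‖latticeVec v‖ := real_inner_le_norm _ _
        _ ≤ ‖E.lyapunov j‖ * (R / 2) := by gcongr
        _ = R * ‖E.lyapunov j‖ + -(R / 2 * ‖E.lyapunov j‖) := by ring
    exact (norm_form_mulVec_le_mul_exp hX hj le_rfl (hw j) hinner).trans
      (mul_exp_le_of_log_le hX hδ (neg_le_neg (hlog j hj)))

variable (E)

lemma exists_mul_le_neg_integral_logMass_boxRadius {μ : Measure (UnitAddTorus (Fin N))}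
    [IsProbabilityMeasure μ] {v : Fin d → ℤ} (hinv : MeasurePreserving (toralMap (α v)) μ μ)
    (hent : 0 < ksEntropy (toralMap (α v)) μ) :
    ∃ h > 0, ∃ δ > 0, ∀ X > 0, ∀ η > 0, η ≤ δ → ∃ R₀ : ℝ, ∀ R ≥ R₀,
      h * R ≤ -∫ x, logMass μ (torusBox E.form (E.boxRadius X η fun _ ↦ R)) x ∂μ := by
  obtain ⟨h, hh, U, hU, hU0, hle⟩ := exists_mul_le_neg_integral_logMass
    (T := AddMonoidHom.ofMapSub (toralMap (α v)) (toralMap_sub _)) hinv hent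
  obtain ⟨δ, hδ, hδU⟩ := exists_mem_of_forall_norm_le E.form E.eq_zero_of_form_eq_zero hU hU0
  obtain ⟨κ, hκ, hκ_le⟩ := exists_pos_forall_le_of_pos fun j ↦ ‖E.lyapunov j‖
  set L : ℝ := ‖latticeVec v‖ + 1
  have hL : 0 < L := by positivity
  refine ⟨h / (4 * L), by positivity, δ, hδ, fun X hX η hη hηδ ↦
    ⟨max (4 * L) (2 / κ * Real.log (X / δ)), fun R hR ↦ ?_⟩⟩
  obtain ⟨hRL, hRlog⟩ := max_le_iff.1 hR
  have hlog (j : Fin N) (hj : E.lyapunov j ≠ 0) : Real.log (X / δ) ≤ R / 2 * ‖E.lyapunov j‖ := by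
    calc Real.log (X / δ) = 2 / κ * Real.log (X / δ) / 2 * κ := by field_simp
      _ ≤ R / 2 * ‖E.lyapunov j‖ := by
        gcongr
        · linarith
        · exact hκ_le j (norm_pos_iff.2 hj)
  obtain ⟨n, hn_le, hn_ge⟩ := exists_nat_mul_le_half hL hRL
  have hnorm (k : ℕ) (hk : k < n) : ‖latticeVec (k • v)‖ ≤ R / 2 := by
    calc ‖latticeVec (k • v)‖ = k * ‖latticeVec v‖ := by
          rw [map_nsmul, ← Nat.cast_smul_eq_nsmul ℝ, norm_smul, Real.norm_natCast]
      _ ≤ n * L := by gcongr; exact le_add_of_nonneg_right zero_le_one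
      _ ≤ R / 2 := hn_le
  have hbox : ∀ b ∈ torusBox E.form (E.boxRadius X η fun _ ↦ R), ∀ k < n,
      (toralMap (α v))^[k] b ∈ U := by
    rintro _ ⟨w, hw, rfl⟩ k hk
    rw [toralMap_iterate_torusProj]
    exact hδU _ <| norm_form_mulVec_le_of_norm_latticeVec_le hX hδ hηδ hlog (hnorm k hk) hw
  calc h / (4 * L) * R = h * (R / (4 * L)) := by ring
    _ ≤ h * n := by gcongr
    _ ≤ _ := hle n _ (hasMassBoundedBelow_torusBox E.form μ (E.boxRadius_pos hX hη _)) hbox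

/-- Shrinking the box in all directions is done one coarse Lyapunov class at a time, so one of the
classes accounts for its share of the growth of `F`. -/
lemma exists_le_sub_boxRadius_coarseClass [NeZero N] {F : (Fin N → ℝ) → ℝ} {R₀ h l : ℝ}
    (hF : ∀ R ≥ R₀, h * R ≤ F (E.boxRadius X η fun _ ↦ R)) (hh : 0 < h) (hl : 0 < l) (s₀ : ℝ) :
    ∃ s ≥ s₀, ∃ D r, E.lyapunov r ≠ 0 ∧ h / (2 * N) * l ≤
      F (E.boxRadius X η ((D ∪ E.coarseClass r).piecewise (fun _ ↦ s + l) fun _ ↦ s)) -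
      F (E.boxRadius X η (D.piecewise (fun _ ↦ s + l) fun _ ↦ s)) := by
  obtain ⟨s, hs, hgain⟩ := exists_mul_le_sub_of_linear_growth hF (half_lt_self hh) hl s₀
  let g (D : Finset (Fin N)) : ℝ :=
    F (E.boxRadius X η (D.piecewise (fun _ ↦ s + l) fun _ ↦ s))
  have hg_univ : g (Finset.univ.biUnion E.coarseClass) = F (E.boxRadius X η fun _ ↦ s + l) := by
    refine congrArg F (funext fun j ↦ ?_)
    by_cases hj : E.lyapunov j = 0
    · simp only [boxRadius_of_eq_zero hj]
    · have hmem : j ∈ Finset.univ.biUnion E.coarseClass :=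
        Finset.mem_biUnion.2 ⟨j, Finset.mem_univ j, self_mem_coarseClass hj⟩
      simp only [boxRadius_of_ne_zero hj, Finset.piecewise_eq_of_mem _ _ _ hmem]
  have hg_empty : g (Finset.biUnion ∅ E.coarseClass) = F (E.boxRadius X η fun _ ↦ s) := by
    rw [Finset.biUnion_empty]
    simp only [g, Finset.piecewise_empty]
  obtain ⟨S, r, hSr⟩ := exists_div_card_le_insert_sub fun S ↦ g (S.biUnion E.coarseClass)
  have hshare : h / (2 * N) * l ≤
      g (S.biUnion E.coarseClass ∪ E.coarseClass r) - g (S.biUnion E.coarseClass) := by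
    rw [Finset.union_comm, ← Finset.biUnion_insert]
    refine le_trans ?_ hSr
    rw [hg_univ, hg_empty, Fintype.card_fin, ← div_div, div_mul_eq_mul_div]
    gcongr
  refine ⟨s, hs, S.biUnion E.coarseClass, r, fun hr ↦ ?_, hshare⟩
  have hclass : E.coarseClass r = ∅ := by
    ext j
    simp [mem_coarseClass, hr]
  rw [hclass, Finset.union_empty, sub_self] at hshare
  have hpos : 0 < h / (2 * N) * l := by
    have := Nat.pos_of_neZero N
    positivity
  exact hshare.not_gt hpos

end Eigenforms

end

section

open Matrix
open scoped FourierTransform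

namespace Eigenforms

variable {d N : ℕ} {α : AddChar (Fin d → ℤ) (Matrix (Fin N) (Fin N) ℤ)} (E : Eigenforms α)
  {X η : ℝ}

lemma exists_inner_lyapunov_le_of_notMem_coarseClass :
    ∃ κ > 0, ∀ r, E.lyapunov r ≠ 0 → ∀ j ∉ E.coarseClass r, E.lyapunov j ≠ 0 →
      inner ℝ (E.lyapunov j) (‖E.lyapunov r‖⁻¹ • E.lyapunov r) ≤ ‖E.lyapunov j‖ - κ := by
  let gap (p : Fin N × Fin N) : ℝ :=
    ‖E.lyapunov p.1‖ - inner ℝ (E.lyapunov p.1) (‖E.lyapunov p.2‖⁻¹ • E.lyapunov p.2)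
  obtain ⟨κ, hκ, hκ_le⟩ := exists_pos_forall_le_of_pos gap
  refine ⟨κ, hκ, fun r hr j hj hj0 ↦ le_sub_comm.1 (hκ_le (j, r) (sub_pos.2 ?_))⟩
  rw [inner_smul_right, inv_mul_eq_div, div_lt_iff₀ (norm_pos_iff.2 hr)]
  exact inner_lyapunov_lt_of_notMem_coarseClass hr hj0 hj

/-- The lattice points are those near the ray spanned by the Lyapunov exponent of `r`: only the
class of `r` expands at full speed in this direction. -/
lemma exists_latticeVec_expanding_coarseClass :
    ∃ κ > 0, ∃ C ≥ 0, ∀ r, E.lyapunov r ≠ 0 → ∀ s ≥ 0, ∃ v,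
      (∀ j ∈ E.coarseClass r, |inner ℝ (E.lyapunov j) (latticeVec v) - s * ‖E.lyapunov j‖| ≤ C) ∧
      ∀ j ∉ E.coarseClass r, E.lyapunov j ≠ 0 →
        inner ℝ (E.lyapunov j) (latticeVec v) ≤ s * ‖E.lyapunov j‖ + (C - κ * s) := by
  obtain ⟨κ, hκ, hgap⟩ := E.exists_inner_lyapunov_le_of_notMem_coarseClass
  obtain ⟨Q, hQ, hQ_le⟩ := exists_pos_forall_ge fun j ↦ ‖E.lyapunov j‖
  refine ⟨κ, hκ, Q * √d, by positivity, fun r hr s hs ↦ ?_⟩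
  set u := ‖E.lyapunov r‖⁻¹ • E.lyapunov r with hu
  obtain ⟨v, hv⟩ := exists_norm_latticeVec_sub_le (s • u)
  have hround (j : Fin N) :
      |inner ℝ (E.lyapunov j) (latticeVec v) - s * inner ℝ (E.lyapunov j) u| ≤ Q * √d := by
    rw [← inner_smul_right, ← inner_sub_right]
    exact (abs_real_inner_le_norm _ _).trans (by gcongr; exact hQ_le j)
  refine ⟨v, fun j hj ↦ ?_, fun j hj hj0 ↦ ?_⟩
  · have hinner : inner ℝ (E.lyapunov j) u = ‖E.lyapunov j‖ := by
      rw [hu, inner_smul_right, inner_lyapunov_of_mem_coarseClass hj, inv_mul_eq_div,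
        mul_div_cancel_right₀ _ (norm_ne_zero_iff.2 hr)]
    simpa only [hinner] using hround j
  · have hslow := mul_le_mul_of_nonneg_left (hgap r hr j hj hj0) hs
    linarith [(abs_le.1 (hround j)).2]

variable {E}

lemma exists_mem_coarseClass_boxRadius_le {s l : ℝ} {D : Finset (Fin N)} {r : Fin N}
    {w : Fin N → ℝ}
    (hw : ∀ j, ‖E.form j w‖ < E.boxRadius X η (D.piecewise (fun _ ↦ s + l) fun _ ↦ s) j)
    (hw' : ¬∀ j, ‖E.form j w‖ <
      E.boxRadius X η ((D ∪ E.coarseClass r).piecewise (fun _ ↦ s + l) fun _ ↦ s) j) :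
    ∃ j ∈ E.coarseClass r, E.boxRadius X η (fun _ ↦ s + l) j ≤ ‖E.form j w‖ := by
  push Not at hw'
  obtain ⟨j, hj⟩ := hw'
  have hlt := hj.trans_lt (hw j)
  have hj0 : E.lyapunov j ≠ 0 := fun hj0 ↦ by
    simp only [boxRadius_of_eq_zero hj0, lt_irrefl] at hlt
  have hmem : j ∈ E.coarseClass r := by
    by_contra hmem
    simp only [boxRadius_of_ne_zero hj0, Finset.piecewise, Finset.mem_union, hmem, or_false,
      lt_irrefl] at hlt
  refine ⟨j, hmem, ?_⟩
  rwa [boxRadius_of_ne_zero hj0, Finset.piecewise_eq_of_mem _ _ _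
    (Finset.mem_union_right _ hmem), ← boxRadius_of_ne_zero hj0 fun _ ↦ s + l] at hj

variable (E)

/-- An element near the ray spanned by the Lyapunov exponent of `r` brings the points between the
two boxes to the scale at which the averages of `exists_average_fourierChar_le` are small. -/
lemma exists_average_torusAddChar_le [NeZero N] (hα : IsStronglyIrreducible α) (hd : 1 < d)
    {l ε δ : ℝ} (hl : 0 < l) (hε : 0 < ε) (hδ : 0 < δ) {Ξ : Finset (Fin N → ℤ)}
    (hΞ : ∀ ξ ∈ Ξ, ξ ≠ 0) :
    ∃ X > 0, ∃ η > 0, η ≤ δ ∧ ∃ s₀, ∀ s ≥ s₀, ∀ D r, E.lyapunov r ≠ 0 →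
      ∃ (ι : Type) (_ : Fintype ι) (_ : Nonempty ι) (K : ι → Fin d → ℤ),
        ∀ b ∈ torusBox E.form (E.boxRadius X η (D.piecewise (fun _ ↦ s + l) fun _ ↦ s)) \
            torusBox E.form
              (E.boxRadius X η ((D ∪ E.coarseClass r).piecewise (fun _ ↦ s + l) fun _ ↦ s)),
          ∀ ξ ∈ Ξ, ‖∑ i, (torusAddChar ξ (toralMap (α (K i)) b) : ℂ)‖ ≤ Fintype.card ι * ε := by
  obtain ⟨κ, hκ, C, hC, hflow⟩ := E.exists_latticeVec_expanding_coarseClass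
  obtain ⟨Q, -, hQ_le⟩ := exists_pos_forall_ge fun j ↦ ‖E.lyapunov j‖
  choose X₀ _ havg using fun r ↦
    E.exists_average_fourierChar_le hα hd r (2 * C + l * Q) hε hΞ
  obtain ⟨X, hX, hX_ge⟩ := exists_pos_forall_ge X₀
  choose ι _ _ K η hη hsum using fun r ↦
    havg r (X * Real.exp C) ((hX_ge r).trans (le_mul_of_one_le_right hX.le (Real.one_le_exp hC)))
  obtain ⟨η₀, hη₀, hη₀_le⟩ := exists_pos_forall_le hη
  refine ⟨X, hX, min η₀ δ, lt_min hη₀ hδ, min_le_right _ _,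
    max 0 ((Real.log (X / η₀) + C) / κ), fun s hs D r hr ↦ ?_⟩
  obtain ⟨hs0, hs_log⟩ := max_le_iff.1 hs
  rw [div_le_iff₀' hκ] at hs_log
  obtain ⟨v, hv_mem, hv_notMem⟩ := hflow r hr s hs0
  refine ⟨ι r, inferInstance, inferInstance, fun i ↦ K r i + v, ?_⟩
  rintro _ ⟨⟨w, hw, rfl⟩, hw'⟩ ξ hξ
  have hchar (i : ι r) : torusAddChar ξ (toralMap (α (K r i + v)) (torusProj w)) =
      𝐞 (phase ξ (castMatrix ℝ (α (K r i)) *ᵥ castMatrix ℝ (α v) *ᵥ w)) := by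
    rw [α.map_add_eq_mul, toralMap_torusProj, torusAddChar_torusProj, map_mul, mulVec_mulVec]
  simp only [hchar]
  have htime (j : Fin N) : s ≤ D.piecewise (fun _ ↦ s + l) (fun _ ↦ s) j :=
    D.le_piecewise_of_le_of_le (fun _ ↦ le_add_of_nonneg_right hl.le) (le_refl fun _ ↦ s) j
  refine hsum r _ (fun j hj ↦ ?_) ?_ (fun j hj ↦ ?_) ξ hξ
  · refine norm_form_mulVec_le_mul_exp hX (mem_coarseClass.1 hj).1 (htime j) (hw j) ?_
    linarith [(abs_le.1 (hv_mem j hj)).2]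
  · obtain ⟨j, hj, hjw⟩ := exists_mem_coarseClass_boxRadius_le hw fun h ↦ hw' ⟨w, h, rfl⟩
    refine ⟨j, hj, ?_⟩
    have hlower : (s + l) * ‖E.lyapunov j‖ - (C + l * Q) ≤
        inner ℝ (E.lyapunov j) (latticeVec v) := by
      have := mul_le_mul_of_nonneg_left (hQ_le j) hl.le
      linarith [(abs_le.1 (hv_mem j hj)).1]
    calc X * Real.exp C * Real.exp (-(2 * C + l * Q)) = X * Real.exp (-(C + l * Q)) := by
          rw [mul_assoc, ← Real.exp_add]
          ring_nf
      _ ≤ _ := mul_exp_neg_le_norm_form_mulVec hX (mem_coarseClass.1 hj).1 hjw hlower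
  · by_cases hj0 : E.lyapunov j = 0
    · exact (norm_form_mulVec_lt_of_lyapunov_eq_zero hj0 (hw j)).le.trans
        ((min_le_left _ _).trans (hη₀_le r))
    · exact (norm_form_mulVec_le_mul_exp hX hj0 (htime j) (hw j) (hv_notMem j hj hj0)).trans
        ((mul_exp_le_of_log_le hX hη₀ (by linarith)).trans (hη₀_le r))

end Eigenforms

end

section

open Matrix Set
open scoped Pointwise

section Averaging

variable {G ι : Type*} [AddCommGroup G] [MeasurableSpace G] [MeasurableSub₂ G]

lemma prod_sub_mem_eq_lintegral_translateMass {ν : Measure G} [SFinite ν] {B : Set G}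
    (hB : MeasurableSet B) :
    (ν.prod ν) {q | q.2 - q.1 ∈ B} = ∫⁻ x, translateMass ν B x ∂ν :=
  Measure.prod_apply (measurableSet_sub_mem hB)

lemma mul_lintegral_localMeasure_univ_le [Fintype ι] [Nonempty ι] {μ : Measure G}
    [IsProbabilityMeasure μ] {A B C : Set G} (hB : MeasurableSet B) (hC : MeasurableSet C)
    (hBC : B - B ⊆ C) {T : ι → G → G} (hT : ∀ i, MeasurePreserving (T i) μ μ) {f : G → ℝ≥0∞}
    (hf : Measurable f) {I b : ℝ≥0∞}
    (h : ∀ x, Fintype.card ι * I * localMeasure μ A B C x univ ≤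
      ∑ i, ∫⁻ y, f (T i y) ∂localMeasure μ A B C x + Fintype.card ι * b) :
    (∫⁻ x, localMeasure μ A B C x univ ∂μ) * I ≤ ∫⁻ y, f y ∂μ + b := by
  have hfT (i : ι) : Measurable fun y ↦ f (T i y) := hf.comp (hT i).measurable
  have hmass : Measurable fun x ↦ localMeasure μ A B C x univ := by
    simpa using measurable_lintegral_localMeasure (μ := μ) (A := A) (f := 1) hB hC
  have haverage (i : ι) :
      ∫⁻ x, ∫⁻ y, f (T i y) ∂localMeasure μ A B C x ∂μ ≤ ∫⁻ y, f y ∂μ :=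
    (lintegral_lintegral_localMeasure_le hB hC hBC (hfT i)).trans_eq ((hT i).lintegral_comp hf)
  have hcard : (Fintype.card ι : ℝ≥0∞) ≠ 0 := by simp
  refine (ENNReal.mul_le_mul_iff_right hcard (natCast_ne_top _)).1 ?_
  calc _ = ∫⁻ x, Fintype.card ι * I * localMeasure μ A B C x univ ∂μ := by
        rw [lintegral_const_mul _ hmass]
        ring
    _ ≤ ∫⁻ x, (∑ i, ∫⁻ y, f (T i y) ∂localMeasure μ A B C x + Fintype.card ι * b) ∂μ :=
        lintegral_mono h
    _ = ∑ i, ∫⁻ x, ∫⁻ y, f (T i y) ∂localMeasure μ A B C x ∂μ + Fintype.card ι * b := by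
        rw [lintegral_add_right _ measurable_const, lintegral_finsetSum _ fun i _ ↦
          measurable_lintegral_localMeasure hB hC]
        simp
    _ ≤ ∑ _ : ι, ∫⁻ y, f y ∂μ + Fintype.card ι * b :=
        add_le_add_left (Finset.sum_le_sum fun i _ ↦ haverage i) _
    _ = _ := by
        rw [Finset.sum_const, Finset.card_univ, nsmul_eq_mul, mul_add]

end Averaging

section Boxes

variable {N : ℕ} {ι : Type*} [Fintype ι] {f : C(UnitAddTorus (Fin N), ℝ)} {δ ε γ : ℝ}
  {Ξ : Finset (Fin N → ℤ)} {a : (Fin N → ℤ) → ℂ} {K : ι → Matrix (Fin N) (Fin N) ℤ}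

lemma card_mul_ofReal_integral_mul_le {ν : Measure (UnitAddTorus (Fin N))}
    (hν : ν univ ≤ 1) (hf : 0 ≤ f) (hδ : 0 ≤ δ)
    (happrox : ∀ x, ‖(f x : ℂ) - (∫ y, f y : ℝ) - ∑ ξ ∈ Ξ, a ξ * torusAddChar ξ x‖ ≤ δ)
    {B : Set (UnitAddTorus (Fin N))} (hB : MeasurableSet B) (hε : 0 ≤ ε)
    (hsum : ∀ ξ ∈ Ξ, ∀ᵐ q ∂ν.prod ν, q.2 - q.1 ∉ B →
      ‖∑ i, (torusAddChar ξ (toralMap (K i) (q.2 - q.1)) : ℂ)‖ ≤ Fintype.card ι * ε)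
    (hγ0 : 0 ≤ γ) (hγ : ∫⁻ y, translateMass ν B y ∂ν ≤ ENNReal.ofReal γ) :
    Fintype.card ι * ENNReal.ofReal (∫ y, f y) * ν univ ≤
      ∑ i, ∫⁻ y, ENNReal.ofReal (f (toralMap (K i) y)) ∂ν +
        Fintype.card ι * ENNReal.ofReal (δ + (∑ ξ ∈ Ξ, ‖a ξ‖) * √(ε + γ)) := by
  have : IsFiniteMeasure ν := ⟨hν.trans_lt one_lt_top⟩
  have hν' : ν.real univ ≤ 1 := toReal_le_of_le_ofReal zero_le_one (by simpa using hν)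
  have hpairs : (ν.prod ν).real {q | q.2 - q.1 ∈ B} ≤ γ :=
    toReal_le_of_le_ofReal hγ0 ((prod_sub_mem_eq_lintegral_translateMass hB).trans_le hγ)
  have hcont (ξ : Fin N → ℤ) (i : ι) :
      Continuous fun x ↦ (torusAddChar ξ (toralMap (K i) x) : ℂ) :=
    continuous_subtype_val.comp ((continuous_torusAddChar ξ).comp (continuous_toralMap _))
  have hfcont (i : ι) : Continuous fun x ↦ f (toralMap (K i) x) :=
    f.continuous.comp (continuous_toralMap _)
  have hfint (i : ι) : Integrable (fun x ↦ f (toralMap (K i) x)) ν :=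
    (hfcont i).integrable_of_hasCompactSupport (.of_compactSpace _)
  have hreal := card_mul_mul_measureReal_le_sum_integral_add (a := a) (Ξ := Ξ) hν' hfint
    (fun ξ i ↦ (hcont ξ i).integrable_of_hasCompactSupport (.of_compactSpace _)) hδ
    (fun i x ↦ happrox (toralMap (K i) x)) fun ξ hξ ↦
      norm_sum_integral_addChar_le (χ := fun i ↦ (torusAddChar ξ).compAddMonoidHom
        (AddMonoidHom.ofMapSub (toralMap (K i)) (toralMap_sub (K i)))) hν'
        (fun i ↦ (hcont ξ i).measurable) hB hε (hsum ξ hξ) hpairs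
  have hnonneg (i : ι) : 0 ≤ ∫ x, f (toralMap (K i) x) ∂ν := integral_nonneg fun _ ↦ hf _
  have hmean : 0 ≤ ∫ y, f y := integral_nonneg fun _ ↦ hf _
  calc _ = ENNReal.ofReal (Fintype.card ι * (∫ y, f y) * ν.real univ) := by
        rw [ENNReal.ofReal_mul (by positivity), ENNReal.ofReal_mul (Nat.cast_nonneg _),
          ofReal_natCast, ofReal_measureReal]
    _ ≤ _ := ENNReal.ofReal_le_ofReal hreal
    _ = _ := by
        rw [ENNReal.ofReal_add (Finset.sum_nonneg fun i _ ↦ hnonneg i) (by positivity),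
          ENNReal.ofReal_mul (by positivity), ofReal_natCast,
          ENNReal.ofReal_sum_of_nonneg fun i _ ↦ hnonneg i]
        simp only [ofReal_integral_eq_lintegral_ofReal (hfint _) (.of_forall fun _ ↦ hf _)]

variable {κ : Type*} [Fintype κ] {L : κ → (Fin N → ℝ) →ₗ[ℝ] ℂ} {r r' : κ → ℝ}
  {μ : Measure (UnitAddTorus (Fin N))} [IsProbabilityMeasure μ] {c g : ℝ}

lemma ofReal_sq_div_exp_le_lintegral_localMeasure_univ (hr : ∀ j, 0 < r j)
    {A : Set (UnitAddTorus (Fin N))} (hc : 0 ≤ c) (hA : c ≤ μ.real A) :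
    ENNReal.ofReal (c ^ 2 / Real.exp (2 * Fintype.card κ * (Real.log 4 + 3))) ≤
      ∫⁻ x, localMeasure μ A (torusBox L fun j ↦ r j / 2) (torusBox L fun j ↦ 3 * r j / 2) x univ
        ∂μ := by
  obtain ⟨M, hcov, hM⟩ := exists_coveredByTranslates_torusBox L (r := fun j ↦ r j / 2)
    (q := fun j ↦ 2 * r j) (fun j ↦ half_pos (hr j)) (Real.log_nonneg (by norm_num : (1 : ℝ) ≤ 4))
    fun j ↦ by rw [Real.exp_log (by norm_num)]; linarith
  have hsq := measure_sq_le_lintegral_localMeasure_univ_mul (A := A)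
    (hasMassBoundedBelow_torusBox L μ fun j ↦ half_pos (hr j))
    (measurableSet_torusBox L fun j ↦ 3 * r j / 2)
    (hasMassBoundedBelow_torusBox L μ fun j ↦ mul_pos two_pos (hr j)) (neg_torusBox L _)
    (torusBox_add_subset L fun j ↦ by linarith) hcov
  rw [ENNReal.ofReal_div_of_pos (Real.exp_pos _)]
  refine ENNReal.div_le_of_le_mul ?_
  calc ENNReal.ofReal (c ^ 2) ≤ μ A ^ 2 := by
        rw [ENNReal.ofReal_pow hc]
        gcongr
        exact (ofReal_le_iff_le_toReal (measure_ne_top _ _)).2 hA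
    _ ≤ _ := hsq
    _ ≤ _ := by
        gcongr
        rw [← ofReal_natCast]
        exact ENNReal.ofReal_le_ofReal hM

lemma ofReal_mul_ofReal_integral_le_lintegral_add [Nonempty ι] (hr : ∀ j, 0 < r j) (hc : 0 ≤ c)
    (hdrop : c ≤ μ.real (massDropSet μ (torusBox L r) (torusBox L r') g))
    (hK : ∀ i, MeasurePreserving (toralMap (K i)) μ μ) (hf : 0 ≤ f) (hδ : 0 ≤ δ)
    (happrox : ∀ x, ‖(f x : ℂ) - (∫ y, f y : ℝ) - ∑ ξ ∈ Ξ, a ξ * torusAddChar ξ x‖ ≤ δ)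
    (hε : 0 ≤ ε)
    (hsum : ∀ b ∈ torusBox L r \ torusBox L r', ∀ ξ ∈ Ξ,
      ‖∑ i, (torusAddChar ξ (toralMap (K i) b) : ℂ)‖ ≤ Fintype.card ι * ε) :
    ENNReal.ofReal (c ^ 2 / Real.exp (2 * Fintype.card κ * (Real.log 4 + 3))) *
        ENNReal.ofReal (∫ y, f y) ≤
      ∫⁻ y, ENNReal.ofReal (f y) ∂μ +
        ENNReal.ofReal (δ + (∑ ξ ∈ Ξ, ‖a ξ‖) * √(ε + Real.exp (-g))) := by
  set A := massDropSet μ (torusBox L r) (torusBox L r') g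
  set B := torusBox L fun j ↦ r j / 2
  set C := torusBox L fun j ↦ 3 * r j / 2
  have hA : MeasurableSet A :=
    measurableSet_massDropSet (measurableSet_torusBox L _) (measurableSet_torusBox L _) g
  have hB : MeasurableSet B := measurableSet_torusBox L _
  have hBC : B ⊆ C := torusBox_mono L fun j ↦ by linarith [hr j]
  have hsub : B - B ⊆ torusBox L r := torusBox_sub_subset L fun j ↦ (add_halves _).le
  refine (mul_le_mul_left (ofReal_sq_div_exp_le_lintegral_localMeasure_univ hr hc hdrop) _).trans
    (mul_lintegral_localMeasure_univ_le hB (measurableSet_torusBox L _)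
      (torusBox_sub_subset L fun j ↦ by linarith [hr j]) hK
      (ENNReal.measurable_ofReal.comp f.continuous.measurable) fun x ↦ ?_)
  refine card_mul_ofReal_integral_mul_le (localMeasure_univ_le_one hBC x) hf hδ happrox
    (measurableSet_torusBox L r') hε (fun ξ hξ ↦ ?_) (Real.exp_pos _).le
    (lintegral_translateMass_localMeasure_le hA hB hBC
      (torusBox_add_subset L fun j ↦ by linarith) (fun y hy ↦ hy) x)
  have hmem : ∀ᵐ y ∂localMeasure μ A B C x, y - x ∈ B :=
    (ae_localMeasure_mem hA hB x).mono fun y hy ↦ hy.2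
  have : IsFiniteMeasure (localMeasure μ A B C x) :=
    ⟨(localMeasure_univ_le_one hBC x).trans_lt one_lt_top⟩
  filter_upwards [Measure.quasiMeasurePreserving_fst.ae hmem,
    Measure.quasiMeasurePreserving_snd.ae hmem] with q hq₁ hq₂ hq'
  refine hsum _ ⟨hsub ?_, hq'⟩ ξ hξ
  rw [← _root_.sub_sub_sub_cancel_right q.2 q.1 x]
  exact sub_mem_sub hq₂ hq₁

end Boxes

end

section

open Filter Matrix

lemma exists_one_le_and_le_mul_and_exp_neg_le {c ε : ℝ} (C : ℝ) (hc : 0 < c) (hε : 0 < ε) :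
    ∃ l, 1 ≤ l ∧ C ≤ c * l ∧ Real.exp (-(c * l / 2)) ≤ ε := by
  have hlin : Tendsto (fun l ↦ c * l) atTop atTop := tendsto_id.const_mul_atTop hc
  have hexp : Tendsto (fun l ↦ Real.exp (-(c * l / 2))) atTop (nhds 0) :=
    Real.tendsto_exp_neg_atTop_nhds_zero.comp (hlin.atTop_div_const two_pos)
  exact ((eventually_ge_atTop 1).and ((hlin.eventually_ge_atTop C).and
    (hexp.eventually_le_const hε))).exists

lemma div_le_of_sub_one_le_mul {n c Q l x : ℝ} (hn : 0 < n) (hQ : 0 ≤ Q) (hx : 0 ≤ x)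
    (hl : 1 ≤ l) (hcl : 4 ≤ c * l) (h : c * l / 2 - 1 ≤ x * (n * (l * Q + 3))) :
    c / 4 / (n * (Q + 3)) ≤ x := by
  rw [div_le_iff₀ (by positivity)]
  refine le_of_mul_le_mul_right ?_ (zero_lt_one.trans_le hl)
  calc c / 4 * l ≤ c * l / 2 - 1 := by linarith
    _ ≤ x * (n * (l * Q + 3)) := h
    _ ≤ x * (n * (l * Q + l * 3)) := by
        gcongr
        linarith
    _ = x * (n * (Q + 3)) * l := by ring

lemma exists_pos_mul_sqrt_le {S δ : ℝ} (hS : 0 ≤ S) (hδ : 0 < δ) :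
    ∃ ε > 0, S * √(ε + ε) ≤ δ := by
  refine ⟨(δ / (S + 1)) ^ 2 / 2, by positivity, ?_⟩
  rw [add_halves, Real.sqrt_sq (by positivity), mul_div_assoc', div_le_iff₀ (by positivity)]
  linarith [mul_comm S δ]

namespace Eigenforms

variable {d N : ℕ} [NeZero N] {α : AddChar (Fin d → ℤ) (Matrix (Fin N) (Fin N) ℤ)}
  (E : Eigenforms α) {μ : Measure (UnitAddTorus (Fin N))} [IsProbabilityMeasure μ]

/-- The lower bound `c` does not depend on the time step `l`: both the gain in information and the
logarithm of the covering number of one box by the other grow linearly in `l`. -/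
lemma exists_le_measureReal_massDropSet_boxRadius {v : Fin d → ℤ}
    (hinv : MeasurePreserving (toralMap (α v)) μ μ) (hent : 0 < ksEntropy (toralMap (α v)) μ) :
    ∃ c > 0, ∃ h > 0, ∃ δ > 0, ∀ X > 0, ∀ η > 0, η ≤ δ → ∀ l ≥ 1, 4 ≤ h * l →
      ∀ s₀, ∃ s ≥ s₀, ∃ D r, E.lyapunov r ≠ 0 ∧ c ≤ μ.real (massDropSet μ
        (torusBox E.form (E.boxRadius X η (D.piecewise (fun _ ↦ s + l) fun _ ↦ s)))
        (torusBox E.form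
          (E.boxRadius X η ((D ∪ E.coarseClass r).piecewise (fun _ ↦ s + l) fun _ ↦ s)))
        (h * l / 2)) := by
  obtain ⟨h, hh, δ, hδ, hgrowth⟩ := E.exists_mul_le_neg_integral_logMass_boxRadius hinv hent
  obtain ⟨Q, hQ, hQ_le⟩ := exists_pos_forall_ge fun j ↦ ‖E.lyapunov j‖
  have hN : (0 : ℝ) < 2 * N := by simpa using NeZero.pos N
  refine ⟨h / (2 * N) / 4 / (2 * N * (Q + 3)), by positivity, h / (2 * N),
    by positivity, δ, hδ, fun X hX η hη hηδ l hl hhl s₀ ↦ ?_⟩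
  have hl0 : 0 < l := zero_lt_one.trans_le hl
  obtain ⟨R₀, hR₀⟩ := hgrowth X hX η hη hηδ
  obtain ⟨s, hs, D, r, hr, hgain⟩ := E.exists_le_sub_boxRadius_coarseClass
    (F := fun ρ ↦ -∫ x, logMass μ (torusBox E.form ρ) x ∂μ) hR₀ hh hl0 s₀
  rw [neg_sub_neg] at hgain
  have htime (j : Fin N) :
      (D ∪ E.coarseClass r).piecewise (fun _ ↦ s + l) (fun _ ↦ s) j ≤
        D.piecewise (fun _ ↦ s + l) (fun _ ↦ s) j + l := by
    simp only [Finset.piecewise]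
    split_ifs <;> linarith
  obtain ⟨n, hcov, hn⟩ := exists_coveredByTranslates_torusBox E.form (E.boxRadius_pos hX hη _)
    (mul_nonneg hl0.le hQ.le) (E.boxRadius_le_exp_mul hX hη hl0.le htime hQ_le)
  have hdrop := le_measureReal_massDropSet
    (hasMassBoundedBelow_torusBox E.form μ (E.boxRadius_pos hX hη _))
    (hasMassBoundedBelow_torusBox E.form μ (E.boxRadius_pos hX hη _)) hcov (by positivity) hn hgain
  rw [Fintype.card_fin] at hdrop
  exact ⟨s, hs, D, r, hr, div_le_of_sub_one_le_mul hN hQ.le measureReal_nonneg hl hhl hdrop⟩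

lemma exists_le_measureReal_massDropSet_and_average_le (hα : IsStronglyIrreducible α)
    (hd : 1 < d) {v : Fin d → ℤ} (hinv : MeasurePreserving (toralMap (α v)) μ μ)
    (hent : 0 < ksEntropy (toralMap (α v)) μ) :
    ∃ c > 0, ∀ ε > 0, ∀ Ξ : Finset (Fin N → ℤ), (∀ ξ ∈ Ξ, ξ ≠ 0) →
      ∃ (r r' : Fin N → ℝ) (g : ℝ) (ι : Type) (_ : Fintype ι) (_ : Nonempty ι)
        (K : ι → Fin d → ℤ), (∀ j, 0 < r j) ∧ Real.exp (-g) ≤ ε ∧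
        c ≤ μ.real (massDropSet μ (torusBox E.form r) (torusBox E.form r') g) ∧
        ∀ b ∈ torusBox E.form r \ torusBox E.form r', ∀ ξ ∈ Ξ,
          ‖∑ i, (torusAddChar ξ (toralMap (α (K i)) b) : ℂ)‖ ≤ Fintype.card ι * ε := by
  obtain ⟨c, hc, h, hh, δ, hδ, hdrop⟩ := E.exists_le_measureReal_massDropSet_boxRadius hinv hent
  refine ⟨c, hc, fun ε hε Ξ hΞ ↦ ?_⟩
  obtain ⟨l, hl, hhl, hexp⟩ := exists_one_le_and_le_mul_and_exp_neg_le 4 hh hε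
  obtain ⟨X, hX, η, hη, hηδ, s₀, haverage⟩ :=
    E.exists_average_torusAddChar_le hα hd (zero_lt_one.trans_le hl) hε hδ hΞ
  obtain ⟨s, hs, D, r, hr, hc_le⟩ := hdrop X hX η hη hηδ l hl hhl s₀
  obtain ⟨ι, _, _, K, hK⟩ := haverage s hs D r hr
  exact ⟨_, _, _, ι, _, ‹_›, K, E.boxRadius_pos hX hη _, hexp, hc_le, hK⟩

end Eigenforms

lemma exists_mul_integral_le_lintegral {d N : ℕ} [NeZero N]
    {α : AddChar (Fin d → ℤ) (Matrix (Fin N) (Fin N) ℤ)} {μ : Measure (UnitAddTorus (Fin N))}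
    [IsProbabilityMeasure μ] (hα : IsStronglyIrreducible α) (hfaithful : ∀ v ≠ 0, α v ≠ 1)
    (hd : 1 < d)
    (hinv : ∀ v, MeasurePreserving (toralMap (α v)) μ μ)
    (hent : ∃ v, 0 < ksEntropy (toralMap (α v)) μ) :
    ∃ c : ℝ≥0∞, c ≠ 0 ∧ ∀ f : C(UnitAddTorus (Fin N), ℝ), 0 ≤ f →
      c * ENNReal.ofReal (∫ y, f y) ≤ ∫⁻ y, ENNReal.ofReal (f y) ∂μ := by
  obtain ⟨E⟩ := exists_eigenforms hα.isIrreducibleOn_top hfaithful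
  obtain ⟨v, hv⟩ := hent
  obtain ⟨c, hc, hdrop⟩ :=
    E.exists_le_measureReal_massDropSet_and_average_le hα hd (hinv v) hv
  refine ⟨ENNReal.ofReal (c ^ 2 / Real.exp (2 * Fintype.card (Fin N) * (Real.log 4 + 3))),
    (ENNReal.ofReal_pos.2 (by positivity)).ne', fun f hf ↦ ?_⟩
  refine ENNReal.le_of_forall_pos_le_add fun δ hδ _ ↦ ?_
  obtain ⟨Ξ, a, hΞ, happrox⟩ := exists_trig_approx f (half_pos (NNReal.coe_pos.2 hδ))
  have hS : 0 ≤ ∑ ξ ∈ Ξ, ‖a ξ‖ := by positivity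
  obtain ⟨ε, hε, hSε⟩ := exists_pos_mul_sqrt_le hS (half_pos (NNReal.coe_pos.2 hδ))
  obtain ⟨r, r', g, ι, _, _, K, hr, hg, hc_le, hsum⟩ := hdrop ε hε Ξ hΞ
  refine (ofReal_mul_ofReal_integral_le_lintegral_add hr hc.le hc_le (fun i ↦ hinv (K i)) hf
    (by positivity) happrox hε.le hsum).trans ?_
  gcongr
  rw [← ofReal_coe_nnreal]
  refine ENNReal.ofReal_le_ofReal ?_
  calc _ ≤ (δ : ℝ) / 2 + (∑ ξ ∈ Ξ, ‖a ξ‖) * √(ε + ε) := by gcongr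
    _ ≤ δ / 2 + δ / 2 := by gcongr
    _ = δ := add_halves _

end

lemma neZero_of_faithful {d N : ℕ} (hd : 0 < d) {α : (Fin d → ℤ) → Matrix (Fin N) (Fin N) ℤ}
    (hfaithful : ∀ v, v ≠ 0 → α v ≠ 1) : NeZero N := by
  refine ⟨fun hN ↦ ?_⟩
  subst hN
  exact hfaithful (fun _ ↦ 1) (fun h ↦ one_ne_zero (congrFun h ⟨0, hd⟩))
    (Subsingleton.elim _ _)

end KatokSpatzier

open KatokSpatzier in
theorem katok_spatzier_weak_mixing_positive_entropy_general
    (d N : ℕ) (hd : 1 < d)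
    (α : (Fin d → ℤ) → Matrix (Fin N) (Fin N) ℤ)
    (hα0 : α 0 = 1)
    (hαadd : ∀ v w, α (v + w) = α v * α w)
    (hfaithful : ∀ v : Fin d → ℤ, v ≠ 0 → α v ≠ 1)
    (hstrirr : ∀ Λ : AddSubgroup (Fin d → ℤ), Λ.FiniteIndex → IsIrreducibleOn α Λ)
    (μ : Measure (Fin N → UnitAddCircle)) [IsProbabilityMeasure μ]
    (hinv : ∀ v, Measure.map (toralMap (α v)) μ = μ)
    (herg : ∀ A : Set (Fin N → UnitAddCircle), MeasurableSet A →
      (∀ v, toralMap (α v) ⁻¹' A = A) → μ A = 0 ∨ μ A = 1)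
    (hent : ∃ v, 0 < ksEntropy (toralMap (α v)) μ) :
    μ = volume := by
  have := neZero_of_faithful (by omega) hfaithful
  let β : AddChar (Fin d → ℤ) (Matrix (Fin N) (Fin N) ℤ) := ⟨α, hα0, hαadd⟩
  have hμ (v : Fin d → ℤ) : MeasurePreserving (toralMap (β v)) μ μ :=
    ⟨(continuous_toralMap _).measurable, hinv v⟩
  obtain ⟨c, hc, hlower⟩ := exists_mul_integral_le_lintegral (α := β) hstrirr hfaithful hd hμ hent
  exact eq_of_absolutelyContinuous_of_invariant hμ (measurePreserving_toralMap_volume β)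
    (toralMap_toralMap_addChar β) herg (absolutelyContinuous_of_forall_continuousMap hc hlower)

/-- Katok–Spatzier: Let `d > 1` and let `α` be a faithful, strongly
irreducible `ℤ^d`-action by automorphisms of `𝕋^N`.  Let `μ` be an `α`-invariant and
`α`-ergodic Borel probability measure on `𝕋^N` such that (i) `h_μ(α_𝐧) > 0` for some
`𝐧 ∈ ℤ^d`, and (ii) the action `α` is weakly mixing on `(𝕋^N, μ)`, i.e. the diagonal
`ℤ^d`-action on `(𝕋^N × 𝕋^N, μ × μ)` is ergodic.  Then `μ` is Lebesgue measure. -/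
theorem katok_spatzier_weak_mixing_positive_entropy
    (d N : ℕ) (hd : 1 < d)
    (α : (Fin d → ℤ) → Matrix (Fin N) (Fin N) ℤ)
    (hα0 : α 0 = 1)
    (hαadd : ∀ v w, α (v + w) = α v * α w)
    (hfaithful : ∀ v : Fin d → ℤ, v ≠ 0 → α v ≠ 1)
    (hstrirr : ∀ Λ : AddSubgroup (Fin d → ℤ), Λ.FiniteIndex → IsIrreducibleOn α Λ)
    (μ : Measure (Fin N → UnitAddCircle)) [IsProbabilityMeasure μ]
    (hinv : ∀ v, Measure.map (toralMap (α v)) μ = μ)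
    (herg : ∀ A : Set (Fin N → UnitAddCircle), MeasurableSet A →
      (∀ v, toralMap (α v) ⁻¹' A = A) → μ A = 0 ∨ μ A = 1)
    (hent : ∃ v, 0 < ksEntropy (toralMap (α v)) μ)
    (hwm : ∀ A : Set ((Fin N → UnitAddCircle) × (Fin N → UnitAddCircle)),
      MeasurableSet A →
      (∀ v, (fun p : (Fin N → UnitAddCircle) × (Fin N → UnitAddCircle) =>
          (toralMap (α v) p.1, toralMap (α v) p.2)) ⁻¹' A = A) →
      (μ.prod μ) A = 0 ∨ (μ.prod μ) A = 1) :
    μ = volume := by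
  exact katok_spatzier_weak_mixing_positive_entropy_general d N hd α hα0 hαadd hfaithful hstrirr
    μ hinv herg hent
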